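/- Let p ∈ (1,∞) and let m be a Radon measure on ℝ^n with full support that is doubling (there is C_D > 0 with m(B_{2r}(x)) ≤ C_D·m(B_r(x)) for all x ∈ ℝ^n, r > 0) and satisfies a (1,p)-Poincaré inequality: there exist C > 0 and λ ≥ 1 such that for every Lipschitz function f : ℝ^n → ℝ, every x ∈ ℝ^n and r > 0, ⨍_{B_r(x)} |f − ⨍_{B_r(x)} f dm| dm ≤ C·r·( ⨍_{B_{λr}(x)} (lip f)^p dm )^{1/p}. Then m is absolutely continuous with respect to the Lebesgue measure on ℝ^n. -/

import Mathlib

open MeasureTheory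
open scoped ENNReal NNReal

/-- The local Lipschitz constant (slope) `lip f (x) = limsup_{y → x} |f y - f x| / d(y,x)`,
equal to `0` at isolated points. -/
noncomputable def lip {M : Type*} [PseudoMetricSpace M] (f : M → ℝ) (x : M) : ℝ :=
  Filter.limsup (fun y => |f y - f x| / dist y x) (nhdsWithin x {x}ᶜ)

open Filter Topology

lemma pi_rep_signed {X : Type*} [MeasurableSpace X] (M : Measure X) [IsFiniteMeasure M]
    (p : ℝ≥0∞) [hp1 : Fact (1 ≤ p)] (hp : p ≠ ∞) (l : Lp ℝ p M →L[ℝ] ℝ) :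
    ∃ v : X → ℝ, Integrable v M ∧ ∀ (S : Set X) (hS : MeasurableSet S),
      ∫ x in S, v x ∂M = l (indicatorConstLp p hS (measure_ne_top M S) 1) := by
  classical
  have hp0 : p ≠ 0 := (one_pos.trans_le hp1.out).ne'
  let s : SignedMeasure X :=
    { measureOf' := fun S => if hS : MeasurableSet S then
        l (indicatorConstLp p hS (measure_ne_top M S) 1) else 0
      empty' := by
        simp
      not_measurable' := fun S hS => by simp [hS]
      m_iUnion' := by
        intro f hf hd
        have hU : MeasurableSet (⋃ i, f i) := MeasurableSet.iUnion hf
        simp only [hf, hU, dif_pos]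
        have key : HasSum (fun i => indicatorConstLp p (hf i) (measure_ne_top M (f i)) (1:ℝ))
            (indicatorConstLp p hU (measure_ne_top M _) (1:ℝ)) := by
          have hfin : ∀ t : Finset ℕ, ∑ i ∈ t, indicatorConstLp p (hf i) (measure_ne_top M (f i)) (1:ℝ)
              = indicatorConstLp p (Finset.measurableSet_biUnion t (fun i _ => hf i))
                (measure_ne_top M (⋃ i ∈ t, f i)) (1:ℝ) := by
            intro t
            induction t using Finset.induction_on with
            | empty => simp
            | insert a t ha ih =>
              rw [Finset.sum_insert ha, ih, ← indicatorConstLp_disjoint_union]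
              · congr 1
                simp
              · rw [Set.disjoint_iUnion₂_right]
                intro i hi
                exact hd (by rintro rfl; exact ha hi)
          unfold HasSum
          simp_rw [hfin]
          apply tendsto_indicatorConstLp_set hp
          have hd' : Tendsto (fun t : Finset ℕ => M ((⋃ i, f i) \ ⋃ i ∈ t, f i)) atTop (𝓝 0) := by
            have := tendsto_measure_iInter_atTop (μ := M) (s := fun t : Finset ℕ => (⋃ i, f i) \ ⋃ i ∈ t, f i)
              (fun t => (hU.diff (Finset.measurableSet_biUnion t (fun i _ => hf i))).nullMeasurableSet)
              (fun a b hab => Set.sdiff_subset_sdiff_right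
                (Set.biUnion_subset_biUnion_left (by exact_mod_cast hab))) ⟨∅, measure_ne_top M _⟩
            have h0 : (⋂ t : Finset ℕ, (⋃ i, f i) \ ⋃ i ∈ t, f i) = ∅ := by
              ext x
              simp only [Set.mem_iInter, Set.mem_sdiff, Set.mem_iUnion, Set.mem_empty_iff_false, iff_false]
              intro h
              obtain ⟨i, hi⟩ := (h ∅).1
              exact (h {i}).2 ⟨i, by simp, hi⟩
            rw [h0, measure_empty] at this
            exact this
          refine hd'.congr (fun t => ?_)
          congr 1
          have hsub : (⋃ i ∈ t, f i) \ (⋃ i, f i) = ∅ := Set.sdiff_eq_empty.2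
            (Set.iUnion₂_subset (fun i _ => Set.subset_iUnion f i))
          rw [Set.symmDiff_def, hsub]
          simp
        simpa using key.mapL l }
  have hs : s ≪ᵥ M.toENNRealVectorMeasure := by
    refine VectorMeasure.AbsolutelyContinuous.mk (fun S hS h0 => ?_)
    rw [Measure.toENNRealVectorMeasure_apply_measurable hS] at h0
    change (if hS : MeasurableSet S then l (indicatorConstLp p hS (measure_ne_top M S) 1) else 0) = 0
    rw [dif_pos hS]
    have : indicatorConstLp p hS (measure_ne_top M S) (1:ℝ) = 0 := by
      rw [← norm_eq_zero, norm_indicatorConstLp hp0 hp]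
      simp [Measure.real, h0, hp0, hp, ENNReal.toReal_eq_zero_iff]
    rw [this, map_zero]
  refine ⟨s.rnDeriv M, SignedMeasure.integrable_rnDeriv s M, fun S hS => ?_⟩
  have h2 := (SignedMeasure.absolutelyContinuous_iff_withDensityᵥ_rnDeriv_eq s M).1 hs
  rw [← withDensityᵥ_apply (SignedMeasure.integrable_rnDeriv s M) hS, h2]
  change (if hS : MeasurableSet S then l (indicatorConstLp p hS (measure_ne_top M S) 1) else 0) = _
  rw [dif_pos hS]

lemma pi_rep_bdd {X : Type*} [MeasurableSpace X] (M : Measure X) [IsFiniteMeasure M]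
    (p : ℝ≥0∞) [hp1 : Fact (1 ≤ p)] (hp : p ≠ ∞) (l : Lp ℝ p M →L[ℝ] ℝ) :
    ∃ v : X → ℝ, Integrable v M ∧ (∀ (S : Set X) (hS : MeasurableSet S),
      ∫ x in S, v x ∂M = l (indicatorConstLp p hS (measure_ne_top M S) 1)) ∧
      ∀ (f : X → ℝ) (hf : MemLp f p M) (c : ℝ), (∀ᵐ x ∂M, |f x| ≤ c) →
        l (hf.toLp f) = ∫ x, f x * v x ∂M := by
  have hp0 : p ≠ 0 := (one_pos.trans_le hp1.out).ne'
  obtain ⟨v, hv, hvS⟩ := pi_rep_signed M p hp l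
  refine ⟨v, hv, hvS, ?_⟩
  -- simple functions
  have hsimple : ∀ (g : SimpleFunc X ℝ) (hg : MemLp g p M), l (hg.toLp g) = ∫ x, g x * v x ∂M := by
    intro g
    induction g using SimpleFunc.induction with
    | @const c S hS =>
      intro hg
      have h1 : hg.toLp _ = c • indicatorConstLp p hS (measure_ne_top M S) (1:ℝ) := by
        rw [indicatorConstLp, ← MemLp.toLp_const_smul]
        apply MemLp.toLp_congr
        apply Filter.Eventually.of_forall
        intro x
        by_cases hx : x ∈ S <;> simp [hx]
      rw [h1, map_smul, ← hvS S hS, ← integral_indicator hS, smul_eq_mul, ← integral_const_mul]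
      congr 1
      ext x
      by_cases hx : x ∈ S <;> simp [hx]
    | @add f g hd hf hg =>
      intro hfg
      have hf' : MemLp f p M := f.memLp_of_isFiniteMeasure p M
      have hg' : MemLp g p M := g.memLp_of_isFiniteMeasure p M
      have : hfg.toLp _ = hf'.toLp f + hg'.toLp g := by
        rw [← MemLp.toLp_add]; rfl
      rw [this, map_add, hf hf', hg hg', ← integral_add]
      · congr 1; ext x; simp [add_mul]
      · obtain ⟨C, hC⟩ := f.exists_forall_norm_le
        exact hv.bdd_mul f.aestronglyMeasurable (Filter.Eventually.of_forall hC)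
      · obtain ⟨C, hC⟩ := g.exists_forall_norm_le
        exact hv.bdd_mul g.aestronglyMeasurable (Filter.Eventually.of_forall hC)
  intro f hf c hc
  wlog hsm : StronglyMeasurable f generalizing f
  · have hae := hf.aestronglyMeasurable.ae_eq_mk
    have hf2 : MemLp (hf.aestronglyMeasurable.mk f) p M := (memLp_congr_ae hae).1 hf
    have := this _ hf2 (by filter_upwards [hae, hc] with x h1 h2; rwa [← h1])
      hf.aestronglyMeasurable.stronglyMeasurable_mk
    rw [MemLp.toLp_congr hf hf2 hae, this]
    apply integral_congr_ae
    filter_upwards [hae] with x h1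
    rw [h1]
  wlog hc0 : 0 ≤ c generalizing c
  · exact this (max c 0) (by filter_upwards [hc] with x hx using hx.trans (le_max_left _ _)) (le_max_right _ _)
  let fs := hsm.approxBounded c
  have hfs : ∀ᵐ x ∂M, Tendsto (fun n => fs n x) atTop (𝓝 (f x)) :=
    hsm.tendsto_approxBounded_ae (by simpa using hc)
  have hb : ∀ n x, ‖fs n x‖ ≤ c := hsm.norm_approxBounded_le hc0
  have hm : ∀ n, MemLp (fs n) p M := fun n => (fs n).memLp_of_isFiniteMeasure p M
  have t1 : Tendsto (fun n => ∫ x, fs n x * v x ∂M) atTop (𝓝 (∫ x, f x * v x ∂M)) := by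
    apply tendsto_integral_of_dominated_convergence (fun x => c * ‖v x‖)
    · intro n; exact (fs n).aestronglyMeasurable.mul hv.1
    · exact hv.norm.const_mul c
    · intro n; filter_upwards with x
      rw [norm_mul]
      exact mul_le_mul_of_nonneg_right (hb n x) (norm_nonneg _)
    · filter_upwards [hfs] with x hx using hx.mul_const _
  have t2 : Tendsto (fun n => (hm n).toLp (fs n)) atTop (𝓝 (hf.toLp f)) := by
    rw [Lp.tendsto_Lp_iff_tendsto_eLpNorm'']
    refine tendsto_Lp_finite_of_tendsto_ae hp1.out hp (fun n => (fs n).aestronglyMeasurable) hf ?_ hfs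
    have hcm : MemLp (fun _ : X => c) p M := memLp_const c
    intro ε hε
    obtain ⟨δ, hδ, h⟩ := unifIntegrable_const (ι := ℕ) hp1.out hp hcm hε
    refine ⟨δ, hδ, fun n S hS hMS => le_trans ?_ (h n S hS hMS)⟩
    apply eLpNorm_mono
    intro x
    by_cases hx : x ∈ S
    · simp only [hx, Set.indicator_of_mem]
      rw [Real.norm_of_nonneg hc0]; exact hb n x
    · simp [hx]
  have t3 := (l.continuous.tendsto _).comp t2
  refine tendsto_nhds_unique t3 (t1.congr (fun n => ?_))
  exact (hsimple (fs n) (hm n)).symm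

lemma pi_rep_one {X : Type*} [MeasurableSpace X] (M : Measure X) [IsFiniteMeasure M]
    (l : Lp ℝ 1 M →L[ℝ] ℝ) :
    ∃ (v : X → ℝ) (K : ℝ), Measurable v ∧ (∀ x, |v x| ≤ K) ∧
      ∀ f : Lp ℝ 1 M, l f = ∫ x, f x * v x ∂M := by
  obtain ⟨v, hv, hvS, hvb⟩ := pi_rep_bdd M 1 (by simp) l
  set K := ‖l‖ with hK
  have hK0 : 0 ≤ K := norm_nonneg _
  have hbd : ∀ (S : Set X), MeasurableSet S → |∫ x in S, v x ∂M| ≤ K * M.real S := by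
    intro S hS
    rw [hvS S hS]
    refine (l.le_opNorm _).trans ?_
    rw [norm_indicatorConstLp (by simp) (by simp)]
    simp [hK]
  have h1 : ∀ᵐ x ∂M, v x ≤ K := by
    refine ae_le_of_forall_setIntegral_le hv (integrable_const K) (fun S hS _ => ?_)
    rw [setIntegral_const, smul_eq_mul, mul_comm]
    exact (le_abs_self _).trans (hbd S hS)
  have h2 : ∀ᵐ x ∂M, -K ≤ v x := by
    refine ae_le_of_forall_setIntegral_le (integrable_const (-K)) hv (fun S hS _ => ?_)
    rw [setIntegral_const, smul_eq_mul]
    have := neg_le_of_abs_le (hbd S hS)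
    linarith
  let w : X → ℝ := fun x => max (-K) (min K (hv.1.mk v x))
  have hwm : Measurable w := measurable_const.max (measurable_const.min hv.1.stronglyMeasurable_mk.measurable)
  have hwb : ∀ x, |w x| ≤ K := by
    intro x
    rw [abs_le]
    exact ⟨le_max_left _ _, max_le (by linarith) (min_le_left _ _)⟩
  have hwv : v =ᵐ[M] w := by
    filter_upwards [h1, h2, hv.1.ae_eq_mk] with x a b c
    simp only [w]
    rw [← c, min_eq_right a, max_eq_right b]
  refine ⟨w, K, hwm, hwb, ?_⟩
  have hItg : ∀ f : Lp ℝ 1 M, Integrable (fun x => f x * w x) M := fun f =>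
    (L1.integrable_coeFn f).mul_bdd hwm.aestronglyMeasurable (Filter.Eventually.of_forall hwb)
  let l' : Lp ℝ 1 M →L[ℝ] ℝ := LinearMap.mkContinuous
    { toFun := fun f => ∫ x, f x * w x ∂M
      map_add' := fun f g => by
        rw [← integral_add (hItg f) (hItg g)]
        apply integral_congr_ae
        filter_upwards [Lp.coeFn_add f g] with x hx
        rw [hx, Pi.add_apply, add_mul]
      map_smul' := fun c f => by
        simp only [RingHom.id_apply, smul_eq_mul]
        rw [← integral_const_mul]
        apply integral_congr_ae
        filter_upwards [Lp.coeFn_smul c f] with x hx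
        rw [hx, Pi.smul_apply, smul_eq_mul, mul_assoc] } K (fun f => by
      simp only [LinearMap.coe_mk, AddHom.coe_mk]
      refine (norm_integral_le_integral_norm _).trans ?_
      rw [L1.norm_eq_integral_norm, ← integral_const_mul]
      apply integral_mono (hItg f).norm ((L1.integrable_coeFn f).norm.const_mul K)
      intro x
      simp only [norm_mul]
      rw [mul_comm]
      exact mul_le_mul_of_nonneg_right (hwb x) (norm_nonneg _))
  have hl : ∀ f : Lp ℝ 1 M, l f = l' f := by
    intro f
    refine Lp.induction (p := (1:ℝ≥0∞)) (by simp) (motive := fun f => l f = l' f) ?_ ?_ ?_ f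
    · intro c S hS hMS
      rw [Lp.simpleFunc.coe_indicatorConst]
      have := hvb (S.indicator fun _ => c) (memLp_indicator_const 1 hS c (Or.inr hMS.ne)) |c|
        (Filter.Eventually.of_forall (fun x => by by_cases hx : x ∈ S <;> simp [hx]))
      refine this.trans ?_
      change _ = ∫ x, _ * w x ∂M
      apply integral_congr_ae
      filter_upwards [hwv, indicatorConstLp_coeFn (p := 1) (hs := hS) (hμs := hMS.ne) (c := c)] with x h1 h2
      rw [h2, h1]
    · intro f g hf hg _ h1 h2
      rw [map_add, map_add, h1, h2]
    · exact isClosed_eq l.continuous l'.continuous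
  intro f
  exact hl f

lemma pi_hb {X : Type*} [NormedAddCommGroup X] [NormedSpace ℝ X] (D : Submodule ℝ X) (x : X)
    (hx : x ∉ closure (D : Set X)) : ∃ f : X →L[ℝ] ℝ, (∀ d ∈ D, f d = 0) ∧ f x ≠ 0 := by
  obtain ⟨f, u, h1, h2⟩ := geometric_hahn_banach_point_closed (D.convex.closure) isClosed_closure hx
  have h0 : u < 0 := by simpa using h2 0 (subset_closure D.zero_mem)
  refine ⟨f, fun d hd => ?_, (h1.trans h0).ne⟩
  by_contra hne
  have := h2 (((u / f d)) • d) (subset_closure (D.smul_mem _ hd))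
  rw [map_smul, smul_eq_mul, div_mul_cancel₀ _ hne] at this
  exact lt_irrefl _ this

/-- abstract duality -/
lemma pi_dual {X Y T : Type*} [MeasurableSpace X] [MeasurableSpace Y] (μ : Measure X) (M : Measure Y)
    [IsFiniteMeasure μ] [IsFiniteMeasure M] [AddCommGroup T] [Module ℝ T]
    (p : ℝ≥0∞) [hp1 : Fact (1 ≤ p)] (hp : p ≠ ∞)
    (A : T →ₗ[ℝ] Lp ℝ 1 μ) (B : T →ₗ[ℝ] Lp ℝ p M) (hB : ∀ φ, ∃ c : ℝ, ∀ᵐ y ∂M, |B φ y| ≤ c)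
    (hclos : ∀ (η : Y → ℝ) (hη : MemLp η p M) (K : ℝ), Measurable η → (∀ y, |η y| ≤ K) →
      (∀ ε > 0, ∃ φ, ‖A φ‖ < ε ∧ ‖B φ - hη.toLp η‖ < ε) → ∀ᵐ y ∂M, η y = 0)
    (e : Lp ℝ 1 M) (ε : ℝ) (hε : 0 < ε) :
    ∃ (b : Lp ℝ 1 M) (a : X → ℝ) (K : ℝ), ‖b - e‖ < ε ∧ Measurable a ∧ (∀ x, |a x| ≤ K) ∧
      ∀ φ, ∫ y, B φ y * b y ∂M = ∫ x, A φ x * a x ∂μ := by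
  have hItg : ∀ (φ : T) (b : Lp ℝ 1 M), Integrable (fun y => B φ y * b y) M := by
    intro φ b
    obtain ⟨c, hc⟩ := hB φ
    exact (L1.integrable_coeFn b).bdd_mul (Lp.aestronglyMeasurable _) hc
  let D : Submodule ℝ (Lp ℝ 1 M) :=
    { carrier := {b | ∃ l : Lp ℝ 1 μ →L[ℝ] ℝ, ∀ φ, ∫ y, B φ y * b y ∂M = l (A φ)}
      add_mem' := by
        rintro b c ⟨l, hl⟩ ⟨k, hk⟩
        refine ⟨l + k, fun φ => ?_⟩
        rw [ContinuousLinearMap.add_apply, ← hl, ← hk, ← integral_add (hItg _ _) (hItg _ _)]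
        apply integral_congr_ae
        filter_upwards [Lp.coeFn_add b c] with x hx
        rw [hx, Pi.add_apply, mul_add]
      zero_mem' := ⟨0, fun φ => by
        rw [ContinuousLinearMap.zero_apply]
        refine (integral_congr_ae (g := fun _ => 0) ?_).trans (by simp)
        filter_upwards [Lp.coeFn_zero ℝ 1 M] with x hx
        rw [hx]; simp⟩
      smul_mem' := by
        rintro c b ⟨l, hl⟩
        refine ⟨c • l, fun φ => ?_⟩
        rw [ContinuousLinearMap.smul_apply, ← hl, smul_eq_mul, ← integral_const_mul]
        apply integral_congr_ae
        filter_upwards [Lp.coeFn_smul c b] with x hx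
        rw [hx, Pi.smul_apply, smul_eq_mul]; ring }
  have hmem : e ∈ closure (D : Set (Lp ℝ 1 M)) := by
    by_contra hne
    obtain ⟨f, hfD, hfe⟩ := pi_hb D e hne
    obtain ⟨η, K, hηm, hηK, hη⟩ := pi_rep_one M f
    have hηL : MemLp η p M := MemLp.of_bound hηm.aestronglyMeasurable K (Filter.Eventually.of_forall hηK)
    have hz := hclos η hηL K hηm hηK ?_
    · apply hfe
      rw [hη e]
      refine (integral_congr_ae (g := fun _ => 0) ?_).trans (by simp)
      filter_upwards [hz] with x hx
      rw [hx]; simp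
    by_contra hcon
    push Not at hcon
    obtain ⟨δ, hδ, hδ'⟩ := hcon
    let G : Submodule ℝ (Lp ℝ 1 μ × Lp ℝ p M) := LinearMap.range (A.prod B)
    have hG : ((0, hηL.toLp η) : Lp ℝ 1 μ × Lp ℝ p M) ∉ closure (G : Set (Lp ℝ 1 μ × Lp ℝ p M)) := by
      intro hmem
      obtain ⟨z, ⟨φ, rfl⟩, hd⟩ := Metric.mem_closure_iff.1 hmem δ hδ
      rw [dist_comm, dist_eq_norm] at hd
      have h1 : ‖A φ‖ < δ := by
        refine lt_of_le_of_lt ?_ hd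
        have := norm_fst_le ((A.prod B) φ - ((0, hηL.toLp η) : Lp ℝ 1 μ × Lp ℝ p M))
        simpa using this
      have h2 : ‖B φ - hηL.toLp η‖ < δ := by
        refine lt_of_le_of_lt ?_ hd
        have := norm_snd_le ((A.prod B) φ - ((0, hηL.toLp η) : Lp ℝ 1 μ × Lp ℝ p M))
        simpa using this
      exact absurd h2 (not_lt.2 (hδ' φ h1))
    obtain ⟨F, hFG, hFx⟩ := pi_hb G _ hG
    let l1 : Lp ℝ 1 μ →L[ℝ] ℝ := F.comp (ContinuousLinearMap.inl ℝ _ _)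
    let l2 : Lp ℝ p M →L[ℝ] ℝ := F.comp (ContinuousLinearMap.inr ℝ _ _)
    have hsum : ∀ φ, l1 (A φ) + l2 (B φ) = 0 := by
      intro φ
      have := hFG (A φ, B φ) ⟨φ, rfl⟩
      rw [← this]
      simp only [l1, l2, ContinuousLinearMap.comp_apply, ContinuousLinearMap.inl_apply,
        ContinuousLinearMap.inr_apply]
      rw [← map_add]; simp
    obtain ⟨v, hv, -, hvb⟩ := pi_rep_bdd M p hp l2
    have hvm : MemLp v 1 M := memLp_one_iff_integrable.2 hv
    have hvD : hvm.toLp v ∈ D := by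
      refine ⟨-l1, fun φ => ?_⟩
      obtain ⟨c, hc⟩ := hB φ
      have h3 := hvb (B φ) (Lp.memLp _) c hc
      rw [Lp.toLp_coeFn] at h3
      rw [ContinuousLinearMap.neg_apply]
      have : ∫ y, B φ y * hvm.toLp v y ∂M = l2 (B φ) := by
        rw [h3]
        apply integral_congr_ae
        filter_upwards [hvm.coeFn_toLp] with x hx
        rw [hx]
      rw [this]; linarith [hsum φ]
    have h4 := hfD _ hvD
    rw [hη] at h4
    apply hFx
    change l2 (hηL.toLp η) = 0
    rw [hvb η hηL K (Filter.Eventually.of_forall hηK), ← h4]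
    apply integral_congr_ae
    filter_upwards [hvm.coeFn_toLp] with x hx
    rw [hx]; ring
  obtain ⟨b, ⟨l, hl⟩, hb⟩ := Metric.mem_closure_iff.1 hmem ε hε
  obtain ⟨a, K, ham, haK, ha⟩ := pi_rep_one μ l
  refine ⟨b, a, K, ?_, ham, haK, fun φ => ?_⟩
  · rwa [dist_comm, dist_eq_norm] at hb
  · rw [hl, ha]

lemma pi_real_doubling {E : Type*} [MetricSpace E] [MeasurableSpace E]
    (m : Measure E) (hfin : ∀ (x : E) (r : ℝ), m (Metric.ball x r) < ∞)
    (CD : ℝ) (hCD : 0 < CD)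
    (hdoubling : ∀ (x : E) (r : ℝ), 0 < r →
      m (Metric.ball x (2 * r)) ≤ ENNReal.ofReal CD * m (Metric.ball x r)) (x : E) (r : ℝ) (hr : 0 < r) :
    m.real (Metric.ball x (2 * r)) ≤ CD * m.real (Metric.ball x r) := by
  have h := hdoubling x r hr
  have := ENNReal.toReal_mono (ENNReal.mul_ne_top ENNReal.ofReal_ne_top (hfin x r).ne) h
  rwa [ENNReal.toReal_mul, ENNReal.toReal_ofReal hCD.le] at this

lemma pi_lower {E : Type*} [NormedAddCommGroup E] [InnerProductSpace ℝ E] [MeasurableSpace E] [BorelSpace E]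
    (m : Measure E) (hfin : ∀ (x : E) (r : ℝ), m (Metric.ball x r) < ∞)
    (CD : ℝ) (hCD : 0 < CD)
    (hd : ∀ (x : E) (r : ℝ), 0 < r →
      m.real (Metric.ball x (2 * r)) ≤ CD * m.real (Metric.ball x r))
    (c : E) (x0 : E) (r : ℝ) (hr : 0 < r) (k : ℝ) :
    (r * ‖c‖ / 4) * m.real (Metric.ball x0 r) ≤
      CD ^ 3 * ∫ y in Metric.ball x0 r, |inner ℝ c y - k| ∂m := by
  have hItg : IntegrableOn (fun y => |inner ℝ c y - k|) (Metric.ball x0 r) m := by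
    refine Measure.integrableOn_of_bounded (M := ‖c‖ * (‖x0‖ + r) + |k|) (hfin x0 r).ne ?_ ?_
    · have : Continuous fun y : E => |inner ℝ c y - k| := by fun_prop
      exact this.aestronglyMeasurable
    · filter_upwards [ae_restrict_mem Metric.isOpen_ball.measurableSet] with y hy
      rw [Real.norm_eq_abs, abs_abs]
      refine (abs_sub _ _).trans ?_
      gcongr
      refine (abs_real_inner_le_norm c y).trans ?_
      gcongr
      have h2 : ‖y - x0‖ < r := by simpa [dist_eq_norm] using hy
      have : ‖y‖ ≤ ‖x0‖ + ‖y - x0‖ := by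
        simpa using norm_add_le x0 (y - x0)
      linarith
  have key : ∃ x1 : E, ‖x1 - x0‖ ≤ r / 2 ∧ ∀ y ∈ Metric.ball x1 (r / 4), r * ‖c‖ / 4 ≤ |inner ℝ c y - k| := by
    rcases eq_or_ne c 0 with rfl | hc
    · exact ⟨x0, by simp; positivity, fun y _ => by simp⟩
    have hc' : 0 < ‖c‖ := norm_pos_iff.2 hc
    have aux : ∀ s : ℝ, |s| = 1 → ∀ y ∈ Metric.ball (x0 + (s * (r / 2) / ‖c‖) • c) (r / 4),
        r * ‖c‖ / 4 ≤ s * (inner ℝ c y - inner ℝ c x0) := by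
      intro s hs y hy
      have hss : s * s = 1 := by rw [← abs_mul_abs_self, hs]; norm_num
      have h1 : inner ℝ c y - inner ℝ c x0 = s * (r / 2) * ‖c‖
          + inner ℝ c (y - (x0 + (s * (r / 2) / ‖c‖) • c)) := by
        rw [inner_sub_right, inner_add_right, inner_smul_right, real_inner_self_eq_norm_sq]
        field_simp
        ring
      have h2 : |inner ℝ c (y - (x0 + (s * (r / 2) / ‖c‖) • c))| ≤ ‖c‖ * (r / 4) := by
        refine (abs_real_inner_le_norm _ _).trans ?_
        gcongr
        rw [Metric.mem_ball, dist_eq_norm] at hy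
        exact hy.le
      have h3 : |s * inner ℝ c (y - (x0 + (s * (r / 2) / ‖c‖) • c))| ≤ ‖c‖ * (r / 4) := by
        rw [abs_mul, hs, one_mul]; exact h2
      rw [h1, mul_add]
      have h4 := neg_le_of_abs_le h3
      have h5 : s * (s * (r / 2) * ‖c‖) = r / 2 * ‖c‖ := by
        rw [← mul_assoc, ← mul_assoc, hss]; ring
      rw [h5]
      linarith
    have nrm : ∀ s : ℝ, |s| = 1 → ‖(x0 + (s * (r / 2) / ‖c‖) • c) - x0‖ ≤ r / 2 := by
      intro s hs
      rw [add_sub_cancel_left, norm_smul, norm_div, norm_mul, Real.norm_eq_abs s, hs, norm_norm,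
        Real.norm_of_nonneg (by positivity)]
      field_simp
      exact le_rfl
    rcases le_total k (inner ℝ c x0) with hk | hk
    · refine ⟨_, nrm 1 (by simp), fun y hy => ?_⟩
      have := aux 1 (by simp) y hy
      refine le_trans ?_ (le_abs_self _)
      linarith
    · refine ⟨_, nrm (-1) (by simp), fun y hy => ?_⟩
      have := aux (-1) (by simp) y hy
      refine le_trans ?_ (neg_le_abs _)
      linarith
  obtain ⟨x1, hx1, hlow⟩ := key
  have hsub : Metric.ball x1 (r / 4) ⊆ Metric.ball x0 r := by
    apply Metric.ball_subset_ball'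
    rw [dist_eq_norm]; linarith
  have hsub2 : Metric.ball x0 r ⊆ Metric.ball x1 (2 * (2 * (2 * (r / 4)))) := by
    apply Metric.ball_subset_ball'
    rw [dist_comm, dist_eq_norm]; linarith
  have h1 : m.real (Metric.ball x0 r) ≤ CD ^ 3 * m.real (Metric.ball x1 (r / 4)) := by
    calc m.real (Metric.ball x0 r) ≤ m.real (Metric.ball x1 (2 * (2 * (2 * (r / 4))))) :=
          measureReal_mono hsub2 (hfin _ _).ne
      _ ≤ CD * m.real (Metric.ball x1 (2 * (2 * (r / 4)))) := hd _ _ (by positivity)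
      _ ≤ CD * (CD * m.real (Metric.ball x1 (2 * (r / 4)))) := by
          gcongr; exact hd _ _ (by positivity)
      _ ≤ CD * (CD * (CD * m.real (Metric.ball x1 (r / 4)))) := by
          gcongr; exact hd _ _ (by positivity)
      _ = _ := by ring
  have h2 : (r * ‖c‖ / 4) * m.real (Metric.ball x1 (r / 4)) ≤
      ∫ y in Metric.ball x0 r, |inner ℝ c y - k| ∂m := by
    calc (r * ‖c‖ / 4) * m.real (Metric.ball x1 (r / 4))
        = ∫ y in Metric.ball x1 (r / 4), (r * ‖c‖ / 4) ∂m := by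
          rw [setIntegral_const, smul_eq_mul, mul_comm]
      _ ≤ ∫ y in Metric.ball x1 (r / 4), |inner ℝ c y - k| ∂m := by
          apply setIntegral_mono_on _ (hItg.mono_set hsub) Metric.isOpen_ball.measurableSet hlow
          exact integrableOn_const (hfin _ _).ne
      _ ≤ _ := by
          apply setIntegral_mono_set hItg
          · exact Filter.Eventually.of_forall (fun y => abs_nonneg _)
          · exact hsub.eventuallyLE
  calc (r * ‖c‖ / 4) * m.real (Metric.ball x0 r)
      ≤ (r * ‖c‖ / 4) * (CD ^ 3 * m.real (Metric.ball x1 (r / 4))) := by gcongr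
    _ = CD ^ 3 * ((r * ‖c‖ / 4) * m.real (Metric.ball x1 (r / 4))) := by ring
    _ ≤ _ := by gcongr

lemma pi_lip_le {E : Type*} [NormedAddCommGroup E] [NormedSpace ℝ E] [Nontrivial E]
    (f : E → ℝ) (K : ℝ≥0) (hK : LipschitzWith K f) (x : E) (f' : E →L[ℝ] ℝ) (hf : HasFDerivAt f f' x) :
    0 ≤ lip f x ∧ lip f x ≤ ‖f'‖ := by
  have : (𝓝[≠] x).NeBot := inferInstance
  have hb : ∀ y, |f y - f x| / dist y x ≤ K := by
    intro y
    apply div_le_of_le_mul₀ dist_nonneg K.2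
    have := hK.dist_le_mul y x
    rwa [Real.dist_eq] at this
  have hbdd : IsBoundedUnder (· ≤ ·) (𝓝[≠] x) (fun y => |f y - f x| / dist y x) :=
    isBoundedUnder_of ⟨K, hb⟩
  have hcob : IsCoboundedUnder (· ≤ ·) (𝓝[≠] x) (fun y => |f y - f x| / dist y x) :=
    (isBoundedUnder_of ⟨0, fun y => by positivity⟩ :
      IsBoundedUnder (· ≥ ·) (𝓝[≠] x) (fun y => |f y - f x| / dist y x)).isCoboundedUnder_le
  constructor
  · apply le_limsup_of_frequently_le _ hbdd
    exact (Filter.Eventually.of_forall (fun y => by positivity)).frequently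
  · apply le_of_forall_pos_le_add
    intro ε hε
    apply limsup_le_of_le hcob
    have h1 := hf.isLittleO.def hε
    have h2 : ∀ᶠ y in 𝓝[≠] x, ‖f y - f x - f' (y - x)‖ ≤ ε * ‖y - x‖ := h1.filter_mono nhdsWithin_le_nhds
    filter_upwards [h2] with y hy
    apply div_le_of_le_mul₀ dist_nonneg (by positivity)
    rw [dist_eq_norm]
    have h3 := f'.le_opNorm (y - x)
    have h4 : |f y - f x| ≤ ‖f y - f x - f' (y - x)‖ + ‖f' (y - x)‖ := by
      have := norm_add_le (f y - f x - f' (y - x)) (f' (y - x))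
      simpa using this
    nlinarith

lemma pi_step {E : Type*} [NormedAddCommGroup E] [InnerProductSpace ℝ E] [FiniteDimensional ℝ E] [Nontrivial E]
    [MeasurableSpace E] [BorelSpace E] (p : ℝ) (hp : 1 < p)
    (m : Measure E) (hfin : ∀ (x : E) (r : ℝ), m (Metric.ball x r) < ∞) [m.IsOpenPosMeasure]
    (CD : ℝ) (hCD : 0 < CD)
    (hd : ∀ (x : E) (r : ℝ), 0 < r →
      m.real (Metric.ball x (2 * r)) ≤ CD * m.real (Metric.ball x r))
    (C Λ : ℝ) (hC : 0 < C) (hΛ : 1 ≤ Λ)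
    (hpoincare : ∀ f : E → ℝ, (∃ K : ℝ≥0, LipschitzWith K f) →
      ∀ (x : E) (r : ℝ), 0 < r →
        ⨍ y in Metric.ball x r, |f y - ⨍ z in Metric.ball x r, f z ∂m| ∂m ≤
          C * r * (⨍ y in Metric.ball x (Λ * r), lip f y ^ p ∂m) ^ (1 / p))
    (c : E) (x0 : E) (r : ℝ) (hr : 0 < r) (φ : E → ℝ) (hφ : ContDiff ℝ 1 φ) (K : ℝ≥0) (hK : LipschitzWith K φ) :
    r * ‖c‖ / 4 ≤ CD ^ 3 * (C * r * ((m.real (Metric.ball x0 (Λ * r)))⁻¹ *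
      ∫ y in Metric.ball x0 (Λ * r), ‖innerSL ℝ c - fderiv ℝ φ y‖ ^ p ∂m) ^ (1 / p) +
      (m.real (Metric.ball x0 r))⁻¹ * ∫ y in Metric.ball x0 r, |φ y| ∂m) := by
  have hpos : ∀ r : ℝ, 0 < r → 0 < m.real (Metric.ball x0 r) := fun r hr =>
    ENNReal.toReal_pos (Metric.measure_ball_pos m x0 hr).ne' (hfin x0 r).ne
  have hΛr : 0 < Λ * r := by positivity
  set f : E → ℝ := fun y => inner ℝ c y - φ y with hf
  have hL : LipschitzWith (‖innerSL ℝ c‖₊ + K) f := (innerSL ℝ c).lipschitz.sub hK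
  have hfd : ∀ y, HasFDerivAt f (innerSL ℝ c - fderiv ℝ φ y) y := fun y =>
    (innerSL ℝ c).hasFDerivAt.sub ((hφ.differentiable (by norm_num)) y).hasFDerivAt
  have hP := hpoincare f ⟨_, hL⟩ x0 r hr
  set k := ⨍ z in Metric.ball x0 r, f z ∂m
  have hcd : Continuous (fun y => ‖innerSL ℝ c - fderiv ℝ φ y‖ ^ p) := by
    have : Continuous (fderiv ℝ φ) := hφ.continuous_fderiv (by norm_num)
    exact (by fun_prop : Continuous fun y => ‖innerSL ℝ c - fderiv ℝ φ y‖).rpow_const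
      (fun _ => Or.inr (by linarith))
  have hcInt : ∀ (g : E → ℝ) (r : ℝ), Continuous g → IntegrableOn g (Metric.ball x0 r) m := by
    intro g r hg
    obtain ⟨B, hB⟩ := (isCompact_closedBall x0 r).exists_bound_of_continuousOn hg.continuousOn
    refine Measure.integrableOn_of_bounded (M := B) (hfin x0 r).ne hg.aestronglyMeasurable ?_
    filter_upwards [ae_restrict_mem Metric.isOpen_ball.measurableSet] with y hy
    exact hB y (Metric.ball_subset_closedBall hy)
  have h1 : ⨍ y in Metric.ball x0 (Λ * r), lip f y ^ p ∂m ≤ (m.real (Metric.ball x0 (Λ * r)))⁻¹ *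
      ∫ y in Metric.ball x0 (Λ * r), ‖innerSL ℝ c - fderiv ℝ φ y‖ ^ p ∂m := by
    rw [setAverage_eq, smul_eq_mul]
    refine mul_le_mul_of_nonneg_left ?_ (by positivity)
    refine integral_mono_of_nonneg (Eventually.of_forall fun y => ?_) (hcInt _ _ hcd)
      (Eventually.of_forall fun y => ?_)
    · exact Real.rpow_nonneg (pi_lip_le f _ hL y _ (hfd y)).1 _
    · exact Real.rpow_le_rpow (pi_lip_le f _ hL y _ (hfd y)).1 (pi_lip_le f _ hL y _ (hfd y)).2 (by linarith)
  have h0 : 0 ≤ ⨍ y in Metric.ball x0 (Λ * r), lip f y ^ p ∂m := by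
    rw [setAverage_eq, smul_eq_mul]
    exact mul_nonneg (by positivity) (integral_nonneg fun y =>
      Real.rpow_nonneg (pi_lip_le f _ hL y _ (hfd y)).1 _)
  have h2 := Real.rpow_le_rpow h0 h1 (by positivity : 0 ≤ 1 / p)
  have h3 := pi_lower m hfin CD hCD hd c x0 r hr k
  have hmb := hpos r hr
  have h4 : ∫ y in Metric.ball x0 r, |inner ℝ c y - k| ∂m ≤
      ∫ y in Metric.ball x0 r, |f y - k| ∂m + ∫ y in Metric.ball x0 r, |φ y| ∂m := by
    have hφc := hφ.continuous
    rw [← integral_add]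
    · refine integral_mono (hcInt _ _ (by fun_prop)) (hcInt _ _ (by simp only [hf]; fun_prop)) (fun y => ?_)
      have : inner ℝ c y - k = (f y - k) + φ y := by simp only [hf]; ring
      simp only [this]
      exact abs_add_le _ _
    · exact hcInt _ _ (by simp only [hf]; fun_prop)
    · exact hcInt _ _ (by fun_prop)
  have h5 : (m.real (Metric.ball x0 r))⁻¹ * ∫ y in Metric.ball x0 r, |f y - k| ∂m ≤ C * r *
      ((m.real (Metric.ball x0 (Λ * r)))⁻¹ *
      ∫ y in Metric.ball x0 (Λ * r), ‖innerSL ℝ c - fderiv ℝ φ y‖ ^ p ∂m) ^ (1 / p) := by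
    rw [setAverage_eq, smul_eq_mul] at hP
    refine hP.trans ?_
    gcongr
  calc r * ‖c‖ / 4 = (m.real (Metric.ball x0 r))⁻¹ * ((r * ‖c‖ / 4) * m.real (Metric.ball x0 r)) := by
        field_simp
    _ ≤ (m.real (Metric.ball x0 r))⁻¹ * (CD ^ 3 * (∫ y in Metric.ball x0 r, |f y - k| ∂m +
          ∫ y in Metric.ball x0 r, |φ y| ∂m)) := by
        exact mul_le_mul_of_nonneg_left (h3.trans (mul_le_mul_of_nonneg_left h4 (by positivity))) (by positivity)
    _ = CD ^ 3 * ((m.real (Metric.ball x0 r))⁻¹ * (∫ y in Metric.ball x0 r, |f y - k| ∂m) +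
          (m.real (Metric.ball x0 r))⁻¹ * ∫ y in Metric.ball x0 r, |φ y| ∂m) := by ring
    _ ≤ _ := by gcongr

lemma pi_norm_le_sum {n : ℕ} (T : EuclideanSpace ℝ (Fin n) →L[ℝ] ℝ) :
    ‖T‖ ≤ ∑ i, |T (EuclideanSpace.single i 1)| := by
  refine T.opNorm_le_bound (Finset.sum_nonneg fun i _ => abs_nonneg _) (fun x => ?_)
  have h : x = ∑ i, x i • EuclideanSpace.single i (1 : ℝ) := by
    ext j; simp [Finset.sum_apply, Pi.single_apply]
  conv_lhs => rw [h]
  rw [map_sum, Finset.sum_mul]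
  refine (norm_sum_le _ _).trans (Finset.sum_le_sum fun i _ => ?_)
  rw [map_smul, norm_smul, mul_comm, ← Real.norm_eq_abs]
  gcongr
  exact PiLp.norm_apply_le x i

/-- pointwise bound used in the closability argument -/
lemma pi_pw {n : ℕ} (p : ℝ) (hp : 1 < p) (K : ℝ) (c b η : Fin n → ℝ) (hη : ∀ i, |c i - η i| ≤ K) :
    (∑ i, |c i - b i|) ^ p ≤ (2 : ℝ) ^ (p - 1) * (n : ℝ) ^ (p - 1) *
      (K ^ (p - 1) * ∑ i, |c i - η i| + ∑ i, |b i - η i| ^ p) := by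
  have h1 := Real.rpow_sum_le_const_mul_sum_rpow Finset.univ (fun i => c i - b i) hp.le
  simp only [Finset.card_univ, Fintype.card_fin] at h1
  refine h1.trans ?_
  have h2 : ∀ i, |c i - b i| ^ p ≤ (2 : ℝ) ^ (p - 1) * (K ^ (p - 1) * |c i - η i| + |b i - η i| ^ p) := by
    intro i
    have h3 := Real.rpow_sum_le_const_mul_sum_rpow Finset.univ (![c i - η i, b i - η i]) hp.le
    simp at h3
    have h4 : |c i - b i| ≤ |c i - η i| + |b i - η i| := by
      have := abs_sub (c i - η i) (b i - η i)
      simpa using this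
    refine (Real.rpow_le_rpow (abs_nonneg _) h4 (by linarith)).trans (h3.trans ?_)
    gcongr
    have h5 : |c i - η i| ^ p = |c i - η i| ^ (p - 1) * |c i - η i| := by
      rcases eq_or_lt_of_le (abs_nonneg (c i - η i)) with h | h
      · rw [← h]; simp; rw [Real.zero_rpow (by linarith)]
      · rw [← Real.rpow_add_one h.ne']; congr 1; ring
    rw [h5]
    exact mul_le_mul_of_nonneg_right (Real.rpow_le_rpow (abs_nonneg _) (hη i) (by linarith)) (abs_nonneg _)
  calc _ ≤ (n : ℝ) ^ (p - 1) * ∑ i, (2 : ℝ) ^ (p - 1) * (K ^ (p - 1) * |c i - η i| + |b i - η i| ^ p) := by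
        gcongr with i; exact h2 i
    _ = _ := by
        rw [← Finset.mul_sum, Finset.sum_add_distrib, ← Finset.mul_sum]; ring

lemma pi_clos {n : ℕ} [Nonempty (Fin n)] (p : ℝ) (hp : 1 < p)
    (m : Measure (EuclideanSpace ℝ (Fin n)))
    [IsFiniteMeasureOnCompacts m] [m.IsOpenPosMeasure]
    (hfin : ∀ (x : EuclideanSpace ℝ (Fin n)) (r : ℝ), m (Metric.ball x r) < ∞)
    (CD : ℝ) (hCD : 0 < CD)
    (hd : ∀ (x : EuclideanSpace ℝ (Fin n)) (r : ℝ), 0 < r →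
      m.real (Metric.ball x (2 * r)) ≤ CD * m.real (Metric.ball x r))
    (C Λ : ℝ) (hC : 0 < C) (hΛ : 1 ≤ Λ)
    (hpoincare : ∀ f : EuclideanSpace ℝ (Fin n) → ℝ, (∃ K : ℝ≥0, LipschitzWith K f) →
      ∀ (x : EuclideanSpace ℝ (Fin n)) (r : ℝ), 0 < r →
        ⨍ y in Metric.ball x r, |f y - ⨍ z in Metric.ball x r, f z ∂m| ∂m ≤
          C * r * (⨍ y in Metric.ball x (Λ * r), lip f y ^ p ∂m) ^ (1 / p))
    (R : ℝ) (η : EuclideanSpace ℝ (Fin n) → Fin n → ℝ) (K : ℝ) (hηm : ∀ i, Measurable (fun x => η x i))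
    (hK : ∀ x i, |η x i| ≤ K)
    (happ : ∀ ε > 0, ∃ φ : EuclideanSpace ℝ (Fin n) → ℝ, ContDiff ℝ 1 φ ∧ (∃ L : ℝ≥0, LipschitzWith L φ) ∧
      ∫ y in Metric.ball 0 R, |φ y| ∂m ≤ ε ∧
      ∫ y in Metric.ball 0 R, ∑ i, |fderiv ℝ φ y (EuclideanSpace.single i 1) - η y i| ^ p ∂m ≤ ε) :
    ∀ᵐ x ∂(m.restrict (Metric.ball 0 R)), ∀ i, η x i = 0 := by
  have hpos : ∀ x0, ∀ r : ℝ, 0 < r → 0 < m.real (Metric.ball x0 r) := fun x0 r hr =>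
    ENNReal.toReal_pos (Metric.measure_ball_pos m x0 hr).ne' (hfin x0 r).ne
  -- Lebesgue points
  have hleb : ∀ᵐ x ∂m, ∀ i, Tendsto (fun r => (m.real (Metric.ball x r))⁻¹ *
      ∫ y in Metric.ball x r, |η x i - η y i| ∂m) (𝓝[>] 0) (𝓝 0) := by
    rw [ae_all_iff]
    intro i
    have hli : LocallyIntegrable (fun x => η x i) m := by
      refine (locallyIntegrable_const K).mono (hηm i).aestronglyMeasurable (Eventually.of_forall fun x => ?_)
      exact (hK x i).trans (le_abs_self K)
    filter_upwards [(Besicovitch.vitaliFamily m).ae_tendsto_average_norm_sub hli] with x hx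
    have h1 := (hx.comp (Besicovitch.tendsto_filterAt m x)).const_mul CD
    rw [mul_zero] at h1
    refine squeeze_zero' (Eventually.of_forall fun r => by positivity) ?_ h1
    filter_upwards [self_mem_nhdsWithin] with r hr
    have hr : 0 < r := hr
    simp only [Function.comp]
    rw [setAverage_eq, smul_eq_mul]
    have hcb : m (Metric.closedBall x r) ≠ ∞ := (isCompact_closedBall x r).measure_lt_top.ne
    have h2 : m.real (Metric.closedBall x r) ≤ CD * m.real (Metric.ball x r) :=
      (measureReal_mono (Metric.closedBall_subset_ball (by linarith)) (hfin _ _).ne).trans (hd x r hr)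
    have h3 : 0 < m.real (Metric.closedBall x r) :=
      (hpos x r hr).trans_le (measureReal_mono Metric.ball_subset_closedBall hcb)
    have h4 : (m.real (Metric.ball x r))⁻¹ ≤ CD * (m.real (Metric.closedBall x r))⁻¹ := by
      have := hpos x r hr
      rw [← div_eq_mul_inv, inv_le_comm₀ this (by positivity), inv_div, div_le_iff₀ hCD]
      linarith
    rw [← mul_assoc]
    have h5 : ∫ y in Metric.ball x r, |η x i - η y i| ∂m ≤ ∫ y in Metric.closedBall x r, ‖η y i - η x i‖ ∂m := by
      simp_rw [Real.norm_eq_abs, abs_sub_comm (η x i)]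
      apply setIntegral_mono_set
      · refine Measure.integrableOn_of_bounded (M := K + K) hcb ?_ (Eventually.of_forall fun y => ?_)
        · have := hηm i
          exact (by fun_prop : Measurable fun y => |η y i - η x i|).aestronglyMeasurable
        · rw [Real.norm_eq_abs, abs_abs]
          exact (abs_sub _ _).trans (add_le_add (hK y i) (hK x i))
      · exact Eventually.of_forall fun y => abs_nonneg _
      · exact Metric.ball_subset_closedBall.eventuallyLE
    exact mul_le_mul h4 h5 (by positivity) (by positivity)
  have hK0 : 0 ≤ K := by
    obtain ⟨i⟩ := ‹Nonempty (Fin n)›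
    exact (abs_nonneg _).trans (hK 0 i)
  rw [ae_restrict_iff' Metric.isOpen_ball.measurableSet]
  filter_upwards [hleb] with x0 hx0 hxR
  -- fixed radius estimate
  set c : EuclideanSpace ℝ (Fin n) := WithLp.toLp 2 (η x0) with hc
  set D : ℝ := (2 : ℝ) ^ (p - 1) * (n : ℝ) ^ (p - 1) with hD
  have hD0 : 0 ≤ D := by positivity
  set S : ℝ → ℝ := fun r => ∑ i, (m.real (Metric.ball x0 r))⁻¹ * ∫ y in Metric.ball x0 r, |η x0 i - η y i| ∂m with hS
  have hfix : ∀ r, 0 < r → Metric.ball x0 (Λ * r) ⊆ Metric.ball 0 R →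
      ‖c‖ / 4 ≤ CD ^ 3 * (C * (D * ((2 * K) ^ (p - 1) * S (Λ * r))) ^ (1 / p)) := by
    intro r hr hsub
    have hΛr : 0 < Λ * r := by positivity
    have hm1 := hpos x0 r hr
    have hm2 := hpos x0 _ hΛr
    have hεb : ∀ ε > 0, r * ‖c‖ / 4 ≤ CD ^ 3 * (C * r * (D * ((2 * K) ^ (p - 1) * S (Λ * r) +
        (m.real (Metric.ball x0 (Λ * r)))⁻¹ * ε)) ^ (1 / p) + (m.real (Metric.ball x0 r))⁻¹ * ε) := by
      intro ε hε
      obtain ⟨φ, hφ, ⟨L, hL⟩, h1, h2⟩ := happ ε hε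
      refine (pi_step p hp m hfin CD hCD hd C Λ hC hΛ hpoincare c x0 r hr φ hφ L hL).trans ?_
      have hφc := hφ.continuous
      have hφd : Continuous (fderiv ℝ φ) := hφ.continuous_fderiv (by norm_num)
      have hfb : ∀ y i, |fderiv ℝ φ y (EuclideanSpace.single i 1)| ≤ L := by
        intro y i
        have h := (fderiv ℝ φ y).le_opNorm (EuclideanSpace.single i 1)
        have h' := norm_fderiv_le_of_lipschitz ℝ hL (x₀ := y)
        simp at h
        exact h.trans h'
      have hI1 : ∀ i, IntegrableOn (fun y => |η x0 i - η y i|) (Metric.ball x0 (Λ * r)) m := by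
        intro i
        refine Measure.integrableOn_of_bounded (M := K + K) (hfin _ _).ne ?_ (Eventually.of_forall fun y => ?_)
        · have := hηm i
          exact (by fun_prop : Measurable fun y => |η x0 i - η y i|).aestronglyMeasurable
        · rw [Real.norm_eq_abs, abs_abs]
          exact (abs_sub _ _).trans (add_le_add (hK _ i) (hK _ i))
      have hI2 : ∀ i, IntegrableOn (fun y => |fderiv ℝ φ y (EuclideanSpace.single i 1) - η y i| ^ p)
          (Metric.ball 0 R) m := by
        intro i
        refine Measure.integrableOn_of_bounded (M := (L + K) ^ p) (hfin _ _).ne ?_ (Eventually.of_forall fun y => ?_)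
        · have := hηm i
          have h4 : Measurable fun y => fderiv ℝ φ y (EuclideanSpace.single i 1) :=
            (by fun_prop : Continuous fun y => fderiv ℝ φ y (EuclideanSpace.single i 1)).measurable
          exact (by fun_prop : Measurable fun y => |fderiv ℝ φ y (EuclideanSpace.single i 1) - η y i| ^ p).aestronglyMeasurable
        · rw [Real.norm_eq_abs, abs_of_nonneg (by positivity)]
          exact Real.rpow_le_rpow (abs_nonneg _) ((abs_sub _ _).trans (add_le_add (hfb y i) (hK y i))) (by linarith)
      have hA : ∫ y in Metric.ball x0 r, |φ y| ∂m ≤ ε := by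
        refine le_trans ?_ h1
        apply setIntegral_mono_set
        · obtain ⟨B, hB⟩ := (isCompact_closedBall (0 : EuclideanSpace ℝ (Fin n)) R).exists_bound_of_continuousOn hφc.continuousOn
          refine Measure.integrableOn_of_bounded (M := B) (hfin _ _).ne (by fun_prop) ?_
          filter_upwards [ae_restrict_mem Metric.isOpen_ball.measurableSet] with y hy
          rw [Real.norm_eq_abs, abs_abs]
          exact hB y (Metric.ball_subset_closedBall hy)
        · exact Eventually.of_forall fun y => abs_nonneg _
        · refine HasSubset.Subset.eventuallyLE ((Metric.ball_subset_ball ?_).trans hsub)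
          nlinarith
      have hB : (m.real (Metric.ball x0 (Λ * r)))⁻¹ *
          ∫ y in Metric.ball x0 (Λ * r), ‖innerSL ℝ c - fderiv ℝ φ y‖ ^ p ∂m ≤
          D * ((2 * K) ^ (p - 1) * S (Λ * r) + (m.real (Metric.ball x0 (Λ * r)))⁻¹ * ε) := by
        have h3 : ∫ y in Metric.ball x0 (Λ * r), ‖innerSL ℝ c - fderiv ℝ φ y‖ ^ p ∂m ≤
            ∫ y in Metric.ball x0 (Λ * r), D * ((2 * K) ^ (p - 1) * ∑ i, |η x0 i - η y i| +
              ∑ i, |fderiv ℝ φ y (EuclideanSpace.single i 1) - η y i| ^ p) ∂m := by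
          refine integral_mono_of_nonneg (Eventually.of_forall fun y => by positivity) ?_ (Eventually.of_forall fun y => ?_)
          · refine Integrable.const_mul (Integrable.add (Integrable.const_mul ?_ _) ?_) _
            · exact integrable_finsetSum _ fun i _ => hI1 i
            · exact integrable_finsetSum _ fun i _ => (hI2 i).mono_set hsub
          · have h4 := pi_norm_le_sum (innerSL ℝ c - fderiv ℝ φ y)
            have h5 : ∀ i, (innerSL ℝ c - fderiv ℝ φ y) (EuclideanSpace.single i 1) =
                η x0 i - fderiv ℝ φ y (EuclideanSpace.single i 1) := by
              intro i; simp [hc, EuclideanSpace.inner_single_right]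
            simp only [h5] at h4
            refine (Real.rpow_le_rpow (norm_nonneg _) h4 (by linarith)).trans ?_
            exact pi_pw p hp (2 * K) (η x0) (fun i => fderiv ℝ φ y (EuclideanSpace.single i 1)) (η y)
              (fun i => by have := (abs_sub (η x0 i) (η y i)); linarith [hK x0 i, hK y i])
        have h6 : ∫ y in Metric.ball x0 (Λ * r), ∑ i, |fderiv ℝ φ y (EuclideanSpace.single i 1) - η y i| ^ p ∂m ≤ ε := by
          refine le_trans ?_ h2
          apply setIntegral_mono_set
          · exact integrable_finsetSum _ fun i _ => hI2 i
          · exact Eventually.of_forall fun y => Finset.sum_nonneg fun i _ => by positivity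
          · exact hsub.eventuallyLE
        have h7 : ∫ y in Metric.ball x0 (Λ * r), D * ((2 * K) ^ (p - 1) * ∑ i, |η x0 i - η y i| +
              ∑ i, |fderiv ℝ φ y (EuclideanSpace.single i 1) - η y i| ^ p) ∂m ≤
            D * ((2 * K) ^ (p - 1) * ∑ i, (∫ y in Metric.ball x0 (Λ * r), |η x0 i - η y i| ∂m) + ε) := by
          rw [integral_const_mul, integral_add, integral_const_mul, integral_finsetSum]
          · gcongr
          · exact fun i _ => hI1 i
          · exact Integrable.const_mul (integrable_finsetSum _ fun i _ => hI1 i) _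
          · exact integrable_finsetSum _ fun i _ => (hI2 i).mono_set hsub
        calc _ ≤ (m.real (Metric.ball x0 (Λ * r)))⁻¹ * (D * ((2 * K) ^ (p - 1) *
              ∑ i, (∫ y in Metric.ball x0 (Λ * r), |η x0 i - η y i| ∂m) + ε)) := by
              exact mul_le_mul_of_nonneg_left (h3.trans h7) (by positivity)
          _ = _ := by
              simp only [hS]
              rw [← Finset.mul_sum]; ring
      refine mul_le_mul_of_nonneg_left (add_le_add ?_ ?_) (by positivity)
      · refine mul_le_mul_of_nonneg_left (Real.rpow_le_rpow (by positivity) hB (by positivity)) (by positivity)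
      · exact mul_le_mul_of_nonneg_left hA (by positivity)
    have hlim : Tendsto (fun ε : ℝ => CD ^ 3 * (C * r * (D * ((2 * K) ^ (p - 1) * S (Λ * r) +
        (m.real (Metric.ball x0 (Λ * r)))⁻¹ * ε)) ^ (1 / p) + (m.real (Metric.ball x0 r))⁻¹ * ε)) (𝓝[>] 0)
        (𝓝 (CD ^ 3 * (C * r * (D * ((2 * K) ^ (p - 1) * S (Λ * r) +
        (m.real (Metric.ball x0 (Λ * r)))⁻¹ * 0)) ^ (1 / p) + (m.real (Metric.ball x0 r))⁻¹ * 0))) := by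
      refine Tendsto.mono_left (Continuous.tendsto ?_ 0) nhdsWithin_le_nhds
      refine continuous_const.mul (Continuous.add (continuous_const.mul ?_) (by fun_prop))
      exact Continuous.rpow_const (by fun_prop) (fun _ => Or.inr (by positivity))
    have hge := ge_of_tendsto hlim (by
      filter_upwards [self_mem_nhdsWithin] with ε hε
      exact hεb ε hε)
    simp only [mul_zero, add_zero] at hge
    have : r * (‖c‖ / 4) ≤ r * (CD ^ 3 * (C * (D * ((2 * K) ^ (p - 1) * S (Λ * r))) ^ (1 / p))) := by
      linarith
    exact le_of_mul_le_mul_left this hr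
  -- let r → 0
  have hΛ0 : 0 < Λ := by linarith
  have hSlim : Tendsto (fun r : ℝ => S (Λ * r)) (𝓝[>] 0) (𝓝 0) := by
    have h1 : Tendsto S (𝓝[>] 0) (𝓝 0) := by
      have := tendsto_finsetSum Finset.univ (fun i _ => hx0 i)
      simpa using this
    refine h1.comp ?_
    rw [tendsto_nhdsWithin_iff]
    constructor
    · refine Tendsto.mono_left ?_ nhdsWithin_le_nhds
      have : Continuous fun r : ℝ => Λ * r := by fun_prop
      simpa using this.tendsto 0
    · filter_upwards [self_mem_nhdsWithin] with r hr
      exact mul_pos hΛ0 hr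
  have hRlim : Tendsto (fun r : ℝ => CD ^ 3 * (C * (D * ((2 * K) ^ (p - 1) * S (Λ * r))) ^ (1 / p)))
      (𝓝[>] 0) (𝓝 (CD ^ 3 * (C * (D * ((2 * K) ^ (p - 1) * 0)) ^ (1 / p)))) := by
    refine ((Tendsto.rpow_const ((hSlim.const_mul _).const_mul _) (Or.inr (by positivity))).const_mul _).const_mul _
  have hev : ∀ᶠ r in 𝓝[>] (0 : ℝ), ‖c‖ / 4 ≤ CD ^ 3 * (C * (D * ((2 * K) ^ (p - 1) * S (Λ * r))) ^ (1 / p)) := by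
    have hR : 0 < R - ‖x0‖ := by simpa using hxR
    have : ∀ᶠ r in 𝓝[>] (0 : ℝ), r < (R - ‖x0‖) / Λ :=
      nhdsWithin_le_nhds (Iio_mem_nhds (by positivity))
    filter_upwards [self_mem_nhdsWithin, this] with r hr hr2
    refine hfix r hr ?_
    rw [lt_div_iff₀ hΛ0] at hr2
    apply Metric.ball_subset_ball'
    rw [dist_zero_right]
    linarith
  have hfinal := ge_of_tendsto hRlim hev
  rw [mul_zero, mul_zero, Real.zero_rpow (by positivity), mul_zero, mul_zero] at hfinal
  have hc0 : c = 0 := by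
    have := norm_nonneg c
    exact norm_eq_zero.1 (by linarith)
  intro i
  have : c i = 0 := by rw [hc0]; rfl
  simpa [hc] using this

lemma pi_partA {n : ℕ} [Nonempty (Fin n)] (p : ℝ) (hp : 1 < p)
    (m : Measure (EuclideanSpace ℝ (Fin n)))
    [IsFiniteMeasureOnCompacts m] [m.IsOpenPosMeasure]
    (hfin : ∀ (x : EuclideanSpace ℝ (Fin n)) (r : ℝ), m (Metric.ball x r) < ∞)
    (CD : ℝ) (hCD : 0 < CD)
    (hd : ∀ (x : EuclideanSpace ℝ (Fin n)) (r : ℝ), 0 < r →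
      m.real (Metric.ball x (2 * r)) ≤ CD * m.real (Metric.ball x r))
    (C Λ : ℝ) (hC : 0 < C) (hΛ : 1 ≤ Λ)
    (hpoincare : ∀ f : EuclideanSpace ℝ (Fin n) → ℝ, (∃ K : ℝ≥0, LipschitzWith K f) →
      ∀ (x : EuclideanSpace ℝ (Fin n)) (r : ℝ), 0 < r →
        ⨍ y in Metric.ball x r, |f y - ⨍ z in Metric.ball x r, f z ∂m| ∂m ≤
          C * r * (⨍ y in Metric.ball x (Λ * r), lip f y ^ p ∂m) ^ (1 / p))
    (R : ℝ) (ε : ℝ) (hε : 0 < ε) (i : Fin n) :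
    ∃ (V : EuclideanSpace ℝ (Fin n) → Fin n → ℝ) (a : EuclideanSpace ℝ (Fin n) → ℝ) (K : ℝ),
      (∀ j, Integrable (fun x => V x j) (m.restrict (Metric.ball 0 R))) ∧ Measurable a ∧ (∀ x, |a x| ≤ K) ∧
      (∀ φ : EuclideanSpace ℝ (Fin n) → ℝ, ContDiff ℝ 1 φ → (∃ L : ℝ≥0, LipschitzWith L φ) →
        ∫ x, ∑ j, V x j * fderiv ℝ φ x (EuclideanSpace.single j 1) ∂(m.restrict (Metric.ball 0 R)) =
          ∫ x, a x * φ x ∂(m.restrict (Metric.ball 0 R))) ∧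
      ∫ x, ∑ j, |V x j - if i = j then 1 else 0| ∂(m.restrict (Metric.ball 0 R)) ≤ ε := by
  set μ := m.restrict (Metric.ball (0 : EuclideanSpace ℝ (Fin n)) R) with hμ
  have : IsFiniteMeasure μ := ⟨by rw [hμ, Measure.restrict_apply_univ]; exact hfin _ _⟩
  have : IsFiniteMeasure (Measure.count : Measure (Fin n)) := inferInstance
  set M := μ.prod (Measure.count : Measure (Fin n)) with hM
  have hprod : ∀ f : EuclideanSpace ℝ (Fin n) × Fin n → ℝ, Integrable f M →
      ∫ z, f z ∂M = ∫ x, ∑ j, f (x, j) ∂μ := by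
    intro f hf
    rw [integral_prod f hf]
    simp_rw [integral_count]
  set P : ℝ≥0∞ := ENNReal.ofReal p with hP
  have hP0 : P ≠ 0 := by rw [hP]; simp; linarith
  have hPt : P ≠ ∞ := ENNReal.ofReal_ne_top
  have hPr : P.toReal = p := ENNReal.toReal_ofReal (by linarith)
  have : Fact (1 ≤ P) := ⟨by rw [hP]; simpa using hp.le⟩
  let T : Submodule ℝ (EuclideanSpace ℝ (Fin n) → ℝ) :=
    { carrier := {φ | ContDiff ℝ 1 φ ∧ ∃ L : ℝ≥0, LipschitzWith L φ}
      add_mem' := by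
        rintro a b ⟨ha, L1, h1⟩ ⟨hb, L2, h2⟩
        exact ⟨ha.add hb, _, h1.add h2⟩
      zero_mem' := ⟨contDiff_const, 0, LipschitzWith.const 0⟩
      smul_mem' := by
        rintro c a ⟨ha, L1, h1⟩
        exact ⟨contDiff_const.smul ha, _, (lipschitzWith_smul c).comp h1⟩ }
  have hfb : ∀ (φ : T), ∃ L : ℝ, ∀ y i, |fderiv ℝ φ.1 y (EuclideanSpace.single i 1)| ≤ L := by
    rintro ⟨φ, hφ, L, hL⟩
    refine ⟨L, fun y i => ?_⟩
    have h := (fderiv ℝ φ y).le_opNorm (EuclideanSpace.single i 1)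
    have h' := norm_fderiv_le_of_lipschitz ℝ hL (x₀ := y)
    simp at h
    exact h.trans h'
  have hA : ∀ φ : T, MemLp φ.1 1 μ := by
    rintro ⟨φ, hφ, L, hL⟩
    obtain ⟨B, hB⟩ := (isCompact_closedBall (0 : EuclideanSpace ℝ (Fin n)) R).exists_bound_of_continuousOn hφ.continuous.continuousOn
    refine MemLp.of_bound hφ.continuous.aestronglyMeasurable B ?_
    rw [hμ]
    filter_upwards [ae_restrict_mem Metric.isOpen_ball.measurableSet] with y hy
    exact hB y (Metric.ball_subset_closedBall hy)
  let grad : (EuclideanSpace ℝ (Fin n) → ℝ) → EuclideanSpace ℝ (Fin n) × Fin n → ℝ :=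
    fun φ z => fderiv ℝ φ z.1 (EuclideanSpace.single z.2 1)
  have hgm : ∀ φ : T, Measurable (grad φ.1) := by
    rintro ⟨φ, hφ, L, hL⟩
    have hφd : Continuous (fderiv ℝ φ) := hφ.continuous_fderiv (by norm_num)
    apply measurable_from_prod_countable_left
    intro j
    exact (by fun_prop : Continuous fun y => fderiv ℝ φ y (EuclideanSpace.single j 1)).measurable
  have hB : ∀ φ : T, MemLp (grad φ.1) P M := by
    intro φ
    obtain ⟨L, hL⟩ := hfb φ
    exact MemLp.of_bound (hgm φ).aestronglyMeasurable L (Eventually.of_forall fun z => hL z.1 z.2)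
  have hdiff : ∀ φ : T, Differentiable ℝ φ.1 := fun φ => φ.2.1.differentiable (by norm_num)
  let A : T →ₗ[ℝ] Lp ℝ 1 μ :=
    { toFun := fun φ => (hA φ).toLp φ.1
      map_add' := fun φ ψ => MemLp.toLp_add (hA φ) (hA ψ)
      map_smul' := fun c φ => MemLp.toLp_const_smul c (hA φ) }
  let B : T →ₗ[ℝ] Lp ℝ P M :=
    { toFun := fun φ => (hB φ).toLp (grad φ.1)
      map_add' := fun φ ψ => by
        rw [← MemLp.toLp_add (hB φ) (hB ψ)]
        congr 1
        ext z
        simp only [grad, Submodule.coe_add, Pi.add_apply]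
        rw [fderiv_add (hdiff φ _) (hdiff ψ _)]; rfl
      map_smul' := fun c φ => by
        rw [RingHom.id_apply, ← MemLp.toLp_const_smul c (hB φ)]
        congr 1
        ext z
        simp only [grad, Submodule.coe_smul, Pi.smul_apply]
        rw [fderiv_const_smul (hdiff φ _)]; rfl }
  have hAn : ∀ φ : T, ‖A φ‖ = ∫ x, |φ.1 x| ∂μ := by
    intro φ
    rw [L1.norm_eq_integral_norm]
    refine integral_congr_ae ?_
    filter_upwards [(hA φ).coeFn_toLp] with x hx
    show ‖(hA φ).toLp φ.1 x‖ = _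
    rw [hx, Real.norm_eq_abs]
  let e0 : EuclideanSpace ℝ (Fin n) × Fin n → ℝ := fun z => if i = z.2 then 1 else 0
  have he0m : Measurable e0 := by
    apply measurable_from_prod_countable_left
    intro j
    exact (measurable_const : Measurable fun _ : EuclideanSpace ℝ (Fin n) => (if i = j then 1 else 0 : ℝ))
  have he0 : MemLp e0 1 M := by
    refine MemLp.of_bound he0m.aestronglyMeasurable 1 (Eventually.of_forall fun z => ?_)
    simp only [e0]; split_ifs <;> simp
  obtain ⟨b, a, K, hb1, ham, haK, hid⟩ := pi_dual μ M P hPt A B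
    (fun φ => by
      obtain ⟨L, hL⟩ := hfb φ
      refine ⟨L, ?_⟩
      filter_upwards [(hB φ).coeFn_toLp] with z hz
      show |(hB φ).toLp (grad φ.1) z| ≤ L
      rw [hz]; exact hL z.1 z.2)
    (by
      intro η hη K hηm hK happ
      have key := pi_clos p hp m hfin CD hCD hd C Λ hC hΛ hpoincare R (fun x j => η (x, j)) K
        (fun j => by fun_prop) (fun x j => hK _) (by
          intro ε hε
          have hδ : 0 < min ε (ε ^ (1 / p)) := lt_min hε (by positivity)
          obtain ⟨φ, h1, h2⟩ := happ _ hδ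
          refine ⟨φ.1, φ.2.1, φ.2.2, ?_, ?_⟩
          · rw [hAn] at h1
            exact h1.le.trans (min_le_left _ _)
          · have hd1 : MemLp (grad φ.1 - η) P M := (hB φ).sub hη
            have h3 : B φ - hη.toLp η = hd1.toLp _ := (MemLp.toLp_sub (hB φ) hη).symm
            rw [h3, Lp.norm_toLp, hd1.eLpNorm_eq_integral_rpow_norm hP0 hPt, hPr,
              ENNReal.toReal_ofReal (by positivity)] at h2
            have hItg : Integrable (fun z => ‖(grad φ.1 - η) z‖ ^ p) M := by
              have := hd1.integrable_norm_rpow hP0 hPt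
              rwa [hPr] at this
            have h4 := h2.le.trans (min_le_right _ _)
            rw [← one_div, Real.rpow_le_rpow_iff (by positivity) hε.le (by positivity)] at h4
            rw [hprod _ hItg] at h4
            exact h4)
      have h5 : ∀ᵐ x ∂μ, ∀ᵐ j ∂(Measure.count : Measure (Fin n)), η (x, j) = 0 := by
        filter_upwards [key] with x hx
        exact Eventually.of_forall hx
      exact (Measure.ae_prod_iff_ae_ae (p := fun z => η z = 0) (measurableSet_eq_fun hηm measurable_const)).2 h5)
    (he0.toLp e0) ε hε
  have hbint : Integrable b M := L1.integrable_coeFn b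
  have hVint : ∀ j, Integrable (fun x => b (x, j)) μ := by
    intro j
    have h := hbint.prod_left_ae
    rw [Measure.ae_count_iff] at h
    exact h j
  refine ⟨fun x j => b (x, j), a, K, hVint, ham, haK, ?_, ?_⟩
  · intro φ hφ hφL
    have h1 := hid ⟨φ, hφ, hφL⟩
    obtain ⟨L, hL⟩ := hfb ⟨φ, hφ, hφL⟩
    have h2 : ∫ y, B ⟨φ, hφ, hφL⟩ y * b y ∂M = ∫ z, grad φ z * b z ∂M := by
      refine integral_congr_ae ?_
      filter_upwards [(hB ⟨φ, hφ, hφL⟩).coeFn_toLp] with z hz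
      show (hB ⟨φ, hφ, hφL⟩).toLp (grad φ) z * _ = _
      rw [hz]
    have h3 : ∫ x, A ⟨φ, hφ, hφL⟩ x * a x ∂μ = ∫ x, a x * φ x ∂μ := by
      refine integral_congr_ae ?_
      filter_upwards [(hA ⟨φ, hφ, hφL⟩).coeFn_toLp] with z hz
      show (hA ⟨φ, hφ, hφL⟩).toLp φ z * _ = _
      rw [hz, mul_comm]
    rw [h2, h3, hprod] at h1
    · rw [← h1]
      refine integral_congr_ae (Eventually.of_forall fun x => ?_)
      simp only [grad]
      refine Finset.sum_congr rfl fun j _ => mul_comm _ _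
    · exact hbint.bdd_mul (hgm ⟨φ, hφ, hφL⟩).aestronglyMeasurable (Eventually.of_forall fun z => hL z.1 z.2)
  · rw [L1.norm_eq_integral_norm] at hb1
    have h1 : ∫ z, ‖(b - he0.toLp e0 : Lp ℝ 1 M) z‖ ∂M = ∫ z, ‖b z - e0 z‖ ∂M := by
      refine integral_congr_ae ?_
      filter_upwards [Lp.coeFn_sub b (he0.toLp e0), he0.coeFn_toLp] with z h1 h2
      rw [h1, Pi.sub_apply, h2]
    rw [h1, hprod] at hb1
    · exact hb1.le
    · exact (hbint.sub (memLp_one_iff_integrable.1 he0)).norm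

/-- open upper half space -/
def PiH (E : Type) : Set (ℝ × E) := {z | 0 < z.1}

lemma pi_isOpen_H (E : Type) [TopologicalSpace E] : IsOpen (PiH E) :=
  isOpen_lt continuous_const continuous_fst

/-- convolution of a measure with density and a space-time kernel -/
noncomputable def piU {E : Type} [NormedAddCommGroup E] [MeasurableSpace E] {G : Type} [NormedAddCommGroup G]
    [NormedSpace ℝ G] (μ : Measure E) (f : E → ℝ) (k : ℝ × E → G) (z : ℝ × E) : G :=
  ∫ y, f y • k (z - (0, y)) ∂μ

section
variable {E : Type} [NormedAddCommGroup E] [NormedSpace ℝ E] [FiniteDimensional ℝ E] [MeasurableSpace E] [BorelSpace E]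

lemma pi_kmeas {G : Type} [NormedAddCommGroup G] [NormedSpace ℝ G] (k : ℝ × E → G)
    (hk : ContinuousOn k (PiH E)) (z : ℝ × E) (hz : z ∈ PiH E) :
    Continuous (fun y : E => k (z - (0, y))) := by
  refine hk.comp_continuous (by fun_prop) (fun y => ?_)
  simpa [PiH] using hz

lemma pi_kbound {G : Type} [NormedAddCommGroup G] [NormedSpace ℝ G] (k : ℝ × E → G)
    (hk : ContinuousOn k (PiH E)) (R : ℝ) (z : ℝ × E) (hz : z ∈ PiH E) :
    ∃ ε > 0, Metric.ball z ε ⊆ PiH E ∧ ∃ B : ℝ, ∀ x ∈ Metric.ball z ε, ∀ y : E, ‖y‖ ≤ R → ‖k (x - (0, y))‖ ≤ B := by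
  obtain ⟨ε, hε, hsub⟩ := Metric.isOpen_iff.1 (pi_isOpen_H E) z hz
  have hcomp : IsCompact ((fun q : (ℝ × E) × E => q.1 - (0, q.2)) ''
      (Metric.closedBall z (ε / 2) ×ˢ Metric.closedBall 0 R)) := by
    exact ((isCompact_closedBall _ _).prod (isCompact_closedBall _ _)).image (by fun_prop)
  have hs : ((fun q : (ℝ × E) × E => q.1 - (0, q.2)) ''
      (Metric.closedBall z (ε / 2) ×ˢ Metric.closedBall 0 R)) ⊆ PiH E := by
    rintro _ ⟨⟨x, y⟩, ⟨hx, hy⟩, rfl⟩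
    have := hsub (Metric.closedBall_subset_ball (by linarith) hx)
    simpa [PiH] using this
  obtain ⟨B, hB⟩ := hcomp.exists_bound_of_continuousOn (hk.mono hs)
  refine ⟨ε / 2, by positivity, (Metric.ball_subset_ball (by linarith)).trans hsub, B, fun x hx y hy => ?_⟩
  exact hB _ ⟨(x, y), ⟨Metric.ball_subset_closedBall hx, by simpa using hy⟩, rfl⟩

lemma pi_conv_integrable {G : Type} [NormedAddCommGroup G] [NormedSpace ℝ G] [FiniteDimensional ℝ G] (μ : Measure E) (R : ℝ)
    (hR : ∀ᵐ y ∂μ, ‖y‖ ≤ R) (f : E → ℝ) (hf : Integrable f μ) (k : ℝ × E → G)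
    (hk : ContinuousOn k (PiH E)) (z : ℝ × E) (hz : z ∈ PiH E) :
    Integrable (fun y => f y • k (z - (0, y))) μ := by
  obtain ⟨ε, hε, -, B, hB⟩ := pi_kbound k hk R z hz
  refine (hf.norm.mul_const B).mono' (hf.aestronglyMeasurable.smul (pi_kmeas k hk z hz).aestronglyMeasurable) ?_
  filter_upwards [hR] with y hy
  rw [norm_smul]
  gcongr
  exact hB z (Metric.mem_ball_self hε) y hy

lemma pi_conv_deriv {G : Type} [NormedAddCommGroup G] [NormedSpace ℝ G] [FiniteDimensional ℝ G] (μ : Measure E) (R : ℝ)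
    (hR : ∀ᵐ y ∂μ, ‖y‖ ≤ R) (f : E → ℝ) (hf : Integrable f μ) (k : ℝ × E → G)
    (hk : ContDiffOn ℝ 1 k (PiH E)) (z : ℝ × E) (hz : z ∈ PiH E) :
    HasFDerivAt (piU μ f k) (piU μ f (fderiv ℝ k) z) z := by
  have hk' : ContinuousOn (fderiv ℝ k) (PiH E) := hk.continuousOn_fderiv_of_isOpen (pi_isOpen_H E) le_rfl
  obtain ⟨ε, hε, hsub, B, hB⟩ := pi_kbound (fderiv ℝ k) hk' R z hz
  have hmem : ∀ x ∈ PiH E, ∀ y : E, x - (0, y) ∈ PiH E := by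
    intro x hx y; simpa [PiH] using hx
  refine hasFDerivAt_integral_of_dominated_of_fderiv_le (F := fun z y => f y • k (z - (0, y)))
    (F' := fun z y => f y • fderiv ℝ k (z - (0, y))) (bound := fun y => ‖f y‖ * B)
    (Metric.ball_mem_nhds z hε) ?_ ?_ ?_ ?_ ?_ ?_
  · filter_upwards [(pi_isOpen_H E).mem_nhds hz] with x hx
    exact (pi_conv_integrable μ R hR f hf k hk.continuousOn x hx).aestronglyMeasurable
  · exact pi_conv_integrable μ R hR f hf k hk.continuousOn z hz
  · exact (pi_conv_integrable μ R hR f hf _ hk' z hz).aestronglyMeasurable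
  · filter_upwards [hR] with y hy x hx
    rw [norm_smul]
    gcongr
    exact hB x hx y hy
  · exact hf.norm.mul_const B
  · refine Eventually.of_forall fun y x hx => ?_
    have h1 : HasFDerivAt k (fderiv ℝ k (x - (0, y))) (x - (0, y)) :=
      ((hk.differentiableOn (by norm_num)).differentiableAt
        ((pi_isOpen_H E).mem_nhds (hmem x (hsub hx) y))).hasFDerivAt
    have h2 := h1.comp x ((hasFDerivAt_id x).sub_const ((0 : ℝ), y))
    exact h2.const_smul (f y)

lemma pi_conv_fderiv {G : Type} [NormedAddCommGroup G] [NormedSpace ℝ G] [FiniteDimensional ℝ G] (μ : Measure E) (R : ℝ)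
    (hR : ∀ᵐ y ∂μ, ‖y‖ ≤ R) (f : E → ℝ) (hf : Integrable f μ) (k : ℝ × E → G)
    (hk : ContDiffOn ℝ 1 k (PiH E)) (z : ℝ × E) (hz : z ∈ PiH E) :
    fderiv ℝ (piU μ f k) z = piU μ f (fderiv ℝ k) z := (pi_conv_deriv μ R hR f hf k hk z hz).fderiv

lemma pi_conv_contDiffOn {G : Type} [NormedAddCommGroup G] [NormedSpace ℝ G] [FiniteDimensional ℝ G] (μ : Measure E) (R : ℝ)
    (hR : ∀ᵐ y ∂μ, ‖y‖ ≤ R) (f : E → ℝ) (hf : Integrable f μ) (N : ℕ) (k : ℝ × E → G)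
    (hk : ContDiffOn ℝ (N + 1) k (PiH E)) : ContDiffOn ℝ N (piU μ f k) (PiH E) := by
  induction N generalizing G with
  | zero =>
    have : ContinuousOn (piU μ f k) (PiH E) := fun z hz =>
      (pi_conv_deriv μ R hR f hf k (by simpa using hk) z hz).continuousAt.continuousWithinAt
    simpa using this
  | succ N ih =>
    have hk1 : ContDiffOn ℝ 1 k (PiH E) := hk.of_le (by norm_cast; omega)
    push_cast
    rw [contDiffOn_succ_iff_fderiv_of_isOpen (pi_isOpen_H E)]
    refine ⟨fun z hz => (pi_conv_deriv μ R hR f hf k hk1 z hz).differentiableAt.differentiableWithinAt, by simp, ?_⟩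
    have h1 : ContDiffOn ℝ (N + 1) (fderiv ℝ k) (PiH E) := by
      have := (contDiffOn_succ_iff_fderiv_of_isOpen (n := N + 1) (pi_isOpen_H E)).1 (by exact_mod_cast hk)
      exact this.2.2
    refine (ih (fderiv ℝ k) h1).congr fun z hz => ?_
    exact pi_conv_fderiv μ R hR f hf k hk1 z hz
end

/-- heat kernel -/
noncomputable def piK (n : ℕ) (z : ℝ × EuclideanSpace ℝ (Fin n)) : ℝ :=
  Real.exp (-(n / 2) * Real.log (4 * Real.pi * z.1) - ‖z.2‖ ^ 2 / (4 * z.1))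

lemma piK_pos (n : ℕ) (z) : 0 < piK n z := Real.exp_pos _

lemma piK_contDiffOn (n : ℕ) (N : ℕ∞) : ContDiffOn ℝ N (piK n) (PiH _) := by
  unfold piK
  have h1 : ContDiffOn ℝ N (fun z : ℝ × EuclideanSpace ℝ (Fin n) => Real.log (4 * Real.pi * z.1)) (PiH _) := by
    refine ContDiffOn.log (by fun_prop) (fun z hz => ?_)
    have : 0 < z.1 := hz
    positivity
  have h2 : ContDiffOn ℝ N (fun z : ℝ × EuclideanSpace ℝ (Fin n) => ‖z.2‖ ^ 2 / (4 * z.1)) (PiH _) := by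
    refine ContDiffOn.div ?_ (by fun_prop) (fun z hz => ?_)
    · exact (contDiff_snd.norm_sq ℝ).contDiffOn
    · have : 0 < z.1 := hz
      positivity
  exact ((contDiffOn_const.mul h1).sub h2).exp

/-- first derivatives of the kernel -/
lemma piK_hasFDerivAt (n : ℕ) (z : ℝ × EuclideanSpace ℝ (Fin n)) (hz : 0 < z.1) :
    HasFDerivAt (piK n) (piK n z • ((-(n / 2) / z.1 + ‖z.2‖ ^ 2 / (4 * z.1 ^ 2)) • ContinuousLinearMap.fst ℝ ℝ (EuclideanSpace ℝ (Fin n)) -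
      (1 / (2 * z.1)) • (innerSL ℝ z.2).comp (ContinuousLinearMap.snd ℝ ℝ (EuclideanSpace ℝ (Fin n))))) z := by
  have h1 : HasFDerivAt (fun z : ℝ × EuclideanSpace ℝ (Fin n) => 4 * Real.pi * z.1)
      ((4 * Real.pi) • ContinuousLinearMap.fst ℝ ℝ (EuclideanSpace ℝ (Fin n))) z := hasFDerivAt_fst.const_mul _
  have h2 := (h1.log (by positivity)).const_mul (-((n : ℝ) / 2))
  have h3 : HasFDerivAt (fun z : ℝ × EuclideanSpace ℝ (Fin n) => ‖z.2‖ ^ 2) _ z := hasFDerivAt_snd.norm_sq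
  have h4 : HasFDerivAt (fun z : ℝ × EuclideanSpace ℝ (Fin n) => (4 * z.1)⁻¹)
      (-((4 * z.1) ^ 2)⁻¹ • ((4 : ℝ) • ContinuousLinearMap.fst ℝ ℝ (EuclideanSpace ℝ (Fin n)))) z :=
    (hasDerivAt_inv (by positivity)).comp_hasFDerivAt z (hasFDerivAt_fst.const_mul (4 : ℝ))
  have h5 := (h2.sub (h3.mul h4)).exp
  refine h5.congr_fderiv ?_
  ext v
  · simp [piK]
    have : Real.exp (-(↑n / 2 * Real.log (4 * Real.pi * z.1)) - ‖z.2‖ ^ 2 * (z.1⁻¹ * 4⁻¹)) =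
        Real.exp (-(↑n / 2 * Real.log (4 * Real.pi * z.1)) - ‖z.2‖ ^ 2 / (4 * z.1)) := by
      congr 2; field_simp
    rw [this]
    congr 1
    field_simp
  · simp [piK]
    have : Real.exp (-(↑n / 2 * Real.log (4 * Real.pi * z.1)) - ‖z.2‖ ^ 2 * (z.1⁻¹ * 4⁻¹)) =
        Real.exp (-(↑n / 2 * Real.log (4 * Real.pi * z.1)) - ‖z.2‖ ^ 2 / (4 * z.1)) := by
      congr 2; field_simp
    rw [this]
    congr 1
    ring

/-- second derivative along lines -/
lemma pi_line {F : Type} [NormedAddCommGroup F] [NormedSpace ℝ F] (f : F → ℝ) (v ξ : F) (hf : ContDiffAt ℝ 2 f v)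
    (f1 : ℝ → ℝ) (d : ℝ) (h1 : ∀ᶠ s in 𝓝 (0 : ℝ), HasDerivAt (fun s => f (v + s • ξ)) (f1 s) s)
    (h2 : HasDerivAt f1 d 0) : fderiv ℝ (fderiv ℝ f) v ξ ξ = d := by
  have hline : ∀ s : ℝ, HasDerivAt (fun s : ℝ => v + s • ξ) ξ s := by
    intro s
    simpa using ((hasDerivAt_id s).smul_const ξ).const_add v
  have hev : ∀ᶠ x in 𝓝 v, DifferentiableAt ℝ f x :=
    (hf.eventually (by simp)).mono fun x hx => hx.differentiableAt (by norm_num)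
  have hcont : Tendsto (fun s : ℝ => v + s • ξ) (𝓝 0) (𝓝 v) := by
    have := (hline 0).continuousAt.tendsto
    simpa using this
  have h3 : f1 =ᶠ[𝓝 0] fun s => fderiv ℝ f (v + s • ξ) ξ := by
    filter_upwards [h1, hcont.eventually hev] with s hs hd
    exact hs.unique (hd.hasFDerivAt.comp_hasDerivAt s (hline s))
  have hd2 : HasFDerivAt (fderiv ℝ f) (fderiv ℝ (fderiv ℝ f) v) (v + (0 : ℝ) • ξ) := by
    simp only [zero_smul, add_zero]
    exact ((hf.fderiv_right (m := 1) (by norm_num)).differentiableAt (by norm_num)).hasFDerivAt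
  have h4 : HasDerivAt (fun s : ℝ => fderiv ℝ f (v + s • ξ) ξ) (fderiv ℝ (fderiv ℝ f) v ξ ξ) 0 := by
    have h5 := hd2.comp_hasDerivAt (0 : ℝ) (hline 0)
    have h6 := h5.clm_apply (hasDerivAt_const (0 : ℝ) ξ)
    simpa using h6
  exact (h4.congr_of_eventuallyEq h3).unique h2

lemma piK_fderiv (n : ℕ) (z : ℝ × EuclideanSpace ℝ (Fin n)) (hz : 0 < z.1) (e : EuclideanSpace ℝ (Fin n)) :
    fderiv ℝ (piK n) z (0, e) = -(1 / (2 * z.1)) * (piK n z * inner ℝ z.2 e) := by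
  rw [(piK_hasFDerivAt n z hz).fderiv]
  simp
  ring

lemma piK_second (n : ℕ) (z : ℝ × EuclideanSpace ℝ (Fin n)) (hz : 0 < z.1) (e : EuclideanSpace ℝ (Fin n)) :
    fderiv ℝ (fderiv ℝ (piK n)) z (0, e) (0, e) =
      piK n z * ((inner ℝ z.2 e) ^ 2 / (4 * z.1 ^ 2) - ‖e‖ ^ 2 / (2 * z.1)) := by
  have hl : ∀ s : ℝ, HasDerivAt (fun s : ℝ => z + s • ((0 : ℝ), e)) (0, e) s := by
    intro s
    simpa using ((hasDerivAt_id s).smul_const ((0 : ℝ), e)).const_add z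
  have h1 : ∀ s : ℝ, HasDerivAt (fun s : ℝ => piK n (z + s • ((0 : ℝ), e)))
      (-(1 / (2 * z.1)) * (piK n (z + s • ((0 : ℝ), e)) * (inner ℝ z.2 e + s * ‖e‖ ^ 2))) s := by
    intro s
    have hp : 0 < (z + s • ((0 : ℝ), e)).1 := by simpa using hz
    have h := (piK_hasFDerivAt n _ hp).differentiableAt.hasFDerivAt.comp_hasDerivAt s (hl s)
    rw [piK_fderiv n _ hp] at h
    convert! h using 1
    simp [inner_add_left, inner_smul_left, real_inner_self_eq_norm_sq]
  refine pi_line (piK n) z (0, e) ?_ (fun s => (-(1 / (2 * z.1)) * (piK n (z + s • ((0 : ℝ), e)) * (inner ℝ z.2 e + s * ‖e‖ ^ 2)))) _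
    (Eventually.of_forall h1) ?_
  · exact (piK_contDiffOn n 2).contDiffAt ((pi_isOpen_H _).mem_nhds hz)
  · have h2 : HasDerivAt (fun s : ℝ => inner ℝ z.2 e + s * ‖e‖ ^ 2) (1 * ‖e‖ ^ 2) 0 :=
      ((hasDerivAt_id (0 : ℝ)).mul_const _).const_add _
    have h3 := ((h1 0).mul h2).const_mul (-(1 / (2 * z.1)))
    refine h3.congr_deriv ?_
    simp
    field_simp
    ring

lemma piK_heat (n : ℕ) (z : ℝ × EuclideanSpace ℝ (Fin n)) (hz : 0 < z.1) :
    fderiv ℝ (piK n) z (1, 0) =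
      ∑ j, fderiv ℝ (fderiv ℝ (piK n)) z (0, EuclideanSpace.single j 1) (0, EuclideanSpace.single j 1) := by
  simp_rw [piK_second n z hz]
  rw [← Finset.mul_sum, Finset.sum_sub_distrib, ← Finset.sum_div]
  rw [(piK_hasFDerivAt n z hz).fderiv]
  simp [EuclideanSpace.inner_single_right, EuclideanSpace.norm_sq_eq z.2]
  left
  field_simp
  ring

section
variable {n : ℕ}
local notation "𝔼" => EuclideanSpace ℝ (Fin n)

lemma piU_fderiv_apply (μ : Measure 𝔼) (R : ℝ) (hR : ∀ᵐ y ∂μ, ‖y‖ ≤ R) (f : 𝔼 → ℝ) (hf : Integrable f μ)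
    (z : ℝ × 𝔼) (hz : 0 < z.1) (v : ℝ × 𝔼) :
    fderiv ℝ (piU μ f (piK n)) z v = ∫ y, f y * fderiv ℝ (piK n) (z - (0, y)) v ∂μ := by
  rw [pi_conv_fderiv μ R hR f hf _ (piK_contDiffOn n 1) z hz, piU, ContinuousLinearMap.integral_apply]
  · simp
  · exact pi_conv_integrable μ R hR f hf _
      ((piK_contDiffOn n 1).continuousOn_fderiv_of_isOpen (pi_isOpen_H _) le_rfl) z hz

lemma piU_fderiv2_apply (μ : Measure 𝔼) (R : ℝ) (hR : ∀ᵐ y ∂μ, ‖y‖ ≤ R) (f : 𝔼 → ℝ) (hf : Integrable f μ)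
    (z : ℝ × 𝔼) (hz : 0 < z.1) (v : ℝ × 𝔼) :
    fderiv ℝ (fderiv ℝ (piU μ f (piK n))) z v v = ∫ y, f y * fderiv ℝ (fderiv ℝ (piK n)) (z - (0, y)) v v ∂μ := by
  have hev : fderiv ℝ (piU μ f (piK n)) =ᶠ[𝓝 z] piU μ f (fderiv ℝ (piK n)) := by
    filter_upwards [(pi_isOpen_H _).mem_nhds hz] with x hx
    exact pi_conv_fderiv μ R hR f hf _ (piK_contDiffOn n 1) x hx
  have hc : ContDiffOn ℝ 1 (fderiv ℝ (piK n)) (PiH _) :=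
    (piK_contDiffOn n 2).fderiv_of_isOpen (pi_isOpen_H _) (by norm_num)
  have hItg := pi_conv_integrable μ R hR f hf _
      (hc.continuousOn_fderiv_of_isOpen (pi_isOpen_H _) le_rfl) z hz
  rw [hev.fderiv_eq, pi_conv_fderiv μ R hR f hf _ hc z hz, piU, ContinuousLinearMap.integral_apply hItg,
    ContinuousLinearMap.integral_apply]
  · simp
  · exact hItg.apply_continuousLinearMap v

lemma piU_heat (μ : Measure 𝔼) (R : ℝ) (hR : ∀ᵐ y ∂μ, ‖y‖ ≤ R) (f : 𝔼 → ℝ) (hf : Integrable f μ)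
    (z : ℝ × 𝔼) (hz : 0 < z.1) :
    fderiv ℝ (piU μ f (piK n)) z (1, 0) =
      ∑ j, fderiv ℝ (fderiv ℝ (piU μ f (piK n))) z (0, EuclideanSpace.single j 1) (0, EuclideanSpace.single j 1) := by
  simp_rw [piU_fderiv2_apply μ R hR f hf z hz, piU_fderiv_apply μ R hR f hf z hz]
  rw [← integral_finsetSum]
  · refine integral_congr_ae (Eventually.of_forall fun y => ?_)
    simp only
    rw [piK_heat n _ (by simpa using hz), Finset.mul_sum]
  · intro j _
    have hc : ContDiffOn ℝ 1 (fderiv ℝ (piK n)) (PiH _) :=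
      (piK_contDiffOn n 2).fderiv_of_isOpen (pi_isOpen_H _) (by norm_num)
    have hItg := pi_conv_integrable μ R hR f hf _
      (hc.continuousOn_fderiv_of_isOpen (pi_isOpen_H _) le_rfl) z hz
    exact (hItg.apply_continuousLinearMap _).apply_continuousLinearMap _

lemma piU_contDiffOn (μ : Measure 𝔼) (R : ℝ) (hR : ∀ᵐ y ∂μ, ‖y‖ ≤ R) (f : 𝔼 → ℝ) (hf : Integrable f μ) (N : ℕ) :
    ContDiffOn ℝ N (piU μ f (piK n)) (PiH _) :=
  pi_conv_contDiffOn μ R hR f hf N (piK n) (by exact_mod_cast piK_contDiffOn n ((N + 1 : ℕ) : ℕ∞))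
end

lemma piK_phi (n : ℕ) (t : ℝ) (ht : 0 < t) (x : EuclideanSpace ℝ (Fin n)) :
    ContDiff ℝ 1 (fun y => piK n (t, x - y)) ∧ (∃ L : ℝ≥0, LipschitzWith L (fun y => piK n (t, x - y))) ∧
    ∀ y e, fderiv ℝ (fun y => piK n (t, x - y)) y e = - fderiv ℝ (piK n) ((t, x) - (0, y)) (0, e) := by
  have hder : ∀ y, HasFDerivAt (fun y => piK n (t, x - y))
      ((fderiv ℝ (piK n) (t, x - y)).comp ((0 : EuclideanSpace ℝ (Fin n) →L[ℝ] ℝ).prod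
        (-ContinuousLinearMap.id ℝ (EuclideanSpace ℝ (Fin n))))) y := by
    intro y
    have h1 : HasFDerivAt (fun y => (t, x - y)) ((0 : EuclideanSpace ℝ (Fin n) →L[ℝ] ℝ).prod
        (-ContinuousLinearMap.id ℝ (EuclideanSpace ℝ (Fin n)))) y :=
      (hasFDerivAt_const t y).prodMk ((hasFDerivAt_id y).const_sub x)
    exact (piK_hasFDerivAt n (t, x - y) ht).differentiableAt.hasFDerivAt.comp y h1
  have hap : ∀ y e, fderiv ℝ (fun y => piK n (t, x - y)) y e = - fderiv ℝ (piK n) ((t, x) - (0, y)) (0, e) := by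
    intro y e
    rw [(hder y).fderiv]
    have : ((0 : ℝ), -e) = -((0 : ℝ), e) := by simp
    simp
    rw [this, map_neg]
  refine ⟨?_, ?_, hap⟩
  · have : ContDiffOn ℝ 1 (fun y => piK n (t, x - y)) Set.univ :=
      (piK_contDiffOn n 1).comp (t := PiH _) (by fun_prop) (fun y _ => ht)
    exact contDiffOn_univ.1 this
  · have hC : ∀ y, ‖fderiv ℝ (fun y => piK n (t, x - y)) y‖ ≤
        Real.exp (-(n / 2) * Real.log (4 * Real.pi * t)) * (1 / (2 * t)) * (1 + 4 * t) := by
      intro y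
      refine ContinuousLinearMap.opNorm_le_bound _ (by positivity) fun e => ?_
      rw [hap, piK_fderiv n _ (by simpa using ht), norm_neg]
      simp only [Prod.fst_sub, Prod.snd_sub, sub_zero, Prod.mk_sub_mk]
      rw [norm_mul, norm_mul, norm_neg, Real.norm_of_nonneg (piK_pos _ _).le,
        Real.norm_of_nonneg (by positivity : (0 : ℝ) ≤ 1 / (2 * t))]
      have h1 : piK n (t, x - y) = Real.exp (-(n / 2) * Real.log (4 * Real.pi * t)) *
          Real.exp (-(‖x - y‖ ^ 2 / (4 * t))) := by
        rw [piK, ← Real.exp_add]; rfl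
      have h2 : Real.exp (-(‖x - y‖ ^ 2 / (4 * t))) * ‖x - y‖ ≤ 1 + 4 * t := by
        rw [Real.exp_neg, inv_mul_le_iff₀ (Real.exp_pos _)]
        have h3 := Real.add_one_le_exp (‖x - y‖ ^ 2 / (4 * t))
        have h4 : 0 ≤ ‖x - y‖ := norm_nonneg _
        have h5 : ‖x - y‖ ^ 2 / (4 * t) * (4 * t) = ‖x - y‖ ^ 2 := by field_simp
        have h6 : 0 ≤ ‖x - y‖ ^ 2 / (4 * t) := by positivity
        nlinarith [mul_le_mul_of_nonneg_right h3 (by positivity : 0 ≤ 1 + 4 * t), sq_nonneg (‖x - y‖ - 1)]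
      have h7 := norm_inner_le_norm (𝕜 := ℝ) (x - y) e
      rw [h1]
      calc 1 / (2 * t) * (Real.exp (-(n / 2) * Real.log (4 * Real.pi * t)) *
          Real.exp (-(‖x - y‖ ^ 2 / (4 * t))) * ‖inner ℝ (x - y) e‖)
          ≤ 1 / (2 * t) * (Real.exp (-(n / 2) * Real.log (4 * Real.pi * t)) *
          Real.exp (-(‖x - y‖ ^ 2 / (4 * t))) * (‖x - y‖ * ‖e‖)) := by gcongr
        _ = Real.exp (-(n / 2) * Real.log (4 * Real.pi * t)) * (1 / (2 * t)) * (Real.exp (-(‖x - y‖ ^ 2 / (4 * t))) * ‖x - y‖) * ‖e‖ := by ring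
        _ ≤ _ := by gcongr
    refine ⟨⟨_, by positivity⟩, lipschitzWith_of_nnnorm_fderiv_le (fun y => (hder y).differentiableAt) (fun y => hC y)⟩

section
variable {n : ℕ}
local notation "𝔼" => EuclideanSpace ℝ (Fin n)

lemma piU_div (μ : Measure 𝔼) (R : ℝ) (hR : ∀ᵐ y ∂μ, ‖y‖ ≤ R) (V : 𝔼 → Fin n → ℝ) (a : 𝔼 → ℝ)
    (hV : ∀ j, Integrable (fun x => V x j) μ)
    (hdiv : ∀ φ : 𝔼 → ℝ, ContDiff ℝ 1 φ → (∃ L : ℝ≥0, LipschitzWith L φ) →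
        ∫ x, ∑ j, V x j * fderiv ℝ φ x (EuclideanSpace.single j 1) ∂μ = ∫ x, a x * φ x ∂μ)
    (z : ℝ × 𝔼) (hz : 0 < z.1) :
    ∑ j, fderiv ℝ (piU μ (fun x => V x j) (piK n)) z (0, EuclideanSpace.single j 1) = - piU μ a (piK n) z := by
  obtain ⟨t, x⟩ := z
  obtain ⟨h1, h2, h3⟩ := piK_phi n t hz x
  have h := hdiv _ h1 h2
  simp_rw [h3] at h
  simp_rw [piU_fderiv_apply μ R hR _ (hV _) (t, x) hz]
  rw [← integral_finsetSum]
  · simp_rw [mul_neg, Finset.sum_neg_distrib, integral_neg] at h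
    rw [piU]
    simp only [smul_eq_mul, Prod.mk_sub_mk, sub_zero] at h ⊢
    linarith
  · intro j _
    have hItg := pi_conv_integrable μ R hR _ (hV j) _
      ((piK_contDiffOn n 1).continuousOn_fderiv_of_isOpen (pi_isOpen_H _) le_rfl) (t, x) hz
    exact hItg.apply_continuousLinearMap _

end

lemma pi_ibp {F : Type} [NormedAddCommGroup F] [NormedSpace ℝ F] [FiniteDimensional ℝ F] [MeasurableSpace F] [BorelSpace F]
    (ν : Measure F) [ν.IsAddHaarMeasure] (f g : F → ℝ) (hf : ContDiff ℝ 2 f) (hg : ContDiff ℝ 2 g)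
    (hs : HasCompactSupport f) (e : F) :
    ∫ x, f x * fderiv ℝ (fun y => fderiv ℝ g y e) x e ∂ν = ∫ x, fderiv ℝ (fun y => fderiv ℝ f y e) x e * g x ∂ν := by
  have hfe : ContDiff ℝ 1 (fun y => fderiv ℝ f y e) := (hf.fderiv_right (m := 1) (by norm_num)).clm_apply contDiff_const
  have hge : ContDiff ℝ 1 (fun y => fderiv ℝ g y e) := (hg.fderiv_right (m := 1) (by norm_num)).clm_apply contDiff_const
  have hfee : Continuous (fun y => fderiv ℝ (fun y => fderiv ℝ f y e) y e) :=
    (hfe.continuous_fderiv (by norm_num)).clm_apply continuous_const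
  have hgee : Continuous (fun y => fderiv ℝ (fun y => fderiv ℝ g y e) y e) :=
    (hge.continuous_fderiv (by norm_num)).clm_apply continuous_const
  have hs1 : HasCompactSupport (fun y => fderiv ℝ f y e) := hs.fderiv_apply ℝ e
  have hs2 : HasCompactSupport (fun y => fderiv ℝ (fun y => fderiv ℝ f y e) y e) := hs1.fderiv_apply ℝ e
  rw [integral_mul_fderiv_eq_neg_fderiv_mul_of_integrable]
  · rw [integral_mul_fderiv_eq_neg_fderiv_mul_of_integrable, neg_neg]
    · exact (hfee.mul hg.continuous).integrable_of_hasCompactSupport hs2.mul_right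
    · exact (hfe.continuous.mul hge.continuous).integrable_of_hasCompactSupport hs1.mul_right
    · exact (hfe.continuous.mul hg.continuous).integrable_of_hasCompactSupport hs1.mul_right
    · exact fun x _ => (hfe.differentiable (by norm_num)) x
    · exact fun x _ => (hg.differentiable (by norm_num)) x
  · exact (hfe.continuous.mul hge.continuous).integrable_of_hasCompactSupport hs1.mul_right
  · exact (hf.continuous.mul hgee).integrable_of_hasCompactSupport hs.mul_right
  · exact (hf.continuous.mul hge.continuous).integrable_of_hasCompactSupport hs.mul_right
  · exact fun x _ => (hf.differentiable (by norm_num)) x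
  · exact fun x _ => (hge.differentiable (by norm_num)) x

lemma pi_bump {F : Type} [NormedAddCommGroup F] [InnerProductSpace ℝ F] [FiniteDimensional ℝ F] (c : F) (r1 r2 : ℝ)
    (h1 : 0 < r1) (h2 : r1 < r2) :
    ∃ (χ : F → ℝ), ContDiff ℝ 2 χ ∧ HasCompactSupport χ ∧ (∀ x, 0 ≤ χ x ∧ χ x ≤ 1) ∧
      (∀ x, ‖x - c‖ ≤ r1 → χ x = 1) ∧ (∀ x, r2 ≤ ‖x - c‖ → χ x = 0) := by
  let χ : ContDiffBump c := ⟨r1, r2, h1, h2⟩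
  refine ⟨χ, χ.contDiff, χ.hasCompactSupport, fun x => ⟨χ.nonneg, χ.le_one⟩, fun x hx => ?_, fun x hx => ?_⟩
  · exact χ.one_of_mem_closedBall (by simpa [dist_eq_norm] using hx)
  · exact χ.zero_of_le_dist (by simpa [dist_eq_norm] using hx)

lemma pi_bound1 {F G : Type} [NormedAddCommGroup F] [NormedSpace ℝ F] [NormedAddCommGroup G] [NormedSpace ℝ G]
    (χ : F → G) (hc : ContDiff ℝ 1 χ)
    (hs : HasCompactSupport χ) : ∃ M1 : ℝ, 0 ≤ M1 ∧ ∀ x, ‖fderiv ℝ χ x‖ ≤ M1 := by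
  have hs1 : HasCompactSupport (fderiv ℝ χ) := hs.fderiv ℝ
  have hc1 : Continuous (fderiv ℝ χ) := hc.continuous_fderiv (by norm_num)
  obtain ⟨M1, hM1⟩ := hs1.exists_bound_of_continuous hc1
  exact ⟨M1, (norm_nonneg (fderiv ℝ χ 0)).trans (hM1 0), hM1⟩

lemma pi_bil {F : Type} [NormedAddCommGroup F] [NormedSpace ℝ F] (B : F →L[ℝ] F →L[ℝ] ℝ) (M : ℝ) (hM : ‖B‖ ≤ M) (e : F) :
    |B e e| ≤ M * ‖e‖ ^ 2 := by
  refine ((B e).le_opNorm e).trans ?_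
  have h3 : ‖B e‖ ≤ M * ‖e‖ := (B.le_opNorm e).trans (mul_le_mul_of_nonneg_right hM (norm_nonneg _))
  rw [pow_two, ← mul_assoc]
  exact mul_le_mul_of_nonneg_right h3 (norm_nonneg _)

lemma pi_bound2 {F : Type} [NormedAddCommGroup F] [NormedSpace ℝ F] (χ : F → ℝ) (hc : ContDiff ℝ 2 χ)
    (hs : HasCompactSupport χ) : ∃ M1 M2 : ℝ, 0 ≤ M1 ∧ 0 ≤ M2 ∧ (∀ x e, |fderiv ℝ χ x e| ≤ M1 * ‖e‖) ∧
      ∀ x e, |fderiv ℝ (fderiv ℝ χ) x e e| ≤ M2 * ‖e‖ ^ 2 := by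
  obtain ⟨M1, h1, h2⟩ := pi_bound1 χ (hc.of_le (by norm_num)) hs
  obtain ⟨M2, h3, h4⟩ := pi_bound1 (fderiv ℝ χ) (hc.fderiv_right (by norm_num)) (hs.fderiv ℝ)
  exact ⟨M1, M2, h1, h3, fun x e => (fderiv ℝ χ x).le_of_opNorm_le (h2 x) e,
    fun x e => pi_bil _ _ (h4 x) e⟩

lemma pi_fderiv_apply2 {F : Type} [NormedAddCommGroup F] [NormedSpace ℝ F] (χ : F → ℝ) (hc : ContDiff ℝ 2 χ) (x e : F) :
    fderiv ℝ (fun y => fderiv ℝ χ y e) x e = fderiv ℝ (fderiv ℝ χ) x e e := by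
  have hc1 : ContDiff ℝ 1 (fderiv ℝ χ) := hc.fderiv_right (by norm_num)
  have h := ((hc1.differentiable (by norm_num)) x).hasFDerivAt.clm_apply (hasFDerivAt_const e x)
  rw [h.fderiv]
  simp

lemma pi_cutoff_scale {F : Type} [NormedAddCommGroup F] [NormedSpace ℝ F] (χ : F → ℝ) (hc : ContDiff ℝ 2 χ) (ρ : ℝ) (x e : F) :
    fderiv ℝ (fun y => fderiv ℝ (fun y => χ (ρ • y)) y e) x e = ρ ^ 2 * fderiv ℝ (fun y => fderiv ℝ χ y e) (ρ • x) e := by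
  have h1 : (fun y => fderiv ℝ (fun y => χ (ρ • y)) y e) = fun y => ρ • (fun y => fderiv ℝ χ y e) (ρ • y) := by
    ext y
    have := fderiv_comp_smul (𝕜 := ℝ) (f := χ) (c := ρ) (x := y)
    rw [this]; rfl
  rw [h1]
  have h2 : fderiv ℝ (fun y => ρ • (fun y => fderiv ℝ χ y e) (ρ • y)) x = ρ • fderiv ℝ (fun y => (fun y => fderiv ℝ χ y e) (ρ • y)) x := by
    have hc1 : ContDiff ℝ 1 (fderiv ℝ χ) := hc.fderiv_right (by norm_num)
    have hc2 : DifferentiableAt ℝ (fun y => fderiv ℝ χ y e) (ρ • x) :=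
      ((hc1.differentiable (by norm_num)) _).clm_apply (by fun_prop)
    have hd : DifferentiableAt ℝ (fun y => (fun y => fderiv ℝ χ y e) (ρ • y)) x :=
      DifferentiableAt.comp (g := fun y => fderiv ℝ χ y e) (f := fun y => ρ • y) x hc2 (by fun_prop)
    exact fderiv_fun_const_smul hd ρ
  have h3 := fderiv_comp_smul (𝕜 := ℝ) (f := fun y => fderiv ℝ χ y e) (c := ρ) (x := x)
  rw [h2, h3]
  simp
  ring

section
variable {F : Type} [NormedAddCommGroup F] [NormedSpace ℝ F]

lemma pi_slice_fderiv {G : Type} [NormedAddCommGroup G] [NormedSpace ℝ G] (Q : ℝ × F → G) (t : ℝ) (x : F)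
    (h : DifferentiableAt ℝ Q (t, x)) (v : F) :
    fderiv ℝ (fun x => Q (t, x)) x v = fderiv ℝ Q (t, x) (0, v) := by
  have h1 : HasFDerivAt (fun y : F => (t, y)) ((0 : F →L[ℝ] ℝ).prod (ContinuousLinearMap.id ℝ F)) x :=
    (hasFDerivAt_const t x).prodMk (hasFDerivAt_id x)
  have h2 := HasFDerivAt.comp (g := Q) x h.hasFDerivAt h1
  have h3 := h2.fderiv
  have h4 : fderiv ℝ (fun x => Q (t, x)) x = _ := h3
  rw [h4]
  simp

lemma pi_slice_contDiff (Q : ℝ × F → ℝ) (hQ : ContDiffOn ℝ 2 Q (PiH F)) (t : ℝ) (ht : 0 < t) :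
    ContDiff ℝ 2 (fun x => Q (t, x)) := by
  have : ContDiffOn ℝ 2 (fun x => Q (t, x)) Set.univ :=
    hQ.comp (t := PiH F) (by fun_prop) (fun y _ => ht)
  exact contDiffOn_univ.1 this

lemma pi_slice_fderiv2 (Q : ℝ × F → ℝ) (hQ : ContDiffOn ℝ 2 Q (PiH F)) (t : ℝ) (ht : 0 < t) (x e : F) :
    fderiv ℝ (fun y => fderiv ℝ (fun x => Q (t, x)) y e) x e = fderiv ℝ (fderiv ℝ Q) (t, x) (0, e) (0, e) := by
  have ho := pi_isOpen_H F
  have h1 : (fun y => fderiv ℝ (fun x => Q (t, x)) y e) = fun y => (fun z => fderiv ℝ Q z (0, e)) (t, y) := by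
    ext y
    exact pi_slice_fderiv Q t y ((hQ.differentiableOn (by norm_num)).differentiableAt (ho.mem_nhds ht)) e
  have hc1 : ContDiffOn ℝ 1 (fderiv ℝ Q) (PiH F) := hQ.fderiv_of_isOpen ho (by norm_num)
  have h2 : DifferentiableAt ℝ (fderiv ℝ Q) (t, x) :=
    (hc1.differentiableOn (by norm_num)).differentiableAt (ho.mem_nhds ht)
  have h3 : HasFDerivAt (fun z => fderiv ℝ Q z (0, e)) _ (t, x) :=
    h2.hasFDerivAt.clm_apply (hasFDerivAt_const ((0 : ℝ), e) (t, x))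
  rw [h1, pi_slice_fderiv (fun z => fderiv ℝ Q z (0, e)) t x h3.differentiableAt e, h3.fderiv]
  simp

variable [FiniteDimensional ℝ F] [MeasurableSpace F] [BorelSpace F]

lemma pi_slice_deriv (ν : Measure F) [IsFiniteMeasureOnCompacts ν] (Q : ℝ × F → ℝ) (hQ : ContDiffOn ℝ 2 Q (PiH F))
    (χ : F → ℝ) (hχ : Continuous χ) (hs : HasCompactSupport χ) (t : ℝ) (ht : 0 < t) :
    HasDerivAt (fun t => ∫ x, χ x * Q (t, x) ∂ν) (∫ x, χ x * fderiv ℝ Q (t, x) (1, 0) ∂ν) t := by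
  have ho := pi_isOpen_H F
  have hc1 : ContinuousOn (fderiv ℝ Q) (PiH F) := hQ.continuousOn_fderiv_of_isOpen ho (by norm_num)
  have hc2 : ContinuousOn (fun z => fderiv ℝ Q z (1, 0)) (PiH F) := hc1.clm_apply continuousOn_const
  have hcs : ∀ s, 0 < s → Continuous (fun x : F => Q (s, x)) := fun s hs => (pi_slice_contDiff Q hQ s hs).continuous
  have hcd : ∀ s, 0 < s → Continuous (fun x : F => fderiv ℝ Q (s, x) (1, 0)) := fun s hs =>
    hc2.comp_continuous (by fun_prop) (fun _ => hs)
  have hK : IsCompact (Set.Icc (t / 2) (2 * t) ×ˢ tsupport χ) := isCompact_Icc.prod hs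
  obtain ⟨B, hB⟩ := hK.exists_bound_of_continuousOn (f := fun z => fderiv ℝ Q z (1, 0)) (hc2.mono (by
    rintro ⟨s, x⟩ ⟨h1, -⟩
    have : t / 2 ≤ s := h1.1
    show 0 < s
    linarith))
  have hnb : Set.Ioo (t / 2) (2 * t) ∈ 𝓝 t := Ioo_mem_nhds (by linarith) (by linarith)
  refine (hasDerivAt_integral_of_dominated_loc_of_deriv_le (F := fun t x => χ x * Q (t, x))
    (F' := fun t x => χ x * fderiv ℝ Q (t, x) (1, 0)) (bound := fun x => ‖χ x‖ * B) hnb ?_ ?_ ?_ ?_ ?_ ?_).2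
  · filter_upwards [hnb] with s hs
    exact (hχ.mul (hcs s (by linarith [hs.1]))).aestronglyMeasurable
  · exact (hχ.mul (hcs t ht)).integrable_of_hasCompactSupport hs.mul_right
  · exact (hχ.mul (hcd t ht)).aestronglyMeasurable
  · refine Eventually.of_forall fun x s hs' => ?_
    rw [norm_mul]
    by_cases hx : x ∈ tsupport χ
    · exact mul_le_mul_of_nonneg_left (hB (s, x) ⟨⟨hs'.1.le, hs'.2.le⟩, hx⟩) (norm_nonneg _)
    · simp [image_eq_zero_of_notMem_tsupport hx]
  · exact (hχ.norm.integrable_of_hasCompactSupport hs.norm).mul_const B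
  · refine Eventually.of_forall fun x s hs' => ?_
    have hs0 : 0 < s := by linarith [hs'.1]
    have h1 : HasFDerivAt Q (fderiv ℝ Q (s, x)) (s, x) :=
      ((hQ.differentiableOn (by norm_num)).differentiableAt (ho.mem_nhds hs0)).hasFDerivAt
    have h2 : HasDerivAt (fun s : ℝ => (s, x)) ((1 : ℝ), (0 : F)) s := (hasDerivAt_id s).prodMk (hasDerivAt_const s x)
    exact (HasFDerivAt.comp_hasDerivAt s h1 h2).const_mul (χ x)

end

section
variable {n : ℕ}
local notation "𝔼" => EuclideanSpace ℝ (Fin n)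

lemma pi_mono_cut (Q : ℝ × 𝔼 → ℝ) (hQ : ContDiffOn ℝ 2 Q (PiH 𝔼))
    (hsub : ∀ z : ℝ × 𝔼, 0 < z.1 → ∑ j, fderiv ℝ (fderiv ℝ Q) z (0, EuclideanSpace.single j 1) (0, EuclideanSpace.single j 1)
      ≤ fderiv ℝ Q z (1, 0)) (δ T B : ℝ) (hδ : 0 < δ) (hT : δ ≤ T)
    (hItg : ∀ t, δ ≤ t → t ≤ T → Integrable (fun x => Q (t, x)) ∧ ∫ x, |Q (t, x)| ≤ B)
    (χ : 𝔼 → ℝ) (hχ : ContDiff ℝ 2 χ) (hs : HasCompactSupport χ) (h0 : ∀ x, 0 ≤ χ x) (M : ℝ) (hM : 0 ≤ M)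
    (hM2 : ∀ x (j : Fin n), |fderiv ℝ (fun y => fderiv ℝ χ y (EuclideanSpace.single j 1)) x (EuclideanSpace.single j 1)| ≤ M) :
    ∫ x, χ x * Q (δ, x) ≤ (∫ x, χ x * Q (T, x)) + n * M * B * (T - δ) := by
  have hd := fun t (ht : 0 < t) => pi_slice_deriv volume Q hQ χ hχ.continuous hs t ht
  have hder : ∀ t, δ ≤ t → t ≤ T → -(n * M * B) ≤ ∫ x, χ x * fderiv ℝ Q (t, x) (1, 0) := by
    intro t h1 h2
    have ht : 0 < t := by linarith
    have hsl := pi_slice_contDiff Q hQ t ht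
    have hcc : ∀ j : Fin n, Continuous (fun x => fderiv ℝ (fun y => fderiv ℝ (fun x => Q (t, x)) y (EuclideanSpace.single j 1)) x (EuclideanSpace.single j 1)) := by
      intro j
      have hge : ContDiff ℝ 1 (fun y => fderiv ℝ (fun x => Q (t, x)) y (EuclideanSpace.single j (1 : ℝ))) :=
        (hsl.fderiv_right (m := 1) (by norm_num)).clm_apply contDiff_const
      exact (hge.continuous_fderiv (by norm_num)).clm_apply continuous_const
    have hcd : Continuous (fun x : 𝔼 => fderiv ℝ Q (t, x) (1, 0)) := by
      have hc1 : ContinuousOn (fderiv ℝ Q) (PiH 𝔼) := hQ.continuousOn_fderiv_of_isOpen (pi_isOpen_H _) (by norm_num)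
      have hc2 : ContinuousOn (fun z => fderiv ℝ Q z (1, 0)) (PiH 𝔼) := hc1.clm_apply continuousOn_const
      exact hc2.comp_continuous (by fun_prop) (fun _ => ht)
    have hI : ∀ j : Fin n, Integrable (fun x => χ x * fderiv ℝ (fun y => fderiv ℝ (fun x => Q (t, x)) y (EuclideanSpace.single j 1)) x (EuclideanSpace.single j 1)) :=
      fun j => (hχ.continuous.mul (hcc j)).integrable_of_hasCompactSupport hs.mul_right
    have hone : ∀ j : Fin n, -(M * B) ≤ ∫ x, χ x * fderiv ℝ (fun y => fderiv ℝ (fun x => Q (t, x)) y (EuclideanSpace.single j 1)) x (EuclideanSpace.single j 1) := by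
      intro j
      rw [pi_ibp volume χ _ hχ hsl hs]
      have h3 := norm_integral_le_of_norm_le (μ := volume) ((hItg t h1 h2).1.abs.const_mul M) (f := fun x =>
        fderiv ℝ (fun y => fderiv ℝ χ y (EuclideanSpace.single j 1)) x (EuclideanSpace.single j 1) * Q (t, x))
        (Eventually.of_forall fun x => by
          rw [norm_mul]
          exact mul_le_mul_of_nonneg_right (hM2 x j) (abs_nonneg _))
      rw [integral_const_mul, Real.norm_eq_abs] at h3
      have h4 := (abs_le.1 h3).1
      have h5 := mul_le_mul_of_nonneg_left (hItg t h1 h2).2 hM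
      linarith
    calc -(n * M * B) = ∑ j : Fin n, -(M * B) := by simp; ring
      _ ≤ ∑ j : Fin n, ∫ x, χ x * fderiv ℝ (fun y => fderiv ℝ (fun x => Q (t, x)) y (EuclideanSpace.single j 1)) x (EuclideanSpace.single j 1) :=
        Finset.sum_le_sum fun j _ => hone j
      _ = ∫ x, ∑ j : Fin n, χ x * fderiv ℝ (fun y => fderiv ℝ (fun x => Q (t, x)) y (EuclideanSpace.single j 1)) x (EuclideanSpace.single j 1) := by
        rw [integral_finsetSum _ fun j _ => hI j]
      _ ≤ _ := by
        refine integral_mono (integrable_finsetSum _ fun j _ => hI j)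
          ((hχ.continuous.mul hcd).integrable_of_hasCompactSupport hs.mul_right) fun x => ?_
        simp only
        rw [← Finset.mul_sum]
        refine mul_le_mul_of_nonneg_left ?_ (h0 x)
        simp_rw [pi_slice_fderiv2 Q hQ t ht]
        exact hsub (t, x) ht
  have hmono : MonotoneOn (fun t => (∫ x, χ x * Q (t, x)) + n * M * B * t) (Set.Icc δ T) := by
    have hd2 : ∀ t, 0 < t → HasDerivAt (fun t => (∫ x, χ x * Q (t, x)) + n * M * B * t)
        ((∫ x, χ x * fderiv ℝ Q (t, x) (1, 0)) + n * M * B * 1) t := fun t ht =>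
      (hd t ht).add ((hasDerivAt_id t).const_mul _)
    refine monotoneOn_of_deriv_nonneg (convex_Icc _ _) (fun t ht => ?_) (fun t ht => ?_) (fun t ht => ?_)
    · exact (hd2 t (by linarith [ht.1])).continuousAt.continuousWithinAt
    · rw [interior_Icc] at ht
      exact (hd2 t (by linarith [ht.1])).differentiableAt.differentiableWithinAt
    · rw [interior_Icc] at ht
      rw [(hd2 t (by linarith [ht.1])).deriv]
      linarith [hder t ht.1.le ht.2.le]
  have := hmono (Set.left_mem_Icc.2 hT) (Set.right_mem_Icc.2 hT) hT
  simp only at this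
  linarith

lemma pi_cut_tendsto (χ : 𝔼 → ℝ) (hχ : Continuous χ) (hb : ∀ x, 0 ≤ χ x ∧ χ x ≤ 1) (h1 : χ 0 = 1) (q : 𝔼 → ℝ) (hq : Integrable q) :
    Tendsto (fun k : ℕ => ∫ x, χ ((1 / ((k : ℝ) + 1)) • x) * q x) atTop (𝓝 (∫ x, q x)) := by
  refine tendsto_integral_of_dominated_convergence (fun x => |q x|) (fun k => ?_) hq.abs (fun k => ?_) ?_
  · exact (Continuous.aestronglyMeasurable (by fun_prop)).mul hq.aestronglyMeasurable
  · refine Eventually.of_forall fun x => ?_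
    rw [norm_mul, Real.norm_eq_abs, Real.norm_eq_abs, abs_of_nonneg (hb _).1]
    exact mul_le_of_le_one_left (abs_nonneg _) (hb _).2
  · refine Eventually.of_forall fun x => ?_
    have h2 : Tendsto (fun k : ℕ => (1 / ((k : ℝ) + 1)) • x) atTop (𝓝 ((0 : ℝ) • x)) :=
      tendsto_one_div_add_atTop_nhds_zero_nat.smul_const x
    rw [zero_smul] at h2
    have h3 := (hχ.tendsto 0).comp h2
    rw [h1] at h3
    simpa using h3.mul_const (q x)

lemma pi_mono (Q : ℝ × 𝔼 → ℝ) (hQ : ContDiffOn ℝ 2 Q (PiH 𝔼))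
    (hsub : ∀ z : ℝ × 𝔼, 0 < z.1 → ∑ j, fderiv ℝ (fderiv ℝ Q) z (0, EuclideanSpace.single j 1) (0, EuclideanSpace.single j 1)
      ≤ fderiv ℝ Q z (1, 0)) (δ T B : ℝ) (hδ : 0 < δ) (hT : δ ≤ T)
    (hItg : ∀ t, δ ≤ t → t ≤ T → Integrable (fun x => Q (t, x)) ∧ ∫ x, |Q (t, x)| ≤ B) :
    ∫ x, Q (δ, x) ≤ ∫ x, Q (T, x) := by
  obtain ⟨χ, hχ, hs, hb, h1, -⟩ := pi_bump (0 : 𝔼) 1 2 one_pos one_lt_two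
  obtain ⟨-, M2, -, hM2, -, hD⟩ := pi_bound2 χ hχ hs
  have hχ0 : χ 0 = 1 := h1 0 (by simp)
  have key : ∀ k : ℕ, ∫ x, χ ((1 / ((k : ℝ) + 1)) • x) * Q (δ, x) ≤
      (∫ x, χ ((1 / ((k : ℝ) + 1)) • x) * Q (T, x)) + n * ((1 / ((k : ℝ) + 1)) ^ 2 * M2) * B * (T - δ) := by
    intro k
    have hk : (0 : ℝ) < 1 / ((k : ℝ) + 1) := by positivity
    refine pi_mono_cut Q hQ hsub δ T B hδ hT hItg (fun x => χ ((1 / ((k : ℝ) + 1)) • x)) ?_ ?_ (fun x => (hb _).1) _ (by positivity) ?_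
    · exact hχ.comp (by fun_prop)
    · exact hs.comp_smul hk.ne'
    · intro x j
      rw [pi_cutoff_scale χ hχ, pi_fderiv_apply2 χ hχ, abs_mul, abs_of_nonneg (sq_nonneg _)]
      refine mul_le_mul_of_nonneg_left ?_ (sq_nonneg _)
      refine (hD _ _).trans (by simp)
  have hlim : Tendsto (fun k : ℕ => (∫ x, χ ((1 / ((k : ℝ) + 1)) • x) * Q (T, x)) + n * ((1 / ((k : ℝ) + 1)) ^ 2 * M2) * B * (T - δ))
      atTop (𝓝 ((∫ x, Q (T, x)) + n * (0 ^ 2 * M2) * B * (T - δ))) := by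
    refine (pi_cut_tendsto χ hχ.continuous hb hχ0 _ (hItg T hT le_rfl).1).add ?_
    exact ((((tendsto_one_div_add_atTop_nhds_zero_nat.pow 2).mul_const M2).const_mul _).mul_const _).mul_const _
  have := le_of_tendsto_of_tendsto' (pi_cut_tendsto χ hχ.continuous hb hχ0 _ (hItg δ le_rfl hT).1) hlim key
  simpa using this
end

/-- the gauge u β(u) -/
noncomputable def piB (κ u : ℝ) : ℝ := u * (1 - Real.exp (-κ * Real.log (1 + u)))

/-- first derivative of the gauge -/
noncomputable def piB1 (κ u : ℝ) : ℝ :=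
  1 - Real.exp (-κ * Real.log (1 + u)) + κ * (u / (1 + u)) * Real.exp (-κ * Real.log (1 + u))

lemma piE_deriv (κ u : ℝ) (hu : 0 < u) : HasDerivAt (fun u => Real.exp (-κ * Real.log (1 + u)))
    (Real.exp (-κ * Real.log (1 + u)) * (-κ * (1 / (1 + u)))) u := by
  have h1 : HasDerivAt (fun u : ℝ => 1 + u) 1 u := (hasDerivAt_id u).const_add 1
  exact ((h1.log (by positivity)).const_mul (-κ)).exp

lemma piB_deriv (κ u : ℝ) (hu : 0 < u) : HasDerivAt (piB κ) (piB1 κ u) u := by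
  have := (hasDerivAt_id u).mul ((piE_deriv κ u hu).const_sub 1)
  convert! this using 1
  simp [piB1]
  ring

lemma piB1_deriv (κ u : ℝ) (hu : 0 < u) : HasDerivAt (piB1 κ)
    (κ * Real.exp (-κ * Real.log (1 + u)) * (1 / (1 + u) + 1 / (1 + u) ^ 2 - κ * (u / (1 + u) ^ 2))) u := by
  have h1 : HasDerivAt (fun u : ℝ => 1 + u) 1 u := (hasDerivAt_id u).const_add 1
  have h2 := (hasDerivAt_id u).div h1 (by positivity)
  have h3 := ((piE_deriv κ u hu).const_sub 1).add ((h2.const_mul κ).mul (piE_deriv κ u hu))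
  convert! h3 using 1
  simp
  field_simp
  ring

lemma piB_bounds (κ u : ℝ) (hu : 0 < u) (hκ : 0 < κ) :
    0 ≤ piB κ u ∧ piB κ u ≤ u ∧ |piB1 κ u - piB κ u / u| ≤ κ ∧
    u * (κ * Real.exp (-κ * Real.log (1 + u)) * (1 / (1 + u) + 1 / (1 + u) ^ 2 - κ * (u / (1 + u) ^ 2))) ≤ 2 * κ := by
  have hl : 0 ≤ Real.log (1 + u) := Real.log_nonneg (by linarith)
  have he : Real.exp (-κ * Real.log (1 + u)) ≤ 1 := by
    rw [Real.exp_le_one_iff]; nlinarith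
  have he0 := Real.exp_pos (-κ * Real.log (1 + u))
  set e := Real.exp (-κ * Real.log (1 + u)) with hE
  have hq : u / (1 + u) ≤ 1 := by rw [div_le_one (by positivity)]; linarith
  have hq0 : 0 ≤ u / (1 + u) := by positivity
  refine ⟨?_, ?_, ?_, ?_⟩
  · unfold piB; exact mul_nonneg hu.le (by rw [← hE]; linarith)
  · unfold piB; rw [← hE]; nlinarith
  · have : piB1 κ u - piB κ u / u = κ * (u / (1 + u)) * e := by
      unfold piB1 piB; rw [← hE]; field_simp; ring
    rw [this, abs_of_nonneg (by positivity)]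
    calc κ * (u / (1 + u)) * e ≤ κ * 1 * 1 := by gcongr
      _ = κ := by ring
  · have h1 : u * (κ * e * (1 / (1 + u) + 1 / (1 + u) ^ 2 - κ * (u / (1 + u) ^ 2))) ≤
      κ * e * (u / (1 + u) + u / (1 + u) * (1 / (1 + u))) := by
      have : κ * e * (u / (1 + u) + u / (1 + u) * (1 / (1 + u))) - u * (κ * e * (1 / (1 + u) + 1 / (1 + u) ^ 2 - κ * (u / (1 + u) ^ 2)))
        = κ * e * u * κ * (u / (1 + u) ^ 2) := by field_simp; ring
      have h2 : 0 ≤ κ * e * u * κ * (u / (1 + u) ^ 2) := by positivity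
      linarith
    refine h1.trans ?_
    have h3 : 1 / (1 + u) ≤ 1 := by rw [div_le_one (by positivity)]; linarith
    calc κ * e * (u / (1 + u) + u / (1 + u) * (1 / (1 + u))) ≤ κ * 1 * (1 + 1 * 1) := by gcongr
      _ = 2 * κ := by ring

lemma pi_pos_ev (u a : ℝ) (hu : 0 < u) : ∀ᶠ s in 𝓝 (0 : ℝ), 0 < u + s * a := by
  have : Tendsto (fun s : ℝ => u + s * a) (𝓝 0) (𝓝 (u + 0 * a)) := by
    apply Continuous.tendsto; fun_prop
  rw [zero_mul, add_zero] at this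
  exact this.eventually (lt_mem_nhds hu)

section
variable {W : Type} [NormedAddCommGroup W] [InnerProductSpace ℝ W]

lemma pi_du (u a s : ℝ) : HasDerivAt (fun s : ℝ => u + s * a) a s := by
  have := ((hasDerivAt_id s).mul_const a).const_add u
  rw [one_mul] at this
  exact this

lemma pi_dw (w b : W) (s : ℝ) : HasDerivAt (fun s : ℝ => w + s • b) b s := by
  have := ((hasDerivAt_id s).smul_const b).const_add w
  rw [one_smul] at this
  exact this

lemma pi_F1_line (η : W → ℝ) (hη : ContDiff ℝ 2 η) (κ u a : ℝ) (hu : 0 < u) (w b : W) :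
    ∃ f1 : ℝ → ℝ, (∀ᶠ s in 𝓝 (0 : ℝ), HasDerivAt (fun s => piB κ (u + s * a) * η ((u + s * a)⁻¹ • (w + s • b))) (f1 s) s) ∧
      HasDerivAt f1 ((κ * Real.exp (-κ * Real.log (1 + u)) * (1 / (1 + u) + 1 / (1 + u) ^ 2 - κ * (u / (1 + u) ^ 2))) * a ^ 2 * η (u⁻¹ • w)
        + 2 * a * (piB1 κ u - piB κ u / u) * fderiv ℝ η (u⁻¹ • w) (u⁻¹ • (b - a • u⁻¹ • w))
        + piB κ u * fderiv ℝ (fderiv ℝ η) (u⁻¹ • w) (u⁻¹ • (b - a • u⁻¹ • w)) (u⁻¹ • (b - a • u⁻¹ • w))) 0 := by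
  set uu : ℝ → ℝ := fun s => u + s * a with huu
  set WW : ℝ → W := fun s => (uu s)⁻¹ • (w + s • b) with hWW
  set om : ℝ → W := fun s => (uu s)⁻¹ • (b - a • WW s) with hom
  have du : ∀ s, HasDerivAt uu a s := pi_du u a
  have dw : ∀ s : ℝ, HasDerivAt (fun s : ℝ => w + s • b) b s := pi_dw w b
  have dW : ∀ s, 0 < uu s → HasDerivAt WW (om s) s := by
    intro s hs
    have := ((du s).inv hs.ne').smul (dw s)
    convert! this using 1
    simp only [hom, hWW, Pi.inv_apply]
    rw [smul_sub, sub_eq_add_neg]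
    congr 1
    rw [smul_smul, smul_smul, ← neg_smul]
    congr 1
    field_simp
  have dom : ∀ s, 0 < uu s → HasDerivAt om ((-2 * a / uu s) • om s) s := by
    intro s hs
    have := ((du s).inv hs.ne').smul (((dW s hs).const_smul a).const_sub b)
    convert! this using 1
    have e2 : b - a • WW s = (uu s) • om s := by
      simp only [hom]; rw [smul_inv_smul₀ hs.ne']
    simp only [Pi.inv_apply, Pi.smul_apply]
    rw [e2]
    generalize om s = o
    rw [smul_smul, smul_neg, smul_smul, ← neg_smul, ← add_smul]
    congr 1
    field_simp
    ring
  have hc1 : ContDiff ℝ 1 (fderiv ℝ η) := hη.fderiv_right (by norm_num)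
  have dη : ∀ s, 0 < uu s → HasDerivAt (fun s => η (WW s)) (fderiv ℝ η (WW s) (om s)) s := fun s hs =>
    ((hη.differentiable (by norm_num)) (WW s)).hasFDerivAt.comp_hasDerivAt s (dW s hs)
  have dη2 : ∀ s, 0 < uu s → HasDerivAt (fun s => fderiv ℝ η (WW s)) (fderiv ℝ (fderiv ℝ η) (WW s) (om s)) s := fun s hs =>
    ((hc1.differentiable (by norm_num)) (WW s)).hasFDerivAt.comp_hasDerivAt s (dW s hs)
  have dB : ∀ s, 0 < uu s → HasDerivAt (fun s => piB κ (uu s)) (piB1 κ (uu s) * a) s := fun s hs =>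
    (piB_deriv κ (uu s) hs).comp s (du s)
  have dB1 := fun s (hs : 0 < uu s) => (piB1_deriv κ (uu s) hs).comp s (du s)
  refine ⟨fun s => piB1 κ (uu s) * a * η (WW s) + piB κ (uu s) * fderiv ℝ η (WW s) (om s), ?_, ?_⟩
  · filter_upwards [pi_pos_ev u a hu] with s hs
    exact (dB s hs).mul (dη s hs)
  · have h0 : 0 < uu 0 := by simpa [huu] using hu
    have e0 : uu 0 = u := by simp [huu]
    have eW : WW 0 = u⁻¹ • w := by simp [hWW, e0]
    have eo : om 0 = u⁻¹ • (b - a • u⁻¹ • w) := by simp only [hom, eW, e0]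
    have h1 := (((dB1 0 h0).mul_const a).mul (dη 0 h0)).add ((dB 0 h0).mul ((dη2 0 h0).clm_apply (dom 0 h0)))
    rw [e0, eW, eo] at h1
    convert! h1 using 1
    simp only [Function.comp, e0, eW, eo, map_smul, smul_eq_mul]
    field_simp
    ring

lemma pi_F2_line (u a : ℝ) (hu : 0 < u) (w b : W) :
    ∃ (f1 : ℝ → ℝ) (d : ℝ), (∀ᶠ s in 𝓝 (0 : ℝ), HasDerivAt (fun s => Real.sqrt ((u + s * a) ^ 2 + ‖w + s • b‖ ^ 2)) (f1 s) s) ∧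
      HasDerivAt f1 d 0 ∧ ‖u • b - a • w‖ ^ 2 / (Real.sqrt (u ^ 2 + ‖w‖ ^ 2)) ^ 3 ≤ d := by
  set q : ℝ → ℝ := fun s => (u + s * a) ^ 2 + ‖w + s • b‖ ^ 2 with hq
  set q1 : ℝ → ℝ := fun s => 2 * (u + s * a) * a + 2 * inner ℝ (w + s • b) b with hq1
  have du := pi_du u a
  have dw := pi_dw w b
  have dq : ∀ s, HasDerivAt q (q1 s) s := by
    intro s
    have := ((du s).pow 2).add (dw s).norm_sq
    convert! this using 1
    simp [hq1]
  have dq1 : ∀ s, HasDerivAt q1 (2 * a * a + 2 * inner ℝ b b) s := by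
    intro s
    have := (((du s).const_mul 2).mul_const a).add (((dw s).inner ℝ (hasDerivAt_const s b)).const_mul 2)
    convert! this using 1
    simp
  have hpos : 0 < q 0 := by simp [hq]; positivity
  have hq0 : q 0 = u ^ 2 + ‖w‖ ^ 2 := by simp [hq]
  have hq10 : q1 0 = 2 * (u * a + inner ℝ w b) := by simp [hq1]; ring
  have dsq : ∀ s, 0 < q s → HasDerivAt (fun s => Real.sqrt (q s)) (q1 s / (2 * Real.sqrt (q s))) s := fun s hs =>
    (dq s).sqrt hs.ne'
  set N := Real.sqrt (u ^ 2 + ‖w‖ ^ 2) with hN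
  have hN0 : 0 < N := Real.sqrt_pos.2 (hq0 ▸ hpos)
  have hN2 : N ^ 2 = u ^ 2 + ‖w‖ ^ 2 := Real.sq_sqrt (by positivity)
  refine ⟨fun s => q1 s / (2 * Real.sqrt (q s)),
    ((2 * a * a + 2 * inner ℝ b b) * (2 * N) - q1 0 * (2 * (q1 0 / (2 * N)))) / (2 * N) ^ 2, ?_, ?_, ?_⟩
  · have : ∀ᶠ s in 𝓝 (0 : ℝ), 0 < q s := (dq 0).continuousAt.eventually (lt_mem_nhds hpos)
    filter_upwards [this] with s hs
    exact dsq s hs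
  · have := (dq1 0).div ((dsq 0 hpos).const_mul 2) (by rw [hq0]; positivity)
    rw [hq0] at this
    convert! this using 1
  · rw [hq10, real_inner_self_eq_norm_sq]
    have e : ((2 * a * a + 2 * ‖b‖ ^ 2) * (2 * N) - 2 * (u * a + inner ℝ w b) * (2 * (2 * (u * a + inner ℝ w b) / (2 * N)))) / (2 * N) ^ 2
      = ((a ^ 2 + ‖b‖ ^ 2) * N ^ 2 - (u * a + inner ℝ w b) ^ 2) / N ^ 3 := by
      field_simp
    rw [e]
    gcongr
    rw [hN2, norm_sub_sq_real, norm_smul, norm_smul, inner_smul_left, inner_smul_right, mul_pow, mul_pow]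
    simp only [Real.norm_eq_abs, sq_abs, conj_trivial]
    have hcs : (inner ℝ w b : ℝ) ^ 2 ≤ ‖w‖ ^ 2 * ‖b‖ ^ 2 := by
      rw [← mul_pow]; exact sq_le_sq' (by have := neg_le_of_abs_le (abs_real_inner_le_norm w b); linarith) (real_inner_le_norm w b)
    rw [real_inner_comm w b]
    nlinarith

/-- The comparison function. -/
noncomputable def piF (η : W → ℝ) (κ c : ℝ) (z : ℝ × W) : ℝ :=
  piB κ z.1 * η (z.1⁻¹ • z.2) - c * Real.sqrt (z.1 ^ 2 + ‖z.2‖ ^ 2)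

lemma piF_contDiffAt (η : W → ℝ) (hη : ContDiff ℝ 2 η) (κ c : ℝ) (z : ℝ × W) (hz : 0 < z.1) :
    ContDiffAt ℝ 2 (piF η κ c) z := by
  unfold piF piB
  have h1 : ContDiffAt ℝ 2 (fun z : ℝ × W => Real.log (1 + z.1)) z := ContDiffAt.log (by fun_prop) (by positivity)
  have h2 : ContDiffAt ℝ 2 (fun z : ℝ × W => (z.1)⁻¹) z := ContDiffAt.inv (by fun_prop) hz.ne'
  have h3 : ContDiffAt ℝ 2 (fun z : ℝ × W => η (z.1⁻¹ • z.2)) z :=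
    hη.contDiffAt.comp z (h2.smul contDiffAt_snd)
  have h4 : ContDiffAt ℝ 2 (fun z : ℝ × W => z.1 ^ 2 + ‖z.2‖ ^ 2) z :=
    (contDiffAt_fst.pow 2).add (contDiffAt_snd.norm_sq ℝ)
  have h5 : ContDiffAt ℝ 2 (fun z : ℝ × W => Real.sqrt (z.1 ^ 2 + ‖z.2‖ ^ 2)) z := h4.sqrt (by positivity)
  exact ((contDiffAt_fst.mul (contDiffAt_const.sub (contDiffAt_const.mul h1).exp)).mul h3).sub (contDiffAt_const.mul h5)

lemma piF_hess (η : W → ℝ) (hη : ContDiff ℝ 2 η) (hη1 : ∀ x, 0 ≤ η x ∧ η x ≤ 1) (c0 : W)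
    (hη0 : ∀ x, 1 / 2 ≤ ‖x - c0‖ → η x = 0) (M1 M2 : ℝ) (hM1 : 0 ≤ M1) (hM2 : 0 ≤ M2)
    (hD1 : ∀ x e, |fderiv ℝ η x e| ≤ M1 * ‖e‖) (hD2 : ∀ x e, |fderiv ℝ (fderiv ℝ η) x e e| ≤ M2 * ‖e‖ ^ 2)
    (κ c : ℝ) (hκ : 0 < κ) (hκ1 : κ ≤ 1) (hc : 0 ≤ c) (u a : ℝ) (hu : 0 < u) (w b : W) :
    (‖u⁻¹ • w - c0‖ ≤ 1 / 2 → fderiv ℝ (fderiv ℝ (piF η κ c)) (u, w) (a, b) (a, b) ≤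
      u * (3 * κ * (a / u) ^ 2 + (M1 ^ 2 + M2 - c / (1 + ‖c0‖ + 1 / 2) ^ 3) * ‖u⁻¹ • (b - a • u⁻¹ • w)‖ ^ 2)) ∧
    (1 / 2 < ‖u⁻¹ • w - c0‖ → fderiv ℝ (fderiv ℝ (piF η κ c)) (u, w) (a, b) (a, b) ≤ 0) := by
  obtain ⟨f1, hf1, hf1d⟩ := pi_F1_line η hη κ u a hu w b
  obtain ⟨g1, d, hg1, hg1d, hd⟩ := pi_F2_line u a hu w b
  have hhess := pi_line (piF η κ c) (u, w) (a, b) (piF_contDiffAt η hη κ c (u, w) hu) (fun s => f1 s - c * g1 s) _ (by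
    filter_upwards [hf1, hg1] with s h1 h2
    have := h1.sub (h2.const_mul c)
    exact this) (hf1d.sub (hg1d.const_mul c))
  obtain ⟨b0, b1, b2, b3⟩ := piB_bounds κ u hu hκ
  rw [hhess]
  set om := u⁻¹ • (b - a • u⁻¹ • w) with hom
  have hN0 : 0 < Real.sqrt (u ^ 2 + ‖w‖ ^ 2) := Real.sqrt_pos.2 (by positivity)
  constructor
  · intro hW
    have hnum : ‖u • b - a • w‖ ^ 2 = u ^ 4 * ‖om‖ ^ 2 := by
      have : u • b - a • w = (u ^ 2) • om := by
        rw [hom, smul_smul, smul_sub, smul_smul, smul_smul]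
        congr 2 <;> field_simp
      rw [this, norm_smul, Real.norm_eq_abs, abs_of_nonneg (by positivity)]
      ring
    have hden : Real.sqrt (u ^ 2 + ‖w‖ ^ 2) ≤ u * (1 + ‖c0‖ + 1 / 2) := by
      have h1 : ‖u⁻¹ • w‖ ≤ ‖c0‖ + 1 / 2 := by
        have := norm_add_le (u⁻¹ • w - c0) c0
        rw [sub_add_cancel] at this
        linarith
      rw [norm_smul, norm_inv, Real.norm_eq_abs, abs_of_pos hu, inv_mul_le_iff₀ hu] at h1
      have hc0 := norm_nonneg c0
      have hw0 := norm_nonneg w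
      rw [Real.sqrt_le_left (by positivity)]
      have : ‖w‖ ^ 2 ≤ (u * (‖c0‖ + 1 / 2)) ^ 2 := by gcongr
      nlinarith [mul_pos hu hu]
    have hd2 : u * (‖om‖ ^ 2 / (1 + ‖c0‖ + 1 / 2) ^ 3) ≤ d := by
      refine le_trans ?_ hd
      rw [hnum]
      calc u * (‖om‖ ^ 2 / (1 + ‖c0‖ + 1 / 2) ^ 3) = u ^ 4 * ‖om‖ ^ 2 / (u * (1 + ‖c0‖ + 1 / 2)) ^ 3 := by
            have hc0 := norm_nonneg c0
            field_simp
        _ ≤ _ := by gcongr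
    have hd3 := mul_le_mul_of_nonneg_left hd2 hc
    set W0 := u⁻¹ • w
    obtain ⟨l, hl⟩ : ∃ l, l = a / u := ⟨_, rfl⟩
    have ha : a = l * u := by rw [hl]; field_simp
    rw [← hl]
    set h2 := κ * Real.exp (-κ * Real.log (1 + u)) * (1 / (1 + u) + 1 / (1 + u) ^ 2 - κ * (u / (1 + u) ^ 2)) with hh2
    have t1 : h2 * a ^ 2 * η W0 ≤ u * (2 * κ * l ^ 2) := by
      have e1 : h2 * a ^ 2 * η W0 = u * l ^ 2 * η W0 * (u * h2) := by rw [ha]; ring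
      rw [e1]
      have hη0 := (hη1 W0).1
      calc u * l ^ 2 * η W0 * (u * h2) ≤ u * l ^ 2 * η W0 * (2 * κ) := by gcongr
        _ ≤ u * l ^ 2 * 1 * (2 * κ) := by
          have := (hη1 W0).2
          gcongr
        _ = _ := by ring
    have t2 : 2 * a * (piB1 κ u - piB κ u / u) * fderiv ℝ η W0 om ≤ u * (κ * l ^ 2 + M1 ^ 2 * ‖om‖ ^ 2) := by
      have e1 : |2 * a * (piB1 κ u - piB κ u / u) * fderiv ℝ η W0 om| ≤ 2 * (|l| * u) * κ * (M1 * ‖om‖) := by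
        rw [abs_mul, abs_mul, ha, abs_mul, abs_mul, abs_of_pos hu, abs_two]
        have := hD1 W0 om
        gcongr
      refine (le_abs_self _).trans (e1.trans ?_)
      have e2 : 2 * (|l| * u) * κ * (M1 * ‖om‖) = u * (κ * (2 * |l| * (M1 * ‖om‖))) := by ring
      rw [e2]
      refine mul_le_mul_of_nonneg_left ?_ hu.le
      have e3 := two_mul_le_add_sq |l| (M1 * ‖om‖)
      rw [sq_abs] at e3
      calc κ * (2 * |l| * (M1 * ‖om‖)) ≤ κ * (l ^ 2 + (M1 * ‖om‖) ^ 2) := by gcongr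
        _ = κ * l ^ 2 + κ * (M1 * ‖om‖) ^ 2 := by ring
        _ ≤ κ * l ^ 2 + 1 * (M1 * ‖om‖) ^ 2 := by gcongr
        _ = _ := by ring
    have t3 : piB κ u * fderiv ℝ (fderiv ℝ η) W0 om om ≤ u * (M2 * ‖om‖ ^ 2) := by
      have e1 := (le_abs_self _).trans (hD2 W0 om)
      calc _ ≤ piB κ u * (M2 * ‖om‖ ^ 2) := by gcongr
        _ ≤ _ := by gcongr
    have e4 : u * (3 * κ * l ^ 2 + (M1 ^ 2 + M2 - c / (1 + ‖c0‖ + 1 / 2) ^ 3) * ‖om‖ ^ 2) =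
      u * (2 * κ * l ^ 2) + u * (κ * l ^ 2 + M1 ^ 2 * ‖om‖ ^ 2) + u * (M2 * ‖om‖ ^ 2) - c * (u * (‖om‖ ^ 2 / (1 + ‖c0‖ + 1 / 2) ^ 3)) := by
      ring
    rw [e4]
    linarith
  · intro hW
    have hev : η =ᶠ[𝓝 (u⁻¹ • w)] fun _ => 0 := by
      have : ∀ᶠ x in 𝓝 (u⁻¹ • w), 1 / 2 < ‖x - c0‖ := by
        have hcont : Continuous (fun x : W => ‖x - c0‖) := by fun_prop
        exact (hcont.tendsto _).eventually (lt_mem_nhds hW)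
      filter_upwards [this] with x hx using hη0 x hx.le
    have z1 : fderiv ℝ η (u⁻¹ • w) = 0 := by rw [hev.fderiv_eq]; simp
    have z2 : fderiv ℝ (fderiv ℝ η) (u⁻¹ • w) = 0 := by
      have h := hev.fderiv (𝕜 := ℝ)
      rw [h.fderiv_eq]; simp
    rw [hev.eq_of_nhds, z1, z2]
    have : 0 ≤ d := le_trans (by positivity) hd
    simp
    positivity
end

section
variable {Z Y : Type} [NormedAddCommGroup Z] [NormedSpace ℝ Z] [NormedAddCommGroup Y] [NormedSpace ℝ Y]

lemma pi_chain (F : Y → ℝ) (G : Z → Y) (z v : Z) (hG : ContDiffAt ℝ 2 G z) (hF : ContDiffAt ℝ 2 F (G z)) :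
    fderiv ℝ (fderiv ℝ (fun x => F (G x))) z v v =
      fderiv ℝ (fderiv ℝ F) (G z) (fderiv ℝ G z v) (fderiv ℝ G z v) + fderiv ℝ F (G z) (fderiv ℝ (fderiv ℝ G) z v v) := by
  have hev1 : ∀ᶠ x in 𝓝 z, DifferentiableAt ℝ G x :=
    (hG.eventually (by simp)).mono fun x hx => hx.differentiableAt (by norm_num)
  have hev2 : ∀ᶠ x in 𝓝 z, DifferentiableAt ℝ F (G x) :=
    hG.continuousAt.eventually ((hF.eventually (by simp)).mono fun x hx => hx.differentiableAt (by norm_num))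
  have hev : fderiv ℝ (fun x => F (G x)) =ᶠ[𝓝 z] fun x => (fderiv ℝ F (G x)).comp (fderiv ℝ G x) := by
    filter_upwards [hev1, hev2] with x h1 h2
    exact fderiv_comp x h2 h1
  have d1 : HasFDerivAt (fderiv ℝ G) (fderiv ℝ (fderiv ℝ G) z) z :=
    ((hG.fderiv_right (m := 1) (by norm_num)).differentiableAt (by norm_num)).hasFDerivAt
  have d2 : HasFDerivAt (fderiv ℝ F) (fderiv ℝ (fderiv ℝ F) (G z)) (G z) :=
    ((hF.fderiv_right (m := 1) (by norm_num)).differentiableAt (by norm_num)).hasFDerivAt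
  have d3 : HasFDerivAt (fun x => fderiv ℝ F (G x)) _ z := d2.comp z (hG.differentiableAt (by norm_num)).hasFDerivAt
  rw [hev.fderiv_eq, (d3.clm_comp d1).fderiv]
  simp
  ring

lemma pi_clm_hess (π : Y →L[ℝ] ℝ) (G : Z → Y) (z v : Z) (hG : ContDiffAt ℝ 2 G z) :
    π (fderiv ℝ (fderiv ℝ G) z v v) = fderiv ℝ (fderiv ℝ (fun x => π (G x))) z v v := by
  rw [pi_chain π G z v hG π.contDiff.contDiffAt]
  have h : fderiv ℝ (π : Y → ℝ) = fun _ => π := by ext1 x; exact π.fderiv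
  rw [h]
  simp

lemma pi_clm_fderiv (π : Y →L[ℝ] ℝ) (G : Z → Y) (z v : Z) (hG : DifferentiableAt ℝ G z) :
    π (fderiv ℝ G z v) = fderiv ℝ (fun x => π (G x)) z v := by
  have : HasFDerivAt (fun x => π (G x)) _ z := π.hasFDerivAt.comp z hG.hasFDerivAt
  rw [this.fderiv]
  simp

lemma pi_line_deriv (f : Z → ℝ) (z v : Z) (hf : ContDiffAt ℝ 2 f z) :
    HasDerivAt (fun s : ℝ => fderiv ℝ f (z + s • v) v) (fderiv ℝ (fderiv ℝ f) z v v) 0 := by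
  have hline : HasDerivAt (fun s : ℝ => z + s • v) v 0 := by
    have := ((hasDerivAt_id (0 : ℝ)).smul_const v).const_add z
    rw [one_smul] at this
    exact this
  have d1 : HasFDerivAt (fderiv ℝ f) (fderiv ℝ (fderiv ℝ f) z) (z + (0 : ℝ) • v) := by
    rw [zero_smul, add_zero]
    exact ((hf.fderiv_right (m := 1) (by norm_num)).differentiableAt (by norm_num)).hasFDerivAt
  have d2 : HasDerivAt (fun s : ℝ => fderiv ℝ f (z + s • v)) (fderiv ℝ (fderiv ℝ f) z v) 0 :=
    d1.comp_hasDerivAt 0 hline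
  exact (ContinuousLinearMap.apply ℝ ℝ v).hasFDerivAt.comp_hasDerivAt 0 d2

lemma pi_addt (f u : ℝ × Z → ℝ) (z : ℝ × Z) (hf : ContDiffAt ℝ 2 f z) (hu : ContDiffAt ℝ 2 u z) (c : ℝ) :
    (∀ e : Z, fderiv ℝ (fderiv ℝ (fun x => f x + c * (x.1 * u x))) z (0, e) (0, e) = fderiv ℝ (fderiv ℝ f) z (0, e) (0, e)
      + c * (z.1 * fderiv ℝ (fderiv ℝ u) z (0, e) (0, e))) ∧
    fderiv ℝ (fun x => f x + c * (x.1 * u x)) z (1, 0) = fderiv ℝ f z (1, 0) + c * (u z + z.1 * fderiv ℝ u z (1, 0)) := by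
  constructor
  · intro e
    have hline : ∀ s : ℝ, HasDerivAt (fun s : ℝ => z + s • ((0 : ℝ), e)) (0, e) s := by
      intro s
      have := ((hasDerivAt_id s).smul_const ((0 : ℝ), e)).const_add z
      rw [one_smul] at this
      exact this
    have hcont : Tendsto (fun s : ℝ => z + s • ((0 : ℝ), e)) (𝓝 0) (𝓝 z) := by
      have := (hline 0).continuousAt.tendsto
      simpa using this
    have hev1 : ∀ᶠ x in 𝓝 z, DifferentiableAt ℝ f x :=
      (hf.eventually (by simp)).mono fun x hx => hx.differentiableAt (by norm_num)
    have hev2 : ∀ᶠ x in 𝓝 z, DifferentiableAt ℝ u x :=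
      (hu.eventually (by simp)).mono fun x hx => hx.differentiableAt (by norm_num)
    have d3 := pi_line_deriv f z (0, e) hf
    have d4 := pi_line_deriv u z (0, e) hu
    refine pi_line _ z (0, e) (hf.add (contDiffAt_const.mul (contDiffAt_fst.mul hu)))
      (fun s => fderiv ℝ f (z + s • ((0 : ℝ), e)) (0, e) + c * (z.1 * fderiv ℝ u (z + s • ((0 : ℝ), e)) (0, e))) _ ?_
      (d3.add ((d4.const_mul z.1).const_mul c))
    filter_upwards [hcont.eventually hev1, hcont.eventually hev2] with s h1 h2
    have k1 := h1.hasFDerivAt.comp_hasDerivAt s (hline s)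
    have k2 := h2.hasFDerivAt.comp_hasDerivAt s (hline s)
    have k3 := k1.add ((k2.const_mul z.1).const_mul c)
    convert! k3 using 1
    ext s
    simp
  · have h1 := (hf.differentiableAt (by norm_num)).hasFDerivAt
    have h2 := (hu.differentiableAt (by norm_num)).hasFDerivAt
    have h3 : HasFDerivAt (fun x : ℝ × Z => x.1) (ContinuousLinearMap.fst ℝ ℝ Z) z := hasFDerivAt_fst
    have h4 : HasFDerivAt (fun x => f x + c * (x.1 * u x)) _ z := h1.add ((h3.mul h2).const_mul c)
    rw [h4.fderiv]
    simp
    ring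
end

lemma pi_alg (n : ℕ) (W : Fin n → Fin n → ℝ) (ll : Fin n → ℝ) (K : ℝ) (g : Fin n → ℝ) (hg : ∀ i, |g i| ≤ K)
    (om : Fin n → Fin n → Fin n → ℝ) (hW : ∑ i, ∑ j, (W i j - if i = j then 1 else 0) ^ 2 ≤ 1 / 4)
    (h : ∀ i, ∑ j, W i j * ll j = - g i - ∑ j, om j i j) :
    ∑ i, ll i ^ 2 ≤ 8 * n * K ^ 2 + 8 * n * ∑ k, ∑ i, ∑ j, om k i j ^ 2 := by
  set L := ∑ i, ll i ^ 2 with hL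
  have hL0 : 0 ≤ L := Finset.sum_nonneg fun i _ => sq_nonneg _
  have h1 : ∀ i, ll i ^ 2 ≤ 2 * ((∑ j, (W i j - if i = j then 1 else 0) ^ 2) * L) + 2 * (∑ j, W i j * ll j) ^ 2 := by
    intro i
    have e1 : ll i = (∑ j, W i j * ll j) - ∑ j, (W i j - if i = j then 1 else 0) * ll j := by
      rw [← Finset.sum_sub_distrib]
      simp [sub_mul]
    have e2 := Finset.sum_mul_sq_le_sq_mul_sq Finset.univ (fun j => (W i j - if i = j then 1 else 0)) ll
    rw [← hL] at e2
    set A := ∑ j, W i j * ll j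
    set D := ∑ j, (W i j - if i = j then 1 else 0) * ll j
    rw [e1]
    nlinarith [sq_nonneg (A + D)]
  have h2 : ∀ i, (∑ j, W i j * ll j) ^ 2 ≤ 2 * K ^ 2 + 2 * (n * ∑ j, om j i j ^ 2) := by
    intro i
    rw [h i]
    have e1 : (g i) ^ 2 ≤ K ^ 2 := sq_le_sq' (by linarith [neg_le_of_abs_le (hg i)]) ((le_abs_self _).trans (hg i))
    have e2 := sq_sum_le_card_mul_sum_sq (s := Finset.univ) (f := fun j => om j i j)
    rw [Finset.card_univ, Fintype.card_fin] at e2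
    nlinarith [sq_nonneg (g i - ∑ j, om j i j)]
  have h3 : L ≤ ∑ i : Fin n, (2 * ((∑ j, (W i j - if i = j then 1 else 0) ^ 2) * L) + 2 * (2 * K ^ 2 + 2 * (n * ∑ j, om j i j ^ 2))) := by
    refine Finset.sum_le_sum fun i _ => (h1 i).trans ?_
    linarith [h2 i]
  have h4 : ∑ i : Fin n, (2 * ((∑ j, (W i j - if i = j then 1 else 0) ^ 2) * L) + 2 * (2 * K ^ 2 + 2 * (n * ∑ j, om j i j ^ 2)))
    = 2 * ((∑ i, ∑ j, (W i j - if i = j then 1 else 0) ^ 2) * L) + 4 * n * K ^ 2 + 4 * n * ∑ i, ∑ j, om j i j ^ 2 := by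
    rw [Finset.sum_add_distrib, ← Finset.mul_sum, ← Finset.sum_mul, ← Finset.mul_sum, Finset.sum_add_distrib, ← Finset.mul_sum, ← Finset.mul_sum, ← Finset.mul_sum]
    simp only [Finset.sum_const, Finset.card_univ, Fintype.card_fin, nsmul_eq_mul]
    ring
  have h5 : ∑ i, ∑ j, om j i j ^ 2 ≤ ∑ k, ∑ i, ∑ j, om k i j ^ 2 := by
    rw [Finset.sum_comm]
    refine Finset.sum_le_sum fun k _ => Finset.sum_le_sum fun i _ => ?_
    exact Finset.single_le_sum (f := fun j => om k i j ^ 2) (fun j _ => sq_nonneg _) (Finset.mem_univ k)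
  rw [h4] at h3
  have h6 := mul_le_mul_of_nonneg_right hW hL0
  have h7 := mul_le_mul_of_nonneg_left h5 (show (0 : ℝ) ≤ 4 * n by positivity)
  nlinarith

section
variable {n : ℕ}
local notation "𝔼" => EuclideanSpace ℝ (Fin n)
local notation "𝕎" => EuclideanSpace ℝ (Fin n × Fin n)

/-- identity matrix as a vector -/
noncomputable def piId (n : ℕ) : EuclideanSpace ℝ (Fin n × Fin n) :=
  WithLp.toLp 2 (fun ij => if ij.1 = ij.2 then 1 else 0)

/-- heat flow of the matrix of fields -/
noncomputable def piWv (μ : Measure 𝔼) (V : Fin n → 𝔼 → Fin n → ℝ) (z : ℝ × 𝔼) : 𝕎 :=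
  WithLp.toLp 2 (fun ij => piU μ (fun x => V ij.1 x ij.2) (piK n) z)

/-- heat flow of the pair -/
noncomputable def piG (μ : Measure 𝔼) (V : Fin n → 𝔼 → Fin n → ℝ) (z : ℝ × 𝔼) : ℝ × 𝕎 :=
  (piU μ (fun _ => 1) (piK n) z, piWv μ V z)

lemma pi_W_norm_sq (x : 𝕎) : ‖x‖ ^ 2 = ∑ i, ∑ j, x (i, j) ^ 2 := by
  rw [EuclideanSpace.norm_sq_eq, Fintype.sum_prod_type]
  simp

lemma piU_pos (μ : Measure 𝔼) [IsFiniteMeasure μ] (hμ : μ ≠ 0) (R : ℝ) (hR : ∀ᵐ y ∂μ, ‖y‖ ≤ R) (z : ℝ × 𝔼) (hz : 0 < z.1) :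
    0 < piU μ (fun _ => 1) (piK n) z := by
  have hItg := pi_conv_integrable μ R hR (fun _ => 1) (integrable_const 1) (piK n) (piK_contDiffOn n 1).continuousOn z hz
  unfold piU
  rw [integral_pos_iff_support_of_nonneg (fun y => by have := (piK_pos n (z - (0, y))).le; simpa using this) hItg]
  have : (Function.support fun y => (1 : ℝ) • piK n (z - (0, y))) = Set.univ := by
    ext y
    simp [(piK_pos n (z - (0, y))).ne']
  rw [this]
  simpa [pos_iff_ne_zero] using hμ

lemma piU_abs_le (μ : Measure 𝔼) [IsFiniteMeasure μ] (R : ℝ) (hR : ∀ᵐ y ∂μ, ‖y‖ ≤ R) (z : ℝ × 𝔼) (hz : 0 < z.1)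
    (a : 𝔼 → ℝ) (K : ℝ) (haK : ∀ x, |a x| ≤ K) : |piU μ a (piK n) z| ≤ K * piU μ (fun _ => 1) (piK n) z := by
  have hItg := pi_conv_integrable μ R hR (fun _ => 1) (integrable_const 1) (piK n) (piK_contDiffOn n 1).continuousOn z hz
  unfold piU
  rw [← integral_const_mul]
  rw [← Real.norm_eq_abs]
  refine norm_integral_le_of_norm_le (hItg.const_mul K) (Eventually.of_forall fun y => ?_)
  rw [norm_smul, Real.norm_eq_abs, Real.norm_eq_abs, abs_of_pos (piK_pos _ _), one_smul]
  exact mul_le_mul_of_nonneg_right (haK y) (piK_pos _ _).le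

lemma piG_contDiffOn (μ : Measure 𝔼) [IsFiniteMeasure μ] (R : ℝ) (hR : ∀ᵐ y ∂μ, ‖y‖ ≤ R)
    (V : Fin n → 𝔼 → Fin n → ℝ) (hV : ∀ i j, Integrable (fun x => V i x j) μ) :
    ContDiffOn ℝ 2 (piG μ V) (PiH 𝔼) := by
  refine ContDiffOn.prodMk (by exact_mod_cast piU_contDiffOn μ R hR _ (integrable_const 1) 2) ?_
  rw [contDiffOn_euclidean]
  intro ij
  exact_mod_cast piU_contDiffOn μ R hR _ (hV ij.1 ij.2) 2

lemma piG_contDiffAt (μ : Measure 𝔼) [IsFiniteMeasure μ] (R : ℝ) (hR : ∀ᵐ y ∂μ, ‖y‖ ≤ R)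
    (V : Fin n → 𝔼 → Fin n → ℝ) (hV : ∀ i j, Integrable (fun x => V i x j) μ) (z : ℝ × 𝔼) (hz : 0 < z.1) :
    ContDiffAt ℝ 2 (piG μ V) z := (piG_contDiffOn μ R hR V hV).contDiffAt ((pi_isOpen_H _).mem_nhds hz)

lemma pi_ext (x y : ℝ × 𝕎) (h1 : ContinuousLinearMap.fst ℝ ℝ 𝕎 x = ContinuousLinearMap.fst ℝ ℝ 𝕎 y)
    (h2 : ∀ ij, ((EuclideanSpace.proj (𝕜 := ℝ) ij).comp (ContinuousLinearMap.snd ℝ ℝ 𝕎)) x =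
      ((EuclideanSpace.proj (𝕜 := ℝ) ij).comp (ContinuousLinearMap.snd ℝ ℝ 𝕎)) y) : x = y := by
  refine Prod.ext h1 ?_
  ext ij
  exact h2 ij

lemma pi_clm_heat {Y : Type} [NormedAddCommGroup Y] [NormedSpace ℝ Y] (π : Y →L[ℝ] ℝ) (G : ℝ × 𝔼 → Y) (z : ℝ × 𝔼)
    (hG : ContDiffAt ℝ 2 G z)
    (h : fderiv ℝ (fun x => π (G x)) z (1, 0) = ∑ j, fderiv ℝ (fderiv ℝ (fun x => π (G x))) z (0, EuclideanSpace.single j 1) (0, EuclideanSpace.single j 1)) :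
    π (fderiv ℝ G z (1, 0)) = π (∑ j, fderiv ℝ (fderiv ℝ G) z (0, EuclideanSpace.single j 1) (0, EuclideanSpace.single j 1)) := by
  rw [pi_clm_fderiv π G z _ (hG.differentiableAt (by norm_num)), h, map_sum]
  exact Finset.sum_congr rfl fun j _ => (pi_clm_hess π G z _ hG).symm

lemma piG_heat (μ : Measure 𝔼) [IsFiniteMeasure μ] (R : ℝ) (hR : ∀ᵐ y ∂μ, ‖y‖ ≤ R)
    (V : Fin n → 𝔼 → Fin n → ℝ) (hV : ∀ i j, Integrable (fun x => V i x j) μ) (z : ℝ × 𝔼) (hz : 0 < z.1) :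
    fderiv ℝ (piG μ V) z (1, 0) =
      ∑ j, fderiv ℝ (fderiv ℝ (piG μ V)) z (0, EuclideanSpace.single j 1) (0, EuclideanSpace.single j 1) := by
  have hG := piG_contDiffAt μ R hR V hV z hz
  refine pi_ext _ _ ?_ fun ij => ?_
  · exact pi_clm_heat _ _ z hG (piU_heat μ R hR _ (integrable_const 1) z hz)
  · exact pi_clm_heat _ _ z hG (piU_heat μ R hR _ (hV ij.1 ij.2) z hz)

lemma piG_div (μ : Measure 𝔼) [IsFiniteMeasure μ] (R : ℝ) (hR : ∀ᵐ y ∂μ, ‖y‖ ≤ R)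
    (V : Fin n → 𝔼 → Fin n → ℝ) (hV : ∀ i j, Integrable (fun x => V i x j) μ) (a : Fin n → 𝔼 → ℝ)
    (hdiv : ∀ i, ∀ φ : 𝔼 → ℝ, ContDiff ℝ 1 φ → (∃ L : ℝ≥0, LipschitzWith L φ) →
        ∫ x, ∑ j, V i x j * fderiv ℝ φ x (EuclideanSpace.single j 1) ∂μ = ∫ x, a i x * φ x ∂μ)
    (z : ℝ × 𝔼) (hz : 0 < z.1) (i : Fin n) :
    ∑ j, (fderiv ℝ (piG μ V) z (0, EuclideanSpace.single j 1)).2 (i, j) = - piU μ (a i) (piK n) z := by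
  rw [← piU_div μ R hR (V i) (a i) (hV i) (hdiv i) z hz]
  refine Finset.sum_congr rfl fun j _ => ?_
  exact pi_clm_fderiv ((EuclideanSpace.proj (𝕜 := ℝ) (i, j)).comp (ContinuousLinearMap.snd ℝ ℝ 𝕎)) (piG μ V) z _
    ((piG_contDiffAt μ R hR V hV z hz).differentiableAt (by norm_num))

/-- sum of Hessians is controlled -/
lemma pi_hess_sum (η : 𝕎 → ℝ) (hη : ContDiff ℝ 2 η) (hη1 : ∀ x, 0 ≤ η x ∧ η x ≤ 1)
    (hη0 : ∀ x, 1 / 2 ≤ ‖x - piId n‖ → η x = 0) (M1 M2 : ℝ) (hM1 : 0 ≤ M1) (hM2 : 0 ≤ M2)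
    (hD1 : ∀ x e, |fderiv ℝ η x e| ≤ M1 * ‖e‖) (hD2 : ∀ x e, |fderiv ℝ (fderiv ℝ η) x e e| ≤ M2 * ‖e‖ ^ 2)
    (κ : ℝ) (hκ : 0 < κ) (hκ1 : κ ≤ 1) (u : ℝ) (hu : 0 < u) (w : 𝕎) (ξ : Fin n → ℝ × 𝕎) (g : Fin n → ℝ) (K : ℝ)
    (hg : ∀ i, |g i| ≤ K * u) (hdiv : ∀ i, ∑ j, (ξ j).2 (i, j) = - g i) :
    ∑ j, fderiv ℝ (fderiv ℝ (piF η κ ((1 + ‖piId n‖ + 1 / 2) ^ 3 * (24 * n + M1 ^ 2 + M2)))) (u, w) (ξ j) (ξ j) ≤ 24 * n * K ^ 2 * κ * u := by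
  set S := (1 + ‖piId n‖ + 1 / 2) ^ 3 with hS
  have hS0 : 0 < S := by have := norm_nonneg (piId n); positivity
  have hH := fun j => piF_hess η hη hη1 (piId n) hη0 M1 M2 hM1 hM2 hD1 hD2 κ (S * (24 * n + M1 ^ 2 + M2)) hκ hκ1 (by positivity)
    u (ξ j).1 hu w (ξ j).2
  rcases le_or_gt ‖u⁻¹ • w - piId n‖ (1 / 2) with hW | hW
  · set om : Fin n → 𝕎 := fun k => u⁻¹ • ((ξ k).2 - (ξ k).1 • u⁻¹ • w) with hom
    have hsum : ∑ i, ((ξ i).1 / u) ^ 2 ≤ 8 * n * K ^ 2 + 8 * n * ∑ k, ∑ i, ∑ j, om k (i, j) ^ 2 := by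
      refine pi_alg n (fun i j => u⁻¹ * w (i, j)) (fun i => (ξ i).1 / u) K (fun i => g i / u) (fun i => ?_)
        (fun k i j => om k (i, j)) ?_ (fun i => ?_)
      · rw [abs_div, abs_of_pos hu, div_le_iff₀ hu]; exact hg i
      · have h1 : ‖u⁻¹ • w - piId n‖ ^ 2 ≤ (1 / 2) ^ 2 := by gcongr
        rw [pi_W_norm_sq] at h1
        norm_num at h1
        simpa [piId] using h1
      · have e1 : ∑ j, om j (i, j) = u⁻¹ * ∑ j, (ξ j).2 (i, j) - ∑ j, u⁻¹ * w (i, j) * ((ξ j).1 / u) := by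
          rw [Finset.mul_sum, ← Finset.sum_sub_distrib]
          refine Finset.sum_congr rfl fun j _ => ?_
          simp [hom]
          ring
        rw [e1, hdiv i]
        ring
    have hom2 : ∀ k, ∑ i, ∑ j, om k (i, j) ^ 2 = ‖om k‖ ^ 2 := fun k => (pi_W_norm_sq _).symm
    simp_rw [hom2] at hsum
    calc _ ≤ ∑ j, u * (3 * κ * ((ξ j).1 / u) ^ 2 + (M1 ^ 2 + M2 - S * (24 * n + M1 ^ 2 + M2) / S) * ‖om j‖ ^ 2) :=
          Finset.sum_le_sum fun j _ => (hH j).1 hW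
      _ = u * (3 * κ * (∑ i, ((ξ i).1 / u) ^ 2) - 24 * n * ∑ j, ‖om j‖ ^ 2) := by
          rw [← Finset.mul_sum, Finset.sum_add_distrib, ← Finset.mul_sum, ← Finset.mul_sum]
          congr 1
          field_simp
          ring
      _ ≤ u * (3 * κ * (8 * n * K ^ 2 + 8 * n * ∑ k, ‖om k‖ ^ 2) - 24 * n * ∑ j, ‖om j‖ ^ 2) := by gcongr
      _ ≤ _ := by
          have h0 : 0 ≤ ∑ k, ‖om k‖ ^ 2 := Finset.sum_nonneg fun k _ => sq_nonneg _
          have h1 : 0 ≤ (1 - κ) * (u * (24 * n * ∑ k, ‖om k‖ ^ 2)) := mul_nonneg (by linarith) (by positivity)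
          nlinarith
  · refine (Finset.sum_nonpos fun j _ => (hH j).2 hW).trans (by positivity)

/-- The comparison function along the flow. -/
noncomputable def piQ (μ : Measure 𝔼) (V : Fin n → 𝔼 → Fin n → ℝ) (η : 𝕎 → ℝ) (κ c c' : ℝ) (z : ℝ × 𝔼) : ℝ :=
  piF η κ c (piG μ V z) + c' * (z.1 * piU μ (fun _ => 1) (piK n) z)

lemma piQ_sub (μ : Measure 𝔼) [IsFiniteMeasure μ] (hμ : μ ≠ 0) (R : ℝ) (hR : ∀ᵐ y ∂μ, ‖y‖ ≤ R)
    (V : Fin n → 𝔼 → Fin n → ℝ) (hV : ∀ i j, Integrable (fun x => V i x j) μ) (a : Fin n → 𝔼 → ℝ) (K : ℝ)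
    (haK : ∀ i x, |a i x| ≤ K)
    (hdiv : ∀ i, ∀ φ : 𝔼 → ℝ, ContDiff ℝ 1 φ → (∃ L : ℝ≥0, LipschitzWith L φ) →
        ∫ x, ∑ j, V i x j * fderiv ℝ φ x (EuclideanSpace.single j 1) ∂μ = ∫ x, a i x * φ x ∂μ)
    (η : 𝕎 → ℝ) (hη : ContDiff ℝ 2 η) (hη1 : ∀ x, 0 ≤ η x ∧ η x ≤ 1)
    (hη0 : ∀ x, 1 / 2 ≤ ‖x - piId n‖ → η x = 0) (M1 M2 : ℝ) (hM1 : 0 ≤ M1) (hM2 : 0 ≤ M2)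
    (hD1 : ∀ x e, |fderiv ℝ η x e| ≤ M1 * ‖e‖) (hD2 : ∀ x e, |fderiv ℝ (fderiv ℝ η) x e e| ≤ M2 * ‖e‖ ^ 2)
    (κ : ℝ) (hκ : 0 < κ) (hκ1 : κ ≤ 1) :
    ContDiffOn ℝ 2 (piQ μ V η κ ((1 + ‖piId n‖ + 1 / 2) ^ 3 * (24 * n + M1 ^ 2 + M2)) (24 * n * K ^ 2 * κ)) (PiH 𝔼) ∧
    ∀ z : ℝ × 𝔼, 0 < z.1 →
      ∑ j, fderiv ℝ (fderiv ℝ (piQ μ V η κ ((1 + ‖piId n‖ + 1 / 2) ^ 3 * (24 * n + M1 ^ 2 + M2)) (24 * n * K ^ 2 * κ))) z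
        (0, EuclideanSpace.single j 1) (0, EuclideanSpace.single j 1)
      ≤ fderiv ℝ (piQ μ V η κ ((1 + ‖piId n‖ + 1 / 2) ^ 3 * (24 * n + M1 ^ 2 + M2)) (24 * n * K ^ 2 * κ)) z (1, 0) := by
  set c := (1 + ‖piId n‖ + 1 / 2) ^ 3 * (24 * n + M1 ^ 2 + M2) with hc
  have hu := piU_pos μ hμ R hR
  have hG := piG_contDiffAt μ R hR V hV
  have hF : ∀ z : ℝ × 𝔼, 0 < z.1 → ContDiffAt ℝ 2 (piF η κ c) (piG μ V z) := fun z hz =>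
    piF_contDiffAt η hη κ c _ (hu z hz)
  have hFG : ∀ z : ℝ × 𝔼, 0 < z.1 → ContDiffAt ℝ 2 (fun z => piF η κ c (piG μ V z)) z := fun z hz =>
    (hF z hz).comp z (hG z hz)
  have hU : ∀ z : ℝ × 𝔼, 0 < z.1 → ContDiffAt ℝ 2 (piU μ (fun _ => 1) (piK n)) z := fun z hz =>
    contDiffAt_fst.comp z (hG z hz)
  refine ⟨fun z hz => ?_, fun z hz => ?_⟩
  · exact ((hFG z hz).add (contDiffAt_const.mul (contDiffAt_fst.mul (hU z hz)))).contDiffWithinAt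
  · obtain ⟨h1, h2⟩ := pi_addt (fun z => piF η κ c (piG μ V z)) (piU μ (fun _ => 1) (piK n)) z (hFG z hz) (hU z hz) (24 * n * K ^ 2 * κ)
    have h3 : fderiv ℝ (piQ μ V η κ c (24 * n * K ^ 2 * κ)) z (1, 0) = _ := h2
    have h4 : ∀ e, fderiv ℝ (fderiv ℝ (piQ μ V η κ c (24 * n * K ^ 2 * κ))) z (0, e) (0, e) = _ := h1
    rw [h3]
    simp_rw [h4]
    rw [Finset.sum_add_distrib, ← Finset.mul_sum, ← Finset.mul_sum, ← piU_heat μ R hR _ (integrable_const 1) z hz]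
    simp_rw [pi_chain (piF η κ c) (piG μ V) z _ (hG z hz) (hF z hz)]
    rw [Finset.sum_add_distrib, ← map_sum, ← piG_heat μ R hR V hV z hz]
    have h5 : fderiv ℝ (fun z => piF η κ c (piG μ V z)) z (1, 0) = fderiv ℝ (piF η κ c) (piG μ V z) (fderiv ℝ (piG μ V) z (1, 0)) := by
      have := fderiv_comp (g := piF η κ c) z ((hF z hz).differentiableAt (by norm_num)) ((hG z hz).differentiableAt (by norm_num))
      have h6 : fderiv ℝ (fun z => piF η κ c (piG μ V z)) z = _ := this
      rw [h6]; rfl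
    have h7 := pi_hess_sum η hη hη1 hη0 M1 M2 hM1 hM2 hD1 hD2 κ hκ hκ1 (piU μ (fun _ => 1) (piK n) z) (hu z hz) (piWv μ V z)
      (fun j => fderiv ℝ (piG μ V) z (0, EuclideanSpace.single j 1)) (fun i => piU μ (a i) (piK n) z) K
      (fun i => piU_abs_le μ R hR z hz (a i) K (haK i)) (fun i => piG_div μ R hR V hV a hdiv z hz i)
    rw [h5]
    have h8 : ∑ j, fderiv ℝ (fderiv ℝ (piF η κ c)) (piG μ V z) (fderiv ℝ (piG μ V) z (0, EuclideanSpace.single j 1))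
      (fderiv ℝ (piG μ V) z (0, EuclideanSpace.single j 1)) ≤ 24 * n * K ^ 2 * κ * piU μ (fun _ => 1) (piK n) z := h7
    linarith
end

section
variable {n : ℕ}
local notation "𝔼" => EuclideanSpace ℝ (Fin n)
local notation "𝕎" => EuclideanSpace ℝ (Fin n × Fin n)

lemma piK_integral (t : ℝ) (ht : 0 < t) : ∫ x : 𝔼, piK n (t, x) = 1 := by
  have h1 : (fun x : 𝔼 => piK n (t, x)) = fun x => Real.exp (-(n / 2) * Real.log (4 * Real.pi * t)) * Real.exp (-(1 / (4 * t)) * ‖x‖ ^ 2) := by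
    ext x
    rw [← Real.exp_add]
    simp only [piK]
    congr 1
    ring
  rw [h1, integral_const_mul, GaussianFourier.integral_rexp_neg_mul_sq_norm (by positivity)]
  have h2 : Real.pi / (1 / (4 * t)) = 4 * Real.pi * t := by field_simp
  rw [h2, Real.rpow_def_of_pos (by positivity), ← Real.exp_add]
  simp
  ring

lemma piK_integrable (t : ℝ) (ht : 0 < t) : Integrable (fun x : 𝔼 => piK n (t, x)) :=
  integrable_of_integral_eq_one (piK_integral t ht)

lemma piK_tail (t : ℝ) (ht : 0 < t) (x : 𝔼) :
    piK n (t, x) * ‖x‖ ^ 2 ≤ 8 * t * Real.exp (n / 2 * Real.log 2) * piK n (2 * t, x) := by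
  have h1 : piK n (t, x) = Real.exp (n / 2 * Real.log 2) * piK n (2 * t, x) * Real.exp (-(‖x‖ ^ 2 / (8 * t))) := by
    simp only [piK]
    rw [← Real.exp_add, ← Real.exp_add]
    congr 1
    have : Real.log (4 * Real.pi * (2 * t)) = Real.log 2 + Real.log (4 * Real.pi * t) := by
      rw [← Real.log_mul (by positivity) (by positivity)]; congr 1; ring
    rw [this]
    field_simp
    ring
  have h2 : ‖x‖ ^ 2 / (8 * t) * Real.exp (-(‖x‖ ^ 2 / (8 * t))) ≤ 1 := by
    rw [Real.exp_neg, ← div_eq_mul_inv, div_le_one (Real.exp_pos _)]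
    linarith [Real.add_one_le_exp (‖x‖ ^ 2 / (8 * t))]
  have h3 : piK n (t, x) * ‖x‖ ^ 2 = 8 * t * Real.exp (n / 2 * Real.log 2) * piK n (2 * t, x) * (‖x‖ ^ 2 / (8 * t) * Real.exp (-(‖x‖ ^ 2 / (8 * t)))) := by
    rw [h1]; field_simp
  rw [h3]
  have := piK_pos n (2 * t, x)
  exact mul_le_of_le_one_right (by positivity) h2

lemma piK_le (t : ℝ) (ht : 0 < t) (x : 𝔼) : piK n (t, x) ≤ Real.exp (-(n / 2) * Real.log (4 * Real.pi * t)) := by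
  unfold piK
  simp only
  gcongr
  have : 0 ≤ ‖x‖ ^ 2 / (4 * t) := by positivity
  linarith

lemma pi_fub (μ : Measure 𝔼) [IsFiniteMeasure μ] (f : 𝔼 → ℝ) (hf : Integrable f μ) (t : ℝ) (ht : 0 < t) :
    Integrable (fun p : 𝔼 × 𝔼 => f p.1 • piK n ((t, p.2) - (0, p.1))) (μ.prod volume) := by
  have hcont : Continuous (fun p : 𝔼 × 𝔼 => piK n ((t, p.2) - (0, p.1))) :=
    (piK_contDiffOn n 1).continuousOn.comp_continuous (by fun_prop) (fun p => by simpa [PiH] using ht)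
  have hm : AEStronglyMeasurable (fun p : 𝔼 × 𝔼 => f p.1 • piK n ((t, p.2) - (0, p.1))) (μ.prod volume) :=
    hf.aestronglyMeasurable.comp_fst.smul hcont.aestronglyMeasurable
  have hshift : ∀ y : 𝔼, Integrable (fun x : 𝔼 => piK n ((t, x) - (0, y))) ∧ ∫ x, piK n ((t, x) - (0, y)) = 1 := by
    intro y
    have e : (fun x : 𝔼 => piK n ((t, x) - (0, y))) = fun x => (fun x => piK n (t, x)) (x - y) := by
      ext x; simp
    rw [e]
    exact ⟨(piK_integrable t ht).comp_sub_right y, by rw [integral_sub_right_eq_self (fun x => piK n (t, x)) y]; exact piK_integral t ht⟩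
  rw [integrable_prod_iff hm]
  refine ⟨Eventually.of_forall fun y => (hshift y).1.const_mul (f y), ?_⟩
  refine hf.norm.congr (Eventually.of_forall fun y => ?_)
  simp only [norm_smul]
  rw [integral_const_mul]
  have : ∀ x, ‖piK n ((t, x) - (0, y))‖ = piK n ((t, x) - (0, y)) := fun x => by
    rw [Real.norm_eq_abs, abs_of_pos (piK_pos _ _)]
  simp_rw [this, (hshift y).2, mul_one]

lemma piU_integrable (μ : Measure 𝔼) [IsFiniteMeasure μ] (f : 𝔼 → ℝ) (hf : Integrable f μ) (t : ℝ) (ht : 0 < t) :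
    Integrable (fun x => piU μ f (piK n) (t, x)) := (pi_fub μ f hf t ht).integral_prod_right

lemma piU_integral (μ : Measure 𝔼) [IsFiniteMeasure μ] (f : 𝔼 → ℝ) (hf : Integrable f μ) (t : ℝ) (ht : 0 < t) :
    ∫ x, piU μ f (piK n) (t, x) = ∫ y, f y ∂μ := by
  unfold piU
  have h := integral_integral_swap (μ := μ) (ν := volume) (f := fun y x => f y • piK n ((t, x) - (0, y))) (pi_fub μ f hf t ht)
  rw [← h]
  refine integral_congr_ae (Eventually.of_forall fun y => ?_)
  simp only [smul_eq_mul]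
  rw [integral_const_mul]
  have e : (fun x : 𝔼 => piK n ((t, x) - (0, y))) = fun x => (fun x => piK n (t, x)) (x - y) := by
    ext x; simp
  rw [e, integral_sub_right_eq_self (fun x => piK n (t, x)) y, piK_integral t ht, mul_one]

lemma piU_mass (μ : Measure 𝔼) [IsFiniteMeasure μ] (t : ℝ) (ht : 0 < t) :
    ∫ x, piU μ (fun _ => 1) (piK n) (t, x) = μ.real Set.univ := by
  rw [piU_integral μ _ (integrable_const 1) t ht]
  simp

lemma piU_abs_integral (μ : Measure 𝔼) [IsFiniteMeasure μ] (f : 𝔼 → ℝ) (hf : Integrable f μ) (t : ℝ) (ht : 0 < t) :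
    ∫ x, |piU μ f (piK n) (t, x)| ≤ ∫ y, |f y| ∂μ := by
  rw [← piU_integral μ (fun y => |f y|) hf.abs t ht]
  refine integral_mono (piU_integrable μ f hf t ht).abs (piU_integrable μ _ hf.abs t ht) fun x => ?_
  simp only [piU]
  rw [← Real.norm_eq_abs]
  refine (norm_integral_le_integral_norm _).trans (le_of_eq ?_)
  refine integral_congr_ae (Eventually.of_forall fun y => ?_)
  simp only [Real.norm_eq_abs, smul_eq_mul, abs_mul]
  rw [abs_of_pos (piK_pos n _)]

lemma piU_le (μ : Measure 𝔼) [IsFiniteMeasure μ] (t : ℝ) (ht : 0 < t) (x : 𝔼) :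
    piU μ (fun _ => 1) (piK n) (t, x) ≤ Real.exp (-(n / 2) * Real.log (4 * Real.pi * t)) * μ.real Set.univ := by
  unfold piU
  have h := norm_integral_le_of_norm_le_const (μ := μ) (f := fun y => (1 : ℝ) • piK n ((t, x) - (0, y))) (C := Real.exp (-(n / 2) * Real.log (4 * Real.pi * t)))
    (Eventually.of_forall fun y => by
      rw [one_smul, Real.norm_eq_abs, abs_of_pos (piK_pos _ _)]
      have := piK_le (n := n) t ht (x - y)
      simpa using this)
  exact (le_abs_self _).trans h

lemma piU_sub (μ : Measure 𝔼) (R : ℝ) (hR : ∀ᵐ y ∂μ, ‖y‖ ≤ R) (f g : 𝔼 → ℝ) (hf : Integrable f μ) (hg : Integrable g μ)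
    (z : ℝ × 𝔼) (hz : 0 < z.1) : piU μ (fun x => f x - g x) (piK n) z = piU μ f (piK n) z - piU μ g (piK n) z := by
  have hi := fun (f : 𝔼 → ℝ) (hf : Integrable f μ) => pi_conv_integrable μ R hR f hf (piK n) (piK_contDiffOn n 1).continuousOn z hz
  unfold piU
  rw [← integral_sub (hi f hf) (hi g hg)]
  simp only [sub_smul]

lemma pi_W_norm_le (x : 𝕎) : ‖x‖ ≤ ∑ i, ∑ j, |x (i, j)| := by
  rw [← abs_of_nonneg (show 0 ≤ ∑ i, ∑ j, |x (i, j)| from Finset.sum_nonneg fun i _ => Finset.sum_nonneg fun j _ => abs_nonneg _),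
    ← abs_of_nonneg (norm_nonneg x), ← sq_le_sq, EuclideanSpace.norm_sq_eq, ← Fintype.sum_prod_type' (f := fun i j => |x (i, j)|)]
  exact Finset.sum_sq_le_sq_sum_of_nonneg (fun i _ => abs_nonneg _)

/-- upper bound for mass escaping -/
lemma pi_dev (μ : Measure 𝔼) [IsFiniteMeasure μ] (R : ℝ) (hR : ∀ᵐ y ∂μ, ‖y‖ ≤ R) (V : Fin n → 𝔼 → Fin n → ℝ)
    (hV : ∀ i j, Integrable (fun x => V i x j) μ) (A : 𝕎) (t : ℝ) (ht : 0 < t) :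
    Integrable (fun x => ‖piWv μ V (t, x) - piU μ (fun _ => 1) (piK n) (t, x) • A‖) ∧
    ∫ x, ‖piWv μ V (t, x) - piU μ (fun _ => 1) (piK n) (t, x) • A‖ ≤ ∑ i, ∑ j, ∫ y, |V i y j - A (i, j)| ∂μ := by
  have hVA : ∀ i j, Integrable (fun x => V i x j - A (i, j)) μ := fun i j => (hV i j).sub (integrable_const _)
  have hpt : ∀ x, ‖piWv μ V (t, x) - piU μ (fun _ => 1) (piK n) (t, x) • A‖ ≤
      ∑ i, ∑ j, |piU μ (fun y => V i y j - A (i, j)) (piK n) (t, x)| := by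
    intro x
    refine (pi_W_norm_le _).trans (le_of_eq ?_)
    refine Finset.sum_congr rfl fun i _ => Finset.sum_congr rfl fun j _ => ?_
    rw [piU_sub μ R hR _ _ (hV i j) (integrable_const _) (t, x) ht]
    congr 1
    simp only [piWv, PiLp.sub_apply, PiLp.smul_apply, smul_eq_mul]
    congr 1
    unfold piU
    rw [← integral_mul_const]
    simp [mul_comm]
  have hI : Integrable (fun x => ∑ i, ∑ j, |piU μ (fun y => V i y j - A (i, j)) (piK n) (t, x)|) :=
    integrable_finsetSum _ fun i _ => integrable_finsetSum _ fun j _ => (piU_integrable μ _ (hVA i j) t ht).abs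
  have hcG : Continuous (fun x : 𝔼 => piG μ V (t, x)) :=
    (piG_contDiffOn μ R hR V hV).continuousOn.comp_continuous (by fun_prop) (fun _ => ht)
  have hc : Continuous (fun x => ‖piWv μ V (t, x) - piU μ (fun _ => 1) (piK n) (t, x) • A‖) :=
    (hcG.snd.sub (hcG.fst.smul continuous_const)).norm
  have hI2 : Integrable (fun x => ‖piWv μ V (t, x) - piU μ (fun _ => 1) (piK n) (t, x) • A‖) :=
    hI.mono' hc.aestronglyMeasurable (Eventually.of_forall fun x => by rw [norm_norm]; exact hpt x)
  refine ⟨hI2, (integral_mono hI2 hI hpt).trans ?_⟩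
  rw [integral_finsetSum _ fun i _ => integrable_finsetSum _ fun j _ => (piU_integrable μ _ (hVA i j) t ht).abs]
  refine Finset.sum_le_sum fun i _ => ?_
  rw [integral_finsetSum _ fun j _ => (piU_integrable μ _ (hVA i j) t ht).abs]
  exact Finset.sum_le_sum fun j _ => piU_abs_integral μ _ (hVA i j) t ht

end

section
variable {n : ℕ}
local notation "𝔼" => EuclideanSpace ℝ (Fin n)
local notation "𝕎" => EuclideanSpace ℝ (Fin n × Fin n)

lemma pi_gauge_mono (κ : ℝ) (hκ : 0 < κ) (s u : ℝ) (hs : 0 ≤ s) (hu : s ≤ u) :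
    0 ≤ 1 - Real.exp (-κ * Real.log (1 + s)) ∧
    1 - Real.exp (-κ * Real.log (1 + s)) ≤ 1 - Real.exp (-κ * Real.log (1 + u)) := by
  have h1 : 0 ≤ Real.log (1 + s) := Real.log_nonneg (by linarith)
  have h2 : Real.log (1 + s) ≤ Real.log (1 + u) := Real.log_le_log (by linarith) (by linarith)
  constructor
  · have : Real.exp (-κ * Real.log (1 + s)) ≤ 1 := Real.exp_le_one_iff.2 (by nlinarith)
    linarith
  · have : Real.exp (-κ * Real.log (1 + u)) ≤ Real.exp (-κ * Real.log (1 + s)) := Real.exp_le_exp.2 (by nlinarith)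
    linarith

lemma piB_lower (η : 𝕎 → ℝ) (hη1 : ∀ x, 0 ≤ η x ∧ η x ≤ 1) (hηI : ∀ x, ‖x - piId n‖ ≤ 1 / 4 → η x = 1)
    (κ : ℝ) (hκ : 0 < κ) (N : ℝ) (hN : 0 ≤ N) (u : ℝ) (hu : 0 < u) (w : 𝕎) :
    (1 - Real.exp (-κ * Real.log (1 + N))) * (u - N - 4 * ‖w - u • piId n‖) ≤ piB κ u * η (u⁻¹ • w) := by
  have hL : 0 ≤ piB κ u * η (u⁻¹ • w) := mul_nonneg (piB_bounds κ u hu hκ).1 (hη1 _).1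
  have hb := (pi_gauge_mono κ hκ N N hN le_rfl).1
  have hw0 := norm_nonneg (w - u • piId n)
  by_cases h : u - N - 4 * ‖w - u • piId n‖ ≤ 0
  · exact (mul_nonpos_of_nonneg_of_nonpos hb h).trans hL
  push Not at h
  have h1 : η (u⁻¹ • w) = 1 := by
    apply hηI
    have e : u⁻¹ • w - piId n = u⁻¹ • (w - u • piId n) := by
      rw [smul_sub, smul_smul, inv_mul_cancel₀ hu.ne', one_smul]
    rw [e, norm_smul, Real.norm_eq_abs, abs_of_pos (inv_pos.2 hu), inv_mul_le_iff₀ hu]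
    linarith
  have hb2 := (pi_gauge_mono κ hκ N u hN (by linarith)).2
  rw [h1, mul_one]
  unfold piB
  nlinarith

lemma pi_tailU (μ : Measure 𝔼) [IsFiniteMeasure μ] (R : ℝ) (hR : ∀ᵐ y ∂μ, ‖y‖ ≤ R)
    (K U : Set 𝔼) (hK : MeasurableSet K) (ρ : ℝ) (hρ : 0 < ρ) (hKU : ∀ y ∈ K, ∀ x, x ∉ U → ρ ≤ ‖x - y‖) (δ : ℝ) (hδ : 0 < δ) (x : 𝔼) :
    piU (μ.restrict K) (fun _ => 1) (piK n) (δ, x)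
      - 8 * δ * Real.exp (n / 2 * Real.log 2) / ρ ^ 2 * piU (μ.restrict K) (fun _ => 1) (piK n) (2 * δ, x)
    ≤ U.indicator (fun x => piU μ (fun _ => 1) (piK n) (δ, x)) x := by
  have hRK : ∀ᵐ y ∂(μ.restrict K), ‖y‖ ≤ R := ae_restrict_of_ae hR
  have hi := fun (t : ℝ) (ht : 0 < t) => pi_conv_integrable μ R hR (fun _ => 1) (integrable_const 1) (piK n) (piK_contDiffOn n 1).continuousOn (t, x) ht
  have hiK := fun (t : ℝ) (ht : 0 < t) => pi_conv_integrable (μ.restrict K) R hRK (fun _ => 1) (integrable_const 1) (piK n) (piK_contDiffOn n 1).continuousOn (t, x) ht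
  have h0 : 0 ≤ piU (μ.restrict K) (fun _ => 1) (piK n) (2 * δ, x) :=
    integral_nonneg fun y => by have := (piK_pos n ((2 * δ, x) - (0, y))).le; simpa using this
  by_cases hx : x ∈ U
  · rw [Set.indicator_of_mem hx]
    have : piU (μ.restrict K) (fun _ => 1) (piK n) (δ, x) ≤ piU μ (fun _ => 1) (piK n) (δ, x) :=
      setIntegral_le_integral (hi δ hδ) (Eventually.of_forall fun y => by have := (piK_pos n ((δ, x) - (0, y))).le; simpa using this)
    have h1 : 0 ≤ 8 * δ * Real.exp (n / 2 * Real.log 2) / ρ ^ 2 * piU (μ.restrict K) (fun _ => 1) (piK n) (2 * δ, x) := by positivity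
    linarith
  · rw [Set.indicator_of_notMem hx, sub_nonpos]
    unfold piU
    rw [← integral_const_mul]
    refine setIntegral_mono_on (hiK δ hδ) ((hiK (2 * δ) (by positivity)).const_mul _) hK fun y hy => ?_
    have h1 := piK_tail (n := n) δ hδ (x - y)
    have h2 := hKU y hy x hx
    have h3 : ρ ^ 2 ≤ ‖x - y‖ ^ 2 := by gcongr
    have h4 := piK_pos n (δ, x - y)
    simp only [one_smul, Prod.mk_sub_mk, sub_zero]
    rw [div_mul_eq_mul_div, le_div_iff₀ (by positivity)]
    nlinarith

/-- The main quantity. -/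
noncomputable def piA (μ : Measure 𝔼) (V : Fin n → 𝔼 → Fin n → ℝ) (η : 𝕎 → ℝ) (κ : ℝ) (z : ℝ × 𝔼) : ℝ :=
  piB κ (piU μ (fun _ => 1) (piK n) z) * η ((piU μ (fun _ => 1) (piK n) z)⁻¹ • piWv μ V z)

/-- The area integrand. -/
noncomputable def piJ (μ : Measure 𝔼) (V : Fin n → 𝔼 → Fin n → ℝ) (z : ℝ × 𝔼) : ℝ :=
  Real.sqrt ((piU μ (fun _ => 1) (piK n) z) ^ 2 + ‖piWv μ V z‖ ^ 2)

lemma pi_w_int (μ : Measure 𝔼) [IsFiniteMeasure μ] (R : ℝ) (hR : ∀ᵐ y ∂μ, ‖y‖ ≤ R)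
    (V : Fin n → 𝔼 → Fin n → ℝ) (hV : ∀ i j, Integrable (fun x => V i x j) μ) (t : ℝ) (ht : 0 < t) :
    Integrable (fun x => ‖piWv μ V (t, x)‖) ∧ ∫ x, ‖piWv μ V (t, x)‖ ≤ ∑ i, ∑ j, ∫ y, |V i y j| ∂μ := by
  have := pi_dev μ R hR V hV 0 t ht
  simpa using this

lemma piJ_int (μ : Measure 𝔼) [IsFiniteMeasure μ] (hμ : μ ≠ 0) (R : ℝ) (hR : ∀ᵐ y ∂μ, ‖y‖ ≤ R)
    (V : Fin n → 𝔼 → Fin n → ℝ) (hV : ∀ i j, Integrable (fun x => V i x j) μ) (t : ℝ) (ht : 0 < t) :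
    Integrable (fun x => piJ μ V (t, x)) ∧ ∫ x, piJ μ V (t, x) ≤ μ.real Set.univ + ∑ i, ∑ j, ∫ y, |V i y j| ∂μ := by
  have hcG : Continuous (fun x : 𝔼 => piG μ V (t, x)) :=
    (piG_contDiffOn μ R hR V hV).continuousOn.comp_continuous (by fun_prop) (fun _ => ht)
  have hc : Continuous (fun x => piJ μ V (t, x)) :=
    ((hcG.fst.pow 2).add (hcG.snd.norm.pow 2)).sqrt
  obtain ⟨hw, hw2⟩ := pi_w_int μ R hR V hV t ht
  have hu := piU_integrable μ _ (integrable_const (1 : ℝ)) t ht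
  have hpt : ∀ x, piJ μ V (t, x) ≤ piU μ (fun _ => 1) (piK n) (t, x) + ‖piWv μ V (t, x)‖ := fun x => by
    have h1 := piU_pos μ hμ R hR (t, x) ht
    have h2 := norm_nonneg (piWv μ V (t, x))
    unfold piJ
    rw [Real.sqrt_le_left (by positivity)]
    nlinarith [mul_nonneg h1.le h2]
  have hI : Integrable (fun x => piJ μ V (t, x)) := (hu.add hw).mono' hc.aestronglyMeasurable
    (Eventually.of_forall fun x => by rw [Real.norm_eq_abs, abs_of_nonneg (show 0 ≤ piJ μ V (t, x) from Real.sqrt_nonneg _)]; exact hpt x)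
  refine ⟨hI, ?_⟩
  have := integral_mono hI (hu.add hw) hpt
  simp only [Pi.add_apply] at this
  rw [integral_add hu hw, piU_mass μ t ht] at this
  linarith

lemma piA_int (μ : Measure 𝔼) [IsFiniteMeasure μ] (hμ : μ ≠ 0) (R : ℝ) (hR : ∀ᵐ y ∂μ, ‖y‖ ≤ R)
    (V : Fin n → 𝔼 → Fin n → ℝ) (hV : ∀ i j, Integrable (fun x => V i x j) μ)
    (η : 𝕎 → ℝ) (hη : ContDiff ℝ 2 η) (hη1 : ∀ x, 0 ≤ η x ∧ η x ≤ 1) (κ : ℝ) (hκ : 0 < κ) (t : ℝ) (ht : 0 < t) :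
    Integrable (fun x => piA μ V η κ (t, x)) ∧ (∀ x, 0 ≤ piA μ V η κ (t, x)) ∧
    ∫ x, piA μ V η κ (t, x) ≤ μ.real Set.univ ∧
    ∫ x, piA μ V η κ (t, x) ≤
      (1 - Real.exp (-κ * Real.log (1 + Real.exp (-(n / 2) * Real.log (4 * Real.pi * t)) * μ.real Set.univ))) * μ.real Set.univ := by
  have hcG : Continuous (fun x : 𝔼 => piG μ V (t, x)) :=
    (piG_contDiffOn μ R hR V hV).continuousOn.comp_continuous (by fun_prop) (fun _ => ht)
  have hup := fun x => piU_pos μ hμ R hR (t, x) ht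
  have hcu : Continuous (fun x => piU μ (fun _ => 1) (piK n) (t, x)) := hcG.fst
  have hc : Continuous (fun x => piA μ V η κ (t, x)) := by
    unfold piA piB
    refine (hcu.mul (continuous_const.sub (Real.continuous_exp.comp (continuous_const.mul ((continuous_const.add hcu).log fun x => ?_))))).mul
      (hη.continuous.comp ((hcu.inv₀ fun x => (hup x).ne').smul hcG.snd))
    have := hup x
    exact (add_pos one_pos this).ne'
  have hu := piU_integrable μ _ (integrable_const (1 : ℝ)) t ht
  have h0 : ∀ x, 0 ≤ piA μ V η κ (t, x) := fun x => mul_nonneg (piB_bounds κ _ (hup x) hκ).1 (hη1 _).1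
  have h1 : ∀ x, piA μ V η κ (t, x) ≤ piB κ (piU μ (fun _ => 1) (piK n) (t, x)) := fun x =>
    mul_le_of_le_one_right (piB_bounds κ _ (hup x) hκ).1 (hη1 _).2
  have h2 : ∀ x, piA μ V η κ (t, x) ≤ piU μ (fun _ => 1) (piK n) (t, x) := fun x =>
    (h1 x).trans (piB_bounds κ _ (hup x) hκ).2.1
  have hI : Integrable (fun x => piA μ V η κ (t, x)) := hu.mono' hc.aestronglyMeasurable
    (Eventually.of_forall fun x => by rw [Real.norm_eq_abs, abs_of_nonneg (h0 x)]; exact h2 x)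
  refine ⟨hI, h0, ?_, ?_⟩
  · rw [← piU_mass μ t ht]
    exact integral_mono hI hu h2
  · conv_rhs => rw [mul_comm, ← piU_mass μ t ht, mul_comm, ← integral_const_mul]
    refine integral_mono hI (hu.const_mul _) fun x => (h1 x).trans ?_
    simp only [piB]
    rw [mul_comm]
    refine mul_le_mul_of_nonneg_right ?_ (hup x).le
    rw [piU_mass μ t ht]
    exact (pi_gauge_mono κ hκ _ _ (hup x).le (piU_le μ t ht x)).2

end

section
variable {n : ℕ}
local notation "𝔼" => EuclideanSpace ℝ (Fin n)
local notation "𝕎" => EuclideanSpace ℝ (Fin n × Fin n)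

lemma piA_lower (μ : Measure 𝔼) [IsFiniteMeasure μ] (hμ : μ ≠ 0) (R : ℝ) (hR : ∀ᵐ y ∂μ, ‖y‖ ≤ R)
    (V : Fin n → 𝔼 → Fin n → ℝ) (hV : ∀ i j, Integrable (fun x => V i x j) μ)
    (η : 𝕎 → ℝ) (hη : ContDiff ℝ 2 η) (hη1 : ∀ x, 0 ≤ η x ∧ η x ≤ 1) (hηI : ∀ x, ‖x - piId n‖ ≤ 1 / 4 → η x = 1)
    (κ : ℝ) (hκ : 0 < κ) (N : ℝ) (hN : 0 ≤ N)
    (K U : Set 𝔼) (hK : MeasurableSet K) (hU : MeasurableSet U) (hUf : volume U ≠ ∞) (ρ : ℝ) (hρ : 0 < ρ)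
    (hKU : ∀ y ∈ K, ∀ x, x ∉ U → ρ ≤ ‖x - y‖) (δ : ℝ) (hδ : 0 < δ) :
    (1 - Real.exp (-κ * Real.log (1 + N))) *
      (μ.real K - 8 * δ * Real.exp (n / 2 * Real.log 2) / ρ ^ 2 * μ.real K - N * volume.real U
        - 4 * ∑ i, ∑ j, ∫ y, |V i y j - piId n (i, j)| ∂μ) ≤ ∫ x, piA μ V η κ (δ, x) := by
  obtain ⟨hI, h0, -, -⟩ := piA_int μ hμ R hR V hV η hη hη1 κ hκ δ hδ
  obtain ⟨hd1, hd2⟩ := pi_dev μ R hR V hV (piId n) δ hδ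
  have hb := (pi_gauge_mono κ hκ N N hN le_rfl).1
  set b := 1 - Real.exp (-κ * Real.log (1 + N)) with hbd
  set θ := 8 * δ * Real.exp (n / 2 * Real.log 2) / ρ ^ 2 with hθ
  have hu1 := piU_integrable (μ.restrict K) _ (integrable_const (1 : ℝ)) δ hδ
  have hu2 := (piU_integrable (μ.restrict K) _ (integrable_const (1 : ℝ)) (2 * δ) (by positivity)).const_mul θ
  have hind : Integrable (U.indicator (fun _ : 𝔼 => N)) := (integrable_indicator_iff hU).2 (integrableOn_const hUf)
  have hd1' := hd1.const_mul 4
  have hpt : ∀ x, b * (piU (μ.restrict K) (fun _ => 1) (piK n) (δ, x) - θ * piU (μ.restrict K) (fun _ => 1) (piK n) (2 * δ, x)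
      - U.indicator (fun _ : 𝔼 => N) x - 4 * ‖piWv μ V (δ, x) - piU μ (fun _ => 1) (piK n) (δ, x) • piId n‖) ≤ piA μ V η κ (δ, x) := by
    intro x
    have h1 := pi_tailU μ R hR K U hK ρ hρ hKU δ hδ x
    have h2 := piB_lower η hη1 hηI κ hκ N hN _ (piU_pos μ hμ R hR (δ, x) hδ) (piWv μ V (δ, x))
    by_cases hx : x ∈ U
    · rw [Set.indicator_of_mem hx] at h1 ⊢
      refine le_trans (mul_le_mul_of_nonneg_left ?_ hb) h2
      linarith
    · rw [Set.indicator_of_notMem hx] at h1 ⊢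
      refine le_trans (mul_nonpos_of_nonneg_of_nonpos hb ?_) (h0 x)
      have := norm_nonneg (piWv μ V (δ, x) - piU μ (fun _ => 1) (piK n) (δ, x) • piId n)
      linarith
  have hI2 := ((((hu1.sub hu2).sub hind).sub hd1').const_mul b)
  have h := integral_mono hI2 hI hpt
  rw [integral_const_mul] at h
  refine le_trans (mul_le_mul_of_nonneg_left ?_ hb) h
  have e1 := integral_sub ((hu1.sub hu2).sub hind) hd1'
  have e2 := integral_sub (hu1.sub hu2) hind
  have e3 := integral_sub hu1 hu2
  simp only [Pi.sub_apply] at e1 e2 e3 ⊢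
  rw [e1, e2, e3, integral_const_mul, integral_const_mul, piU_mass _ δ hδ, piU_mass _ (2 * δ) (by positivity), integral_indicator_const _ hU]
  simp only [measureReal_restrict_apply MeasurableSet.univ, Set.univ_inter, smul_eq_mul]
  linarith [mul_comm N (volume.real U)]

lemma piA_mono (μ : Measure 𝔼) [IsFiniteMeasure μ] (hμ : μ ≠ 0) (R : ℝ) (hR : ∀ᵐ y ∂μ, ‖y‖ ≤ R)
    (V : Fin n → 𝔼 → Fin n → ℝ) (hV : ∀ i j, Integrable (fun x => V i x j) μ) (a : Fin n → 𝔼 → ℝ) (K : ℝ)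
    (haK : ∀ i x, |a i x| ≤ K)
    (hdiv : ∀ i, ∀ φ : 𝔼 → ℝ, ContDiff ℝ 1 φ → (∃ L : ℝ≥0, LipschitzWith L φ) →
        ∫ x, ∑ j, V i x j * fderiv ℝ φ x (EuclideanSpace.single j 1) ∂μ = ∫ x, a i x * φ x ∂μ)
    (η : 𝕎 → ℝ) (hη : ContDiff ℝ 2 η) (hη1 : ∀ x, 0 ≤ η x ∧ η x ≤ 1)
    (hη0 : ∀ x, 1 / 2 ≤ ‖x - piId n‖ → η x = 0) (M1 M2 : ℝ) (hM1 : 0 ≤ M1) (hM2 : 0 ≤ M2)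
    (hD1 : ∀ x e, |fderiv ℝ η x e| ≤ M1 * ‖e‖) (hD2 : ∀ x e, |fderiv ℝ (fderiv ℝ η) x e e| ≤ M2 * ‖e‖ ^ 2) :
    ∃ c c' : ℝ, 0 ≤ c ∧ 0 ≤ c' ∧ ∀ κ : ℝ, 0 < κ → κ ≤ 1 → ∀ δ T : ℝ, 0 < δ → δ ≤ T → T ≤ 1 →
      ∫ x, piA μ V η κ (δ, x) ≤ (∫ x, piA μ V η κ (T, x)) + c * ((∫ x, piJ μ V (δ, x)) - ∫ x, piJ μ V (T, x))
        + c' * κ := by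
  refine ⟨(1 + ‖piId n‖ + 1 / 2) ^ 3 * (24 * n + M1 ^ 2 + M2), 24 * n * K ^ 2 * μ.real Set.univ, by positivity, by positivity, ?_⟩
  intro κ hκ hκ1 δ T hδ hδT hT1
  obtain ⟨hQ, hsub⟩ := piQ_sub μ hμ R hR V hV a K haK hdiv η hη hη1 hη0 M1 M2 hM1 hM2 hD1 hD2 κ hκ hκ1
  have hc : 0 ≤ (1 + ‖piId n‖ + 1 / 2) ^ 3 * (24 * n + M1 ^ 2 + M2) := by positivity
  have hc' : 0 ≤ 24 * n * K ^ 2 * κ := by positivity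
  set c := (1 + ‖piId n‖ + 1 / 2) ^ 3 * (24 * n + M1 ^ 2 + M2) with hcd
  set c' := 24 * n * K ^ 2 * κ with hcd'
  have hQe : ∀ t x, piQ μ V η κ c c' (t, x) = piA μ V η κ (t, x) - c * piJ μ V (t, x) + c' * (t * piU μ (fun _ => 1) (piK n) (t, x)) :=
    fun t x => rfl
  have hA := fun t ht => piA_int μ hμ R hR V hV η hη hη1 κ hκ t ht
  have hJ := fun t ht => piJ_int μ hμ R hR V hV t ht
  have hu := fun t ht => piU_integrable μ _ (integrable_const (1 : ℝ)) t ht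
  have hItg : ∀ t, 0 < t → Integrable (fun x => piQ μ V η κ c c' (t, x)) ∧
      ∫ x, piQ μ V η κ c c' (t, x) = (∫ x, piA μ V η κ (t, x)) - c * (∫ x, piJ μ V (t, x)) + c' * (t * μ.real Set.univ) := by
    intro t ht
    have i1 := (hA t ht).1
    have i2 := (hJ t ht).1.const_mul c
    have i3 := ((hu t ht).const_mul t).const_mul c'
    simp only [hQe]
    refine ⟨(i1.sub i2).add i3, ?_⟩
    have e1 := integral_add (i1.sub i2) i3
    have e2 := integral_sub i1 i2
    simp only [Pi.sub_apply] at e1 e2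
    rw [e1, e2, integral_const_mul, integral_const_mul, integral_const_mul, piU_mass μ t ht]
  have hB : ∀ t, 0 < t → t ≤ T → ∫ x, |piQ μ V η κ c c' (t, x)| ≤ μ.real Set.univ
      + c * (μ.real Set.univ + ∑ i, ∑ j, ∫ y, |V i y j| ∂μ) + c' * (T * μ.real Set.univ) := by
    intro t ht htT
    have i1 := (hA t ht).1
    have i2 := (hJ t ht).1.const_mul c
    have i3 := ((hu t ht).const_mul t).const_mul c'
    have e1 := integral_add (i1.add i2) i3
    have e2 := integral_add i1 i2
    simp only [Pi.add_apply] at e1 e2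
    have h : ∫ x, |piQ μ V η κ c c' (t, x)| ≤ ∫ x, (piA μ V η κ (t, x) + c * piJ μ V (t, x) + c' * (t * piU μ (fun _ => 1) (piK n) (t, x))) := by
      refine integral_mono (hItg t ht).1.abs ((i1.add i2).add i3) fun x => ?_
      have h1 := (hA t ht).2.1 x
      have h2 : 0 ≤ c * piJ μ V (t, x) := mul_nonneg hc (Real.sqrt_nonneg _)
      have h3 : 0 ≤ c' * (t * piU μ (fun _ => 1) (piK n) (t, x)) := mul_nonneg hc' (mul_nonneg ht.le (piU_pos μ hμ R hR (t, x) ht).le)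
      simp only [hQe, Pi.add_apply]
      rw [abs_le]
      constructor <;> linarith
    rw [e1, e2, integral_const_mul, integral_const_mul, integral_const_mul, piU_mass μ t ht] at h
    refine h.trans ?_
    gcongr
    · exact (hA t ht).2.2.1
    · exact (hJ t ht).2
  have hm := pi_mono _ hQ hsub δ T _ hδ hδT fun t h1 h2 => ⟨(hItg t (hδ.trans_le h1)).1, hB t (hδ.trans_le h1) h2⟩
  rw [(hItg δ hδ).2, (hItg T (hδ.trans_le hδT)).2] at hm
  have h5 : c' * (T * μ.real Set.univ) ≤ c' * μ.real Set.univ := by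
    refine mul_le_mul_of_nonneg_left ?_ hc'
    exact mul_le_of_le_one_left measureReal_nonneg hT1
  have h6 : 0 ≤ c' * (δ * μ.real Set.univ) := by positivity
  have h7 : c' * μ.real Set.univ = 24 * n * K ^ 2 * μ.real Set.univ * κ := by rw [hcd']; ring
  linarith

end

section
variable {n : ℕ}
local notation "𝔼" => EuclideanSpace ℝ (Fin n)
local notation "𝕎" => EuclideanSpace ℝ (Fin n × Fin n)

lemma pi_find_delta (μ : Measure 𝔼) [IsFiniteMeasure μ] (c0 : ℝ) (hc0 : 0 < c0) (K : Set 𝔼) (hK : IsCompact K) (hK0 : volume K = 0)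
    (T : ℝ) (hT : 0 < T) (N : ℝ) (hN : 0 ≤ N) :
    ∃ (U : Set 𝔼) (ρ δ : ℝ), MeasurableSet U ∧ volume U ≠ ∞ ∧ 0 < ρ ∧ (∀ y ∈ K, ∀ x, x ∉ U → ρ ≤ ‖x - y‖) ∧ 0 < δ ∧ δ ≤ T ∧
      N * volume.real U ≤ c0 / 16 ∧ 8 * δ * Real.exp (n / 2 * Real.log 2) / ρ ^ 2 * μ.real K ≤ c0 / 16 := by
  obtain ⟨U, hKU, hUo, hUv⟩ := K.exists_isOpen_lt_of_lt (μ := volume) (ENNReal.ofReal (c0 / (16 * (N + 1)))) (by rw [hK0]; simp; positivity)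
  obtain ⟨ρ, hρ, hth⟩ := hK.exists_thickening_subset_open hUo hKU
  have hE := Real.exp_pos (n / 2 * Real.log 2)
  set E := Real.exp (n / 2 * Real.log 2)
  have hm : 0 ≤ μ.real K := measureReal_nonneg
  set d := c0 * ρ ^ 2 / (16 * 8 * E * (μ.real K + 1)) with hd
  have hd0 : 0 < d := by positivity
  refine ⟨U, ρ, min T d, hUo.measurableSet, (hUv.trans ENNReal.ofReal_lt_top).ne, hρ, ?_, lt_min hT hd0, min_le_left _ _, ?_, ?_⟩
  · intro y hy x hx
    by_contra h
    push Not at h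
    exact hx (hth (Metric.mem_thickening_iff.2 ⟨y, hy, by rw [dist_eq_norm]; exact h⟩))
  · have h1 : volume.real U ≤ c0 / (16 * (N + 1)) := ENNReal.toReal_le_of_le_ofReal (by positivity) hUv.le
    calc N * volume.real U ≤ (N + 1) * (c0 / (16 * (N + 1))) := by gcongr; linarith
      _ = c0 / 16 := by field_simp
  · calc 8 * min T d * E / ρ ^ 2 * μ.real K ≤ 8 * d * E / ρ ^ 2 * (μ.real K + 1) := by
          gcongr
          · exact min_le_right _ _
          · linarith
      _ = c0 / 16 := by rw [hd]; field_simp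

lemma pi_partB (μ : Measure 𝔼) [IsFiniteMeasure μ] (R : ℝ) (hR : ∀ᵐ y ∂μ, ‖y‖ ≤ R)
    (V : Fin n → 𝔼 → Fin n → ℝ) (hV : ∀ i j, Integrable (fun x => V i x j) μ) (a : Fin n → 𝔼 → ℝ) (K : ℝ)
    (haK : ∀ i x, |a i x| ≤ K)
    (hdiv : ∀ i, ∀ φ : 𝔼 → ℝ, ContDiff ℝ 1 φ → (∃ L : ℝ≥0, LipschitzWith L φ) →
        ∫ x, ∑ j, V i x j * fderiv ℝ φ x (EuclideanSpace.single j 1) ∂μ = ∫ x, a i x * φ x ∂μ)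
    (S : Set 𝔼) (hS : MeasurableSet S) (hS0 : volume S = 0) (c0 : ℝ) (hc0 : 0 < c0) (hSc : c0 ≤ μ.real S)
    (hdev : ∑ i, ∑ j, ∫ y, |V i y j - piId n (i, j)| ∂μ ≤ c0 / 16) : False := by
  have hμ : μ ≠ 0 := by
    rintro rfl
    simp at hSc
    linarith
  obtain ⟨η, hη, hηs, hη1, hηI, hη0⟩ := pi_bump (piId n) (1 / 4) (1 / 2) (by norm_num) (by norm_num)
  obtain ⟨M1, M2, hM1, hM2, hD1, hD2⟩ := pi_bound2 η hη hηs
  obtain ⟨c, c', hc, hc', hmono⟩ := piA_mono μ hμ R hR V hV a K haK hdiv η hη hη1 hη0 M1 M2 hM1 hM2 hD1 hD2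
  -- sup of the area
  set J : ℝ → ℝ := fun t => ∫ x, piJ μ V (t, x) with hJ
  set s := sSup (J '' Set.Ioc 0 1) with hs
  have hbdd : BddAbove (J '' Set.Ioc 0 1) := ⟨_, by
    rintro _ ⟨t, ht, rfl⟩
    exact (piJ_int μ hμ R hR V hV t ht.1).2⟩
  have hne : (J '' Set.Ioc 0 1).Nonempty := ⟨_, 1, ⟨one_pos, le_rfl⟩, rfl⟩
  have hε : 0 < c0 / (8 * (c + 1)) := by positivity
  obtain ⟨_, ⟨T, hT, rfl⟩, hTs⟩ := exists_lt_of_lt_csSup hne (show s - c0 / (8 * (c + 1)) < s by linarith)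
  -- compact set
  obtain ⟨Kc, hKS, hKc, hKm⟩ := hS.exists_lt_isCompact (μ := μ) (r := ENNReal.ofReal (3 / 4 * c0)) (by
    rw [ENNReal.ofReal_lt_iff_lt_toReal (by positivity) (measure_ne_top _ _)]
    change _ < μ.real S
    linarith)
  have hKm' : 3 / 4 * c0 ≤ μ.real Kc := by
    rw [ENNReal.ofReal_lt_iff_lt_toReal (by positivity) (measure_ne_top _ _)] at hKm
    exact hKm.le
  have hK0 : volume Kc = 0 := measure_mono_null hKS hS0
  set MT := Real.exp (-(n / 2) * Real.log (4 * Real.pi * T)) * μ.real Set.univ with hMT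
  have hMT0 : 0 ≤ MT := by positivity
  have key : ∀ κ : ℝ, 0 < κ → κ ≤ 1 → ∀ N : ℝ, 0 ≤ N → (1 - Real.exp (-κ * Real.log (1 + N))) * (c0 / 4) ≤
      (1 - Real.exp (-κ * Real.log (1 + MT))) * μ.real Set.univ + c0 / 8 + c' * κ := by
    intro κ hκ hκ1 N hN
    obtain ⟨U, ρ, δ, hU, hUf, hρ, hKU, hδ, hδT, h1, h2⟩ := pi_find_delta μ c0 hc0 Kc hKc hK0 T hT.1 N hN
    have h3 := piA_lower μ hμ R hR V hV η hη hη1 hηI κ hκ N hN Kc U hKc.measurableSet hU hUf ρ hρ hKU δ hδ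
    have h4 := hmono κ hκ hκ1 δ T hδ hδT hT.2
    have h5 := (piA_int μ hμ R hR V hV η hη hη1 κ hκ T hT.1).2.2.2
    have hb := (pi_gauge_mono κ hκ N N hN le_rfl).1
    have h6 : J δ ≤ s := le_csSup hbdd ⟨δ, ⟨hδ, hδT.trans hT.2⟩, rfl⟩
    have h7 : c * (J δ - J T) ≤ c0 / 8 := by
      calc c * (J δ - J T) ≤ (c + 1) * (c0 / (8 * (c + 1))) := by
            refine mul_le_mul_of_nonneg (by linarith) (by linarith) hc hε.le
        _ = c0 / 8 := by field_simp
    have h8 := le_trans (mul_le_mul_of_nonneg_left (show c0 / 4 ≤ _ by linarith) hb) h3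
    simp only [hJ] at h7
    linarith
  have key2 : ∀ κ : ℝ, 0 < κ → κ ≤ 1 → c0 / 4 ≤
      (1 - Real.exp (-κ * Real.log (1 + MT))) * μ.real Set.univ + c0 / 8 + c' * κ := by
    intro κ hκ hκ1
    have hl : Tendsto (fun N : ℝ => (1 - Real.exp (-κ * Real.log (1 + N))) * (c0 / 4)) atTop (𝓝 ((1 - 0) * (c0 / 4))) := by
      refine (tendsto_const_nhds.sub (Real.tendsto_exp_atBot.comp ?_)).mul_const _
      exact (Real.tendsto_log_atTop.comp (tendsto_atTop_add_const_left _ 1 tendsto_id)).const_mul_atTop_of_neg (by linarith)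
    have := le_of_tendsto hl ((eventually_ge_atTop 0).mono fun N hN => key κ hκ hκ1 N hN)
    linarith
  have hcont : Continuous (fun κ : ℝ => (1 - Real.exp (-κ * Real.log (1 + MT))) * μ.real Set.univ + c0 / 8 + c' * κ) := by fun_prop
  have hl := (hcont.tendsto 0).mono_left (nhdsWithin_le_nhds (s := Set.Ioi 0))
  have := ge_of_tendsto hl (by
    filter_upwards [Ioc_mem_nhdsGT (one_pos : (0 : ℝ) < 1)] with κ hκ
    exact key2 κ hκ.1 hκ.2)
  simp at this
  linarith

end

/-- If a Radon measure `m` on `ℝⁿ` with full support is doubling and satisfies a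
`(1,p)`-Poincaré inequality (for Lipschitz functions and their local Lipschitz constants),
then `m` is absolutely continuous with respect to the Lebesgue measure. -/
theorem stmt18 (n : ℕ) (p : ℝ) (hp : 1 < p)
    (m : Measure (EuclideanSpace ℝ (Fin n)))
    [IsFiniteMeasureOnCompacts m] [m.Regular] [m.IsOpenPosMeasure]
    (CD : ℝ) (hCD : 0 < CD)
    (hdoubling : ∀ (x : EuclideanSpace ℝ (Fin n)) (r : ℝ), 0 < r →
      m (Metric.ball x (2 * r)) ≤ ENNReal.ofReal CD * m (Metric.ball x r))
    (C Λ : ℝ) (hC : 0 < C) (hΛ : 1 ≤ Λ)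
    (hpoincare : ∀ f : EuclideanSpace ℝ (Fin n) → ℝ, (∃ K : ℝ≥0, LipschitzWith K f) →
      ∀ (x : EuclideanSpace ℝ (Fin n)) (r : ℝ), 0 < r →
        ⨍ y in Metric.ball x r, |f y - ⨍ z in Metric.ball x r, f z ∂m| ∂m ≤
          C * r * (⨍ y in Metric.ball x (Λ * r), lip f y ^ p ∂m) ^ (1 / p)) :
    m ≪ (volume : Measure (EuclideanSpace ℝ (Fin n))) := by
  rcases Nat.eq_zero_or_pos n with rfl | hn
  · intro S hS
    rcases S.eq_empty_or_nonempty with rfl | ⟨x, hx⟩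
    · simp
    · exfalso
      have hu : S = Set.univ := Set.eq_univ_of_forall fun y => (Subsingleton.elim x y) ▸ hx
      rw [hu] at hS
      exact (isOpen_univ.measure_pos volume ⟨x, trivial⟩).ne' hS
  have : Nonempty (Fin n) := ⟨⟨0, hn⟩⟩
  have hfin : ∀ (x : EuclideanSpace ℝ (Fin n)) (r : ℝ), m (Metric.ball x r) < ∞ := fun x r => measure_ball_lt_top
  have hd := pi_real_doubling m hfin CD hCD hdoubling
  refine Measure.AbsolutelyContinuous.mk fun S hS hS0 => ?_
  by_contra hmS
  obtain ⟨R, hRS⟩ : ∃ R : ℕ, m (S ∩ Metric.ball 0 R) ≠ 0 := by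
    by_contra h
    push Not at h
    apply hmS
    have e : S = ⋃ R : ℕ, S ∩ Metric.ball 0 R := by
      rw [← Set.inter_iUnion, Metric.iUnion_ball_nat, Set.inter_univ]
    rw [e]
    exact measure_iUnion_null h
  set μ := m.restrict (Metric.ball (0 : EuclideanSpace ℝ (Fin n)) R) with hμ
  have hμf : IsFiniteMeasure μ := ⟨by rw [hμ, Measure.restrict_apply_univ]; exact hfin _ _⟩
  have hc0 : 0 < μ.real S := by
    refine ENNReal.toReal_pos ?_ (measure_ne_top _ _)
    rw [hμ, Measure.restrict_apply hS]
    exact hRS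
  have hn' : (0 : ℝ) < n := by exact_mod_cast hn
  choose V a K hV ha haK hdiv hdev using fun i => pi_partA p hp m hfin CD hCD hd C Λ hC hΛ hpoincare R (μ.real S / (16 * n)) (by positivity) i
  refine pi_partB μ R ?_ V hV a (∑ i, |K i|) ?_ hdiv S hS hS0 (μ.real S) hc0 le_rfl ?_
  · rw [hμ]
    filter_upwards [ae_restrict_mem measurableSet_ball] with y hy
    exact (mem_ball_zero_iff.1 hy).le
  · intro i x
    exact ((haK i x).trans (le_abs_self _)).trans (Finset.single_le_sum (f := fun i => |K i|) (fun _ _ => abs_nonneg _) (Finset.mem_univ i))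
  · have h1 : ∀ i, ∑ j, ∫ y, |V i y j - piId n (i, j)| ∂μ ≤ μ.real S / (16 * n) := by
      intro i
      have hi : ∀ j ∈ (Finset.univ : Finset (Fin n)), Integrable (fun y => |V i y j - piId n (i, j)|) μ := fun j _ =>
        ((hV i j).sub (integrable_const (piId n (i, j)))).abs
      have e := integral_finsetSum _ hi
      rw [← e]
      exact hdev i
    calc _ ≤ ∑ i : Fin n, μ.real S / (16 * n) := Finset.sum_le_sum fun i _ => h1 i
      _ = μ.real S / 16 := by
        rw [Finset.sum_const, Finset.card_univ, Fintype.card_fin, nsmul_eq_mul]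
        field_simp
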